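/- arXiv:1111.1994 — 7 statements merged into one kernel-verified Lean document; each statement's English description precedes it below -/
import Mathlib

section
/- (Lemma 1.1(3), fibers are convex hulls of their frontiers) Let S and T be free splittings of F and let f : S → T be a collapse map. For every vertex v of T, the preimage f⁻¹(v) equals the convex hull of its frontier: a vertex w of S satisfies f(w) = v if and only if there exist vertices u₁, u₂ of S with f(u₁) = f(u₂) = v, each having at least one neighbor in S that is not mapped to v by f, such that w lies on the unique reduced path in S from u₁ to u₂. -/
/-! The two implications rest on different features of free splittings.

A fiber is convex because a path of `S` that leaves the fiber of `v` across an edge `e` never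
crosses `e` again. As no other edge of `S` has the same image as `e`, the image of the rest of the
path avoids `φ e`; since `φ e` separates the tree `T`, the path cannot come back to the fiber
(`eq_of_path`).

Conversely, minimality of `T` makes `φ` nonconstant, so the set `moved` of endpoints of uncollapsed
edges is nonempty. It is invariant, and so is its convex hull, which is connected; by minimality
of `S` the hull is all of `S` (`hull_moved`). Hence any `w` in the fiber of `v` lies on a path whose
two ends are in `moved`. Going from `w` towards either end, the last vertex before the path leaves
the fiber (or the end itself, if it never does) is a frontier vertex (`exists_exit`). -/

/-- A free splitting of a group `F`: a simplicial tree with at least two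
vertices, together with an action of `F` by graph automorphisms which is
minimal and has trivial edge stabilizers. -/
structure FreeSplitting (F : Type) [Group F] where
  V : Type
  graph : SimpleGraph V
  nontriv : Nontrivial V
  tree : graph.IsTree
  smul : F → V → V
  one_smul : ∀ v, smul 1 v = v
  mul_smul : ∀ γ δ v, smul (γ * δ) v = smul γ (smul δ v)
  adj_smul : ∀ (γ : F) ⦃x y : V⦄, graph.Adj x y → graph.Adj (smul γ x) (smul γ y)
  minimal : ∀ A : Set V, A.Nonempty → (∀ γ, smul γ '' A = A) →
      (graph.induce A).Connected → A = Set.univ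
  edge_stab : ∀ (γ : F) (x y : V), graph.Adj x y →
      (smul γ x = x ∧ smul γ y = y) ∨ (smul γ x = y ∧ smul γ y = x) → γ = 1

namespace FreeSplitting

variable {F : Type} [Group F]

/-- A map of free splittings: an `F`-equivariant simplicial map. -/
def IsFSMap (S T : FreeSplitting F) (φ : S.V → T.V) : Prop :=
  (∀ (γ : F) (x : S.V), φ (S.smul γ x) = T.smul γ (φ x)) ∧
  ∀ ⦃x y : S.V⦄, S.graph.Adj x y → φ x = φ y ∨ T.graph.Adj (φ x) (φ y)

/-- A collapse map: a map such that for each edge of `T` at most one edge of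
`S` is mapped onto it. -/
def IsCollapseMap (S T : FreeSplitting F) (φ : S.V → T.V) : Prop :=
  IsFSMap S T φ ∧
  ∀ ⦃x y x' y' : S.V⦄, S.graph.Adj x y → S.graph.Adj x' y' →
    T.graph.Adj (φ x) (φ y) → s(φ x, φ y) = s(φ x', φ y') → s(x, y) = s(x', y')

/-- The collapsed subgraph of a map: the set of edges of `S` whose endpoints
have equal image. -/
def collapsedEdges (S T : FreeSplitting F) (φ : S.V → T.V) : Set (Sym2 S.V) :=
  {e | e ∈ S.graph.edgeSet ∧ (Sym2.map φ e).IsDiag}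

/-- A foldable map: a map which is injective on each edge, with at least 2
gates at every vertex and at least 3 gates at every vertex of degree ≥ 3. -/
def IsFoldable (S T : FreeSplitting F) (φ : S.V → T.V) : Prop :=
  IsFSMap S T φ ∧
  (∀ ⦃x y : S.V⦄, S.graph.Adj x y → φ x ≠ φ y) ∧
  (∀ v : S.V, 2 ≤ (φ '' S.graph.neighborSet v).encard) ∧
  (∀ v : S.V, 3 ≤ (S.graph.neighborSet v).encard →
    3 ≤ (φ '' S.graph.neighborSet v).encard)

/-- A foldable sequence: a sequence of maps of free splittings such that each
composition `S i → S K` is a foldable map. -/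
def IsFoldableSeq (K : ℕ) (S : ℕ → FreeSplitting F)
    (f : ∀ k : ℕ, (S k).V → (S (k+1)).V) : Prop :=
  (∀ k, k < K → IsFSMap (S k) (S (k+1)) (f k)) ∧
  ∀ c : ∀ i : ℕ, (S i).V → (S K).V,
    (∀ x, c K x = x) →
    (∀ i, i < K → ∀ x, c i x = c (i+1) (f i x)) →
    ∀ i, i < K → IsFoldable (S i) (S K) (c i)

/-- A combing rectangle: a foldable top row `S`, a bottom row `T`, and collapse
maps `π k : S k → T k` commuting with the horizontal maps, such that the
collapsed subgraph of `π k` is the preimage under `f k` of the collapsed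
subgraph of `π (k+1)`. -/
def IsCombingRectangle (K : ℕ) (S : ℕ → FreeSplitting F)
    (f : ∀ k : ℕ, (S k).V → (S (k+1)).V)
    (T : ℕ → FreeSplitting F)
    (g : ∀ k : ℕ, (T k).V → (T (k+1)).V)
    (π : ∀ k : ℕ, (S k).V → (T k).V) : Prop :=
  IsFoldableSeq K S f ∧
  (∀ k, k < K → IsFSMap (T k) (T (k+1)) (g k)) ∧
  (∀ k, k ≤ K → IsCollapseMap (S k) (T k) (π k)) ∧
  (∀ k, k < K → ∀ x : (S k).V, g k (π k x) = π (k+1) (f k x)) ∧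
  (∀ k, k < K → collapsedEdges (S k) (T k) (π k) =
    {e ∈ (S k).graph.edgeSet |
      Sym2.map (f k) e ∈ collapsedEdges (S (k+1)) (T (k+1)) (π (k+1))})

end FreeSplitting

namespace FreeSplitting

variable {F : Type} [Group F]

/-- Fibers of a collapse map are convex: a path with both ends in a fiber stays in it. -/
theorem eq_of_path {S T : FreeSplitting F} {φ : S.V → T.V} (hφ : IsCollapseMap S T φ) {v : T.V}
    {a b : S.V} (p : S.graph.Walk a b) (hp : p.IsPath) (ha : φ a = v) (hb : φ b = v) :
    ∀ w ∈ p.support, φ w = v := by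
  induction p with
  | nil => simpa using ha
  | @cons a c b h p ih =>
    rw [SimpleGraph.Walk.cons_isPath_iff] at hp
    obtain ⟨hp, hap⟩ := hp
    have hc : φ c = v := by
      by_contra hc
      have hT : T.graph.Adj (φ a) (φ c) :=
        (hφ.1.2 h).resolve_left fun e => hc (e ▸ ha)
      have hbr := (SimpleGraph.isAcyclic_iff_forall_adj_isBridge.1 T.tree.isAcyclic) hT
      rw [SimpleGraph.isBridge_iff] at hbr
      -- The image of a walk missing `a` avoids the edge `s(φ a, φ c)`.
      have key : ∀ {x y : S.V} (q : S.graph.Walk x y), a ∉ q.support →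
          (T.graph \ SimpleGraph.fromEdgeSet {s(φ a, φ c)}).Reachable (φ x) (φ y) := by
        intro x y q
        induction q with
        | nil => intro _; rfl
        | @cons x z y hxz q ihq =>
          intro hq
          rw [SimpleGraph.Walk.support_cons, List.mem_cons, not_or] at hq
          refine SimpleGraph.Reachable.trans ?_ (ihq hq.2)
          rcases hφ.1.2 hxz with e | e
          · rw [e]
          · refine SimpleGraph.Adj.reachable ?_
            rw [SimpleGraph.sdiff_adj]
            refine ⟨e, fun hh => ?_⟩
            rw [SimpleGraph.fromEdgeSet_adj, Set.mem_singleton_iff] at hh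
            have h2 : a ∈ s(x, z) := by
              rw [hφ.2 hxz h e hh.1]; exact Sym2.mem_mk_left _ _
            rcases Sym2.mem_iff.1 h2 with rfl | rfl
            · exact hq.1 rfl
            · exact hq.2 q.start_mem_support
      have := key p hap
      rw [hb, ← ha] at this
      exact hbr this.symm
    intro w hw
    rw [SimpleGraph.Walk.support_cons, List.mem_cons] at hw
    rcases hw with rfl | hw
    · exact ha
    · exact ih hp hc hb w hw

/-- The vertices of `S` incident to an edge that `φ` does not collapse. -/
def moved (S T : FreeSplitting F) (φ : S.V → T.V) : Set S.V :=
  {x | ∃ z, S.graph.Adj x z ∧ φ z ≠ φ x}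

/-- The convex hull in `S` of a set of vertices: all vertices on paths with both ends in it. -/
def hull (S : FreeSplitting F) (U : Set S.V) : Set S.V :=
  {w | ∃ (u₁ u₂ : S.V) (p : S.graph.Walk u₁ u₂), p.IsPath ∧ u₁ ∈ U ∧ u₂ ∈ U ∧ w ∈ p.support}

theorem smul_inv_smul (S : FreeSplitting F) (γ : F) (x : S.V) :
    S.smul γ (S.smul γ⁻¹ x) = x := by
  rw [← S.mul_smul, mul_inv_cancel, S.one_smul]

theorem smul_injective (S : FreeSplitting F) (γ : F) : Function.Injective (S.smul γ) := by
  intro x y h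
  have := congrArg (S.smul γ⁻¹) h
  simpa only [← S.mul_smul, inv_mul_cancel, S.one_smul] using this

theorem image_eq_of_smul_mem (S : FreeSplitting F) {A : Set S.V}
    (hA : ∀ γ, ∀ x ∈ A, S.smul γ x ∈ A) (γ : F) : S.smul γ '' A = A := by
  apply Set.Subset.antisymm
  · rintro _ ⟨x, hx, rfl⟩
    exact hA γ x hx
  · intro x hx
    exact ⟨_, hA γ⁻¹ x hx, S.smul_inv_smul γ x⟩

/-- The hull of a nonempty invariant set is invariant and connected, so minimality applies. -/
theorem hull_eq_univ (S : FreeSplitting F) {U : Set S.V} (hne : U.Nonempty)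
    (hU : ∀ γ, ∀ x ∈ U, S.smul γ x ∈ U) : S.hull U = Set.univ := by
  obtain ⟨u, hu⟩ := hne
  have hu' : u ∈ S.hull U :=
    ⟨u, u, .nil, SimpleGraph.Walk.IsPath.nil, hu, hu, by simp⟩
  refine S.minimal _ ⟨u, hu'⟩ (S.image_eq_of_smul_mem ?_) ?_
  · rintro γ w ⟨u₁, u₂, p, hp, h₁, h₂, hw⟩
    let g : S.graph →g S.graph := ⟨S.smul γ, fun h => S.adj_smul γ h⟩
    refine ⟨_, _, p.map g, hp.map (S.smul_injective γ),
      hU γ _ h₁, hU γ _ h₂, ?_⟩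
    rw [SimpleGraph.Walk.support_map]
    exact List.mem_map_of_mem hw
  · refine SimpleGraph.induce_connected_of_patches u hu' ?_
    rintro w ⟨u₁, u₂, p, hp, h₁, h₂, hw⟩
    obtain ⟨q, hq⟩ := S.tree.connected.exists_isPath u u₁
    refine ⟨{x | x ∈ (q.append p).support}, ?_, by simp, ?_, ?_⟩
    · intro x hx
      rcases (SimpleGraph.Walk.mem_support_append_iff _ _).1 hx with hx | hx
      · exact ⟨_, _, q, hq, hu, h₁, hx⟩
      · exact ⟨_, _, p, hp, h₁, h₂, hx⟩
    · exact (SimpleGraph.Walk.mem_support_append_iff _ _).2 (Or.inr hw)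
    · exact (q.append p).connected_induce_support _ _

theorem moved_nonempty {S T : FreeSplitting F} {φ : S.V → T.V} (hφ : IsFSMap S T φ) :
    (moved S T φ).Nonempty := by
  by_contra hne
  have hadj : ∀ x z, S.graph.Adj x z → φ z = φ x := by
    intro x z h
    by_contra hh
    exact hne ⟨x, z, h, hh⟩
  have hwalk : ∀ {x y : S.V}, S.graph.Walk x y → φ y = φ x := by
    intro x y p
    induction p with
    | nil => rfl
    | cons h _ ih => exact ih.trans (hadj _ _ h)
  obtain ⟨x₀⟩ := S.nontriv.to_nonempty
  have hconst : ∀ y, φ y = φ x₀ := fun y => hwalk (S.tree.connected x₀ y).some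
  -- The image of a constant map is a fixed vertex, against minimality of `T`.
  have huniv : ({φ x₀} : Set T.V) = Set.univ := by
    refine T.minimal _ (Set.singleton_nonempty _) (T.image_eq_of_smul_mem ?_) ?_
    · rintro γ _ rfl
      rw [← hφ.1]
      exact hconst _
    · exact ⟨.of_subsingleton⟩
  have := T.nontriv
  obtain ⟨y, hy⟩ := exists_ne (φ x₀)
  exact hy (huniv ▸ Set.mem_univ y : y ∈ ({φ x₀} : Set T.V))

theorem hull_moved {S T : FreeSplitting F} {φ : S.V → T.V} (hφ : IsFSMap S T φ) :
    S.hull (moved S T φ) = Set.univ := by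
  refine S.hull_eq_univ (moved_nonempty hφ) ?_
  rintro γ x ⟨z, h, hz⟩
  refine ⟨_, S.adj_smul γ h, ?_⟩
  rw [hφ.1, hφ.1]
  exact fun e => hz (T.smul_injective γ e)

/-- A walk from the fiber of `v` to a vertex of `moved` meets the frontier of that fiber. -/
theorem exists_exit {S T : FreeSplitting F} {φ : S.V → T.V} {v : T.V} {w u : S.V}
    (p : S.graph.Walk w u) (hw : φ w = v) (hu : u ∈ moved S T φ) :
    ∃ (x : S.V) (q : S.graph.Walk w x) (r : S.graph.Walk x u), p = q.append r ∧ φ x = v ∧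
      ∃ z, S.graph.Adj x z ∧ φ z ≠ v := by
  induction p with
  | nil =>
    obtain ⟨z, h, hz⟩ := hu
    exact ⟨_, .nil, .nil, rfl, hw, z, h, hw ▸ hz⟩
  | @cons w c u h p ih =>
    by_cases hc : φ c = v
    · obtain ⟨x, q, r, rfl, hx⟩ := ih hc hu
      exact ⟨x, .cons h q, r, rfl, hx⟩
    · exact ⟨w, .nil, .cons h p, rfl, hw, c, h, hc⟩

end FreeSplitting

open FreeSplitting in
/-- Lemma 1.1(3): a fiber of a collapse map is the convex hull of its
frontier. -/
theorem collapse_fiber_hull {F : Type} [Group F]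
    (S T : FreeSplitting F) (φ : S.V → T.V) (hφ : IsCollapseMap S T φ)
    (v : T.V) (w : S.V) :
    φ w = v ↔
      ∃ (u₁ u₂ : S.V) (p : S.graph.Walk u₁ u₂), p.IsPath ∧
        φ u₁ = v ∧ φ u₂ = v ∧
        (∃ z : S.V, S.graph.Adj u₁ z ∧ φ z ≠ v) ∧
        (∃ z : S.V, S.graph.Adj u₂ z ∧ φ z ≠ v) ∧
        w ∈ p.support := by
  constructor
  · intro hw
    have hmem : w ∈ S.hull (moved S T φ) := hull_moved hφ.1 ▸ Set.mem_univ w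
    obtain ⟨u₁, u₂, p, hp, h₁, h₂, hwp⟩ := hmem
    obtain ⟨p₁, p₂, rfl⟩ := SimpleGraph.Walk.mem_support_iff_exists_append.1 hwp
    obtain ⟨x₁, q₁, r₁, e₁, hx₁, hz₁⟩ := exists_exit p₁.reverse hw h₁
    obtain ⟨x₂, q₂, r₂, rfl, hx₂, hz₂⟩ := exists_exit p₂ hw h₂
    obtain rfl : p₁ = r₁.reverse.append q₁.reverse := by
      rw [← SimpleGraph.Walk.reverse_append, ← e₁, SimpleGraph.Walk.reverse_reverse]
    refine ⟨x₁, x₂, q₁.reverse.append q₂, ?_, hx₁, hx₂, hz₁, hz₂, ?_⟩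
    · rw [SimpleGraph.Walk.append_assoc, ← SimpleGraph.Walk.append_assoc r₁.reverse,
        ← SimpleGraph.Walk.append_assoc] at hp
      exact SimpleGraph.Walk.IsPath.of_append_left
        (SimpleGraph.Walk.IsPath.of_append_right hp)
    · simp
  · rintro ⟨u₁, u₂, p, hp, h₁, h₂, -, -, hw⟩
    exact eq_of_path hφ p hp h₁ h₂ w hw
end

section
/- (Existence of collapses, Section 1.2) Let S be a free splitting of F and let σ be a proper F-invariant set of edges of S: γ·e ∈ σ for every γ ∈ F and e ∈ σ, and some edge of S does not belong to σ. Then there exist a free splitting T of F and a collapse map f : S → T whose collapsed subgraph is exactly σ, i.e. for every edge {x,y} of S one has f(x) = f(y) if and only if {x,y} ∈ σ. -/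
/-!
The target tree is the quotient of `S` by the components of the subforest spanned by `σ`: its
vertices are the connected components of `H = fromEdgeSet σ`, two distinct components being adjacent
when an edge of `S` joins them.

Since the fibres of the quotient map are connected inside `σ`, walks of the quotient lift to walks
of `S` (`reachable_of_lift`). Deleting an edge `e ∉ σ` from `S` does not disturb the fibres, so a
walk of the quotient avoiding the image of `e` lifts to a walk of `S` avoiding `e`. As `e` is a
bridge of the tree `S`, this shows that its image is a bridge, so that the quotient is acyclic.
Bridges also show that an edge outside `σ` is not collapsed, and that no two edges of `S`
have the same nondegenerate image, so that edge stabilizers of the quotient are edge stabilizers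
of `S`. Minimality passes to the quotient because the preimage of an invariant connected set of
components is invariant and, again by lifting walks, connected.
-/

namespace CollapseConstruction

open SimpleGraph

/-- If `f` has `L`-connected fibres and every edge of `Q` lifts to an edge of `L`, then
reachability in `Q` lifts to reachability in `L`. -/
lemma reachable_of_lift {W X : Type} (L : SimpleGraph W) (Q : SimpleGraph X) (f : W → X)
    (hfib : ∀ a b, f a = f b → L.Reachable a b)
    (hedge : ∀ C D, Q.Adj C D → ∃ a b, L.Adj a b ∧ f a = C ∧ f b = D)
    (a b : W) (h : Q.Reachable (f a) (f b)) : L.Reachable a b := by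
  rw [reachable_iff_reflTransGen] at h
  suffices ∀ C, Relation.ReflTransGen Q.Adj (f a) C → ∀ b, f b = C → L.Reachable a b from
    this _ h b rfl
  intro C hC
  induction hC with
  | refl => exact fun b hb => hfib a b hb.symm
  | tail _ hCD ih =>
    intro b hb
    obtain ⟨c, d, hcd, hc, hd⟩ := hedge _ _ hCD
    exact ((ih c hc).trans hcd.reachable).trans (hfib d b (hd.trans hb.symm))

variable {V : Type} (G H : SimpleGraph V)

/-- The simple graph obtained from `G` by collapsing each connected component of `H` to a point;
the loops coming from edges of `G` inside a component are discarded. -/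
def quot : SimpleGraph H.ConnectedComponent where
  Adj C D := C ≠ D ∧ ∃ x y, G.Adj x y ∧ H.connectedComponentMk x = C ∧
    H.connectedComponentMk y = D
  symm := ⟨fun _ _ ⟨hne, x, y, h, hx, hy⟩ => ⟨hne.symm, y, x, h.symm, hy, hx⟩⟩
  loopless := ⟨fun _ h => h.1 rfl⟩

variable {G H}

lemma quot_connected (hG : G.Connected) : (quot G H).Connected := by
  have := hG.nonempty
  refine (connected_iff _).2 ⟨?_, ⟨H.connectedComponentMk (Classical.arbitrary V)⟩⟩
  refine ConnectedComponent.ind₂ fun a b => ?_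
  obtain h := (reachable_iff_reflTransGen _ _).1 (hG.preconnected a b)
  induction h with
  | refl => exact Reachable.refl _
  | @tail c d _ hcd ih =>
    refine ih.trans ?_
    by_cases he : H.connectedComponentMk c = H.connectedComponentMk d
    · rw [he]
    · exact Adj.reachable ⟨he, c, d, hcd, rfl, rfl⟩

lemma le_deleteEdges (hHG : H ≤ G) {x y : V} (hxy : ¬ H.Adj x y) :
    H ≤ G.deleteEdges {s(x, y)} := by
  intro a b hab
  refine deleteEdges_adj.2 ⟨hHG hab, fun h => hxy ?_⟩
  rwa [← mem_edgeSet, ← Set.mem_singleton_iff.1 h, mem_edgeSet]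

lemma not_reachable (hG : G.IsAcyclic) {x y : V} (hxy : G.Adj x y) :
    ¬ (G.deleteEdges {s(x, y)}).Reachable x y :=
  isBridge_iff.1 (isAcyclic_iff_forall_adj_isBridge.1 hG hxy)

/-- In a forest, an edge joins two vertices of the same component of a subgraph only if it belongs
to that subgraph. -/
lemma mk_eq_iff (hG : G.IsAcyclic) (hHG : H ≤ G) {x y : V} (hxy : G.Adj x y) :
    H.connectedComponentMk x = H.connectedComponentMk y ↔ H.Adj x y := by
  refine ⟨fun h => ?_, fun h => ConnectedComponent.sound h.reachable⟩
  by_contra hn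
  exact not_reachable hG hxy ((ConnectedComponent.exact h).mono (le_deleteEdges hHG hn))

lemma quot_isAcyclic (hG : G.IsAcyclic) (hHG : H ≤ G) : (quot G H).IsAcyclic := by
  refine isAcyclic_iff_forall_adj_isBridge.2 ?_
  rintro _ _ ⟨hne, x, y, hxy, rfl, rfl⟩
  rw [isBridge_iff]
  intro hr
  have hn : ¬ H.Adj x y := fun h => hne ((mk_eq_iff hG hHG hxy).2 h)
  refine not_reachable hG hxy (reachable_of_lift _ _ H.connectedComponentMk
    (fun a b h => (ConnectedComponent.exact h).mono (le_deleteEdges hHG hn)) ?_ x y hr)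
  intro C D hCD
  obtain ⟨⟨-, a, b, hab, rfl, rfl⟩, hs⟩ := deleteEdges_adj.1 hCD
  refine ⟨a, b, deleteEdges_adj.2 ⟨hab, fun h => hs ?_⟩, rfl, rfl⟩
  exact congrArg (Sym2.map H.connectedComponentMk) (Set.mem_singleton_iff.1 h)

/-- Distinct edges of a forest have distinct images in the quotient, unless collapsed: if `s(x, y)`
and `s(x', y')` had the same image, `x` and `y` would be joined through `s(x', y')` without using
the bridge `s(x, y)`. -/
lemma edge_unique (hG : G.IsAcyclic) (hHG : H ≤ G) {x y x' y' : V} (hxy : G.Adj x y)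
    (hxy' : G.Adj x' y') (hne : H.connectedComponentMk x ≠ H.connectedComponentMk y)
    (he : s(H.connectedComponentMk x, H.connectedComponentMk y)
      = s(H.connectedComponentMk x', H.connectedComponentMk y')) :
    s(x, y) = s(x', y') := by
  by_contra hs
  have hle := le_deleteEdges hHG (fun h => hne ((mk_eq_iff hG hHG hxy).2 h))
  have hadj : (G.deleteEdges {s(x, y)}).Adj x' y' :=
    deleteEdges_adj.2 ⟨hxy', fun h => hs (Set.mem_singleton_iff.1 h).symm⟩
  refine not_reachable hG hxy ?_
  obtain ⟨h1, h2⟩ | ⟨h1, h2⟩ := Sym2.eq_iff.1 he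
  · exact (((ConnectedComponent.exact h1).mono hle).trans hadj.reachable).trans
      ((ConnectedComponent.exact h2).mono hle).symm
  · exact (((ConnectedComponent.exact h1).mono hle).trans hadj.symm.reachable).trans
      ((ConnectedComponent.exact h2).mono hle).symm

/-- The preimage in `G` of a connected set of components of `H ≤ G` is connected. -/
lemma induce_preimage_connected (hHG : H ≤ G) (A : Set H.ConnectedComponent)
    (hA : ((quot G H).induce A).Connected) :
    (G.induce (H.connectedComponentMk ⁻¹' A)).Connected := by
  obtain ⟨⟨C, hC⟩⟩ := hA.nonempty
  obtain ⟨v, rfl⟩ := C.exists_rep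
  refine (connected_iff _).2 ⟨fun a b => ?_, ⟨⟨v, hC⟩⟩⟩
  refine reachable_of_lift _ _ (fun z : H.connectedComponentMk ⁻¹' A =>
    (⟨H.connectedComponentMk z.1, z.2⟩ : A)) ?_ ?_ a b (hA.preconnected _ _)
  · rintro ⟨a, ha⟩ ⟨b, hb⟩ hab
    have hr := (reachable_iff_reflTransGen _ _).1
      (ConnectedComponent.exact (congrArg Subtype.val hab))
    clear hab
    dsimp only at hr
    induction hr with
    | refl => exact Reachable.refl _
    | @tail c d _ hcd ih =>
      have hc : c ∈ H.connectedComponentMk ⁻¹' A := by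
        have : H.connectedComponentMk c = H.connectedComponentMk d :=
          ConnectedComponent.sound hcd.reachable
        rw [Set.mem_preimage, this]
        exact hb
      refine (ih hc).trans (Adj.reachable ?_)
      exact hHG hcd
  · rintro ⟨_, hC⟩ ⟨_, hD⟩ ⟨-, a, b, hab, rfl, rfl⟩
    exact ⟨⟨a, hC⟩, ⟨b, hD⟩, hab, rfl, rfl⟩

end CollapseConstruction


open FreeSplitting in
/-- Existence of collapses: any proper `F`-invariant set of edges of a free
splitting is the collapsed subgraph of some collapse map to a free splitting. -/
theorem exists_collapse {F : Type} [Group F] (S : FreeSplitting F)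
    (σ : Set (Sym2 S.V))
    (hσ_sub : σ ⊆ S.graph.edgeSet)
    (hσ_inv : ∀ γ : F, ∀ e ∈ σ, Sym2.map (S.smul γ) e ∈ σ)
    (hσ_proper : ∃ e ∈ S.graph.edgeSet, e ∉ σ) :
    ∃ (T : FreeSplitting F) (φ : S.V → T.V), IsCollapseMap S T φ ∧
      ∀ x y : S.V, S.graph.Adj x y → (φ x = φ y ↔ s(x, y) ∈ σ) := by
  obtain ⟨e₀, he₀, he₀σ⟩ := hσ_proper
  have hacyc := S.tree.isAcyclic
  let H : SimpleGraph S.V := SimpleGraph.fromEdgeSet σ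
  have hHG : H ≤ S.graph := fun a b h => hσ_sub ((SimpleGraph.fromEdgeSet_adj σ).1 h).1
  have hHσ : ∀ x y, H.Adj x y ↔ s(x, y) ∈ σ := fun x y =>
    ⟨fun h => ((SimpleGraph.fromEdgeSet_adj σ).1 h).1, fun h =>
      (SimpleGraph.fromEdgeSet_adj σ).2 ⟨h, (show S.graph.Adj x y from hσ_sub h).ne⟩⟩
  let m : F → (H →g H) := fun γ =>
    ⟨S.smul γ, fun {x y} h => (hHσ _ _).2 (hσ_inv γ _ ((hHσ x y).1 h))⟩
  let Q := CollapseConstruction.quot S.graph H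
  let q := H.connectedComponentMk
  let act : F → H.ConnectedComponent → H.ConnectedComponent := fun γ => .map (m γ)
  have hact : ∀ γ x, act γ (q x) = q (S.smul γ x) := fun _ _ => rfl
  have one_act : ∀ C, act 1 C = C := by
    refine SimpleGraph.ConnectedComponent.ind fun v => ?_
    exact congrArg q (S.one_smul v)
  have mul_act : ∀ γ δ C, act (γ * δ) C = act γ (act δ C) := by
    intro γ δ
    refine SimpleGraph.ConnectedComponent.ind fun v => ?_
    exact congrArg q (S.mul_smul γ δ v)
  have act_inj : ∀ γ C D, act γ C = act γ D → C = D := by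
    intro γ C D h
    rw [← one_act C, ← one_act D, ← inv_mul_cancel γ, mul_act, mul_act, h]
  refine ⟨
    { V := H.ConnectedComponent
      graph := Q
      nontriv := ?_
      tree := ⟨CollapseConstruction.quot_connected S.tree.connected,
        CollapseConstruction.quot_isAcyclic hacyc hHG⟩
      smul := act
      one_smul := one_act
      mul_smul := mul_act
      adj_smul := ?_
      minimal := ?_
      edge_stab := ?_ }, q, ⟨⟨fun _ _ => rfl, ?_⟩, ?_⟩, ?_⟩
  · induction e₀ with
    | h x y =>
      exact ⟨q x, q y, fun h => he₀σ
        ((hHσ x y).1 ((CollapseConstruction.mk_eq_iff hacyc hHG he₀).1 h))⟩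
  · rintro γ _ _ ⟨hne, x, y, hxy, rfl, rfl⟩
    exact ⟨fun h => hne (act_inj γ _ _ h), S.smul γ x, S.smul γ y, S.adj_smul γ hxy, rfl, rfl⟩
  · intro A ⟨C, hC⟩ hinv hconn
    have hmem : ∀ γ C, C ∈ A → act γ C ∈ A := fun γ C h => hinv γ ▸ Set.mem_image_of_mem _ h
    obtain ⟨v, rfl⟩ := C.exists_rep
    have key := S.minimal (q ⁻¹' A) ⟨v, hC⟩ (fun γ => ?_)
      (CollapseConstruction.induce_preimage_connected hHG A hconn)
    · refine Set.eq_univ_of_forall (SimpleGraph.ConnectedComponent.ind fun w => ?_)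
      exact key.ge (Set.mem_univ w)
    · ext w
      constructor
      · rintro ⟨z, hz, rfl⟩
        exact hmem γ _ hz
      · intro hw
        refine ⟨S.smul γ⁻¹ w, hmem γ⁻¹ _ hw, ?_⟩
        rw [← S.mul_smul, mul_inv_cancel, S.one_smul]
  · rintro γ _ _ ⟨hne, x, y, hxy, rfl, rfl⟩ h
    -- The edge `s(x, y)` and its translate by `γ` have the same image, hence coincide.
    have hs := CollapseConstruction.edge_unique hacyc hHG hxy (S.adj_smul γ hxy) hne
      (Sym2.eq_iff.2 (h.imp (fun h => ⟨h.1.symm, h.2.symm⟩) fun h => ⟨h.2.symm, h.1.symm⟩))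
    exact S.edge_stab γ x y hxy
      ((Sym2.eq_iff.1 hs).imp (fun h => ⟨h.1.symm, h.2.symm⟩) fun h => ⟨h.2.symm, h.1.symm⟩)
  · intro x y hxy
    by_cases h : q x = q y
    · exact Or.inl h
    · exact Or.inr ⟨h, x, y, hxy, rfl, rfl⟩
  · intro x y x' y' hxy hxy' hadj he
    exact CollapseConstruction.edge_unique hacyc hHG hxy hxy' hadj.1 he
  · intro x y hxy
    exact (CollapseConstruction.mk_eq_iff hacyc hHG hxy).trans (hHσ x y)
end

section
/- (Lemma 2.1, gate bound) Let F be a free group of finite rank n ≥ 2, let S and T be free splittings of F, and let f : S → T be a map which is nonconstant on each edge, i.e. f(x) ≠ f(y) whenever x and y are adjacent in S. Then every gate of f is finite with cardinality at most 2n: for every vertex v of S and every vertex u of T, the set {w : w adjacent to v in S and f(w) = u} has at most 2n elements. -/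
namespace GateBound

open scoped Pointwise

/-! ### A faithful two-dimensional representation of the free group -/

/-- The unimodular map `(x, y) ↦ (c' (x - c y) - y, x - c y)` of `ℚ²`. In the affine coordinate
`x / y` it is `t ↦ c' - 1 / (t - c)`, so it takes the complement of the unit interval around `c`
to the unit interval around `c'`. -/
def schottky (c c' : ℚ) : (ℚ × ℚ) ≃ₗ[ℚ] (ℚ × ℚ) where
  toFun p := (c' * (p.1 - c * p.2) - p.2, p.1 - c * p.2)
  invFun p := (p.2 + c * (c' * p.2 - p.1), c' * p.2 - p.1)
  map_add' p q := by ext <;> simp <;> ring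
  map_smul' r p := by ext <;> simp <;> ring
  left_inv p := by ext <;> simp
  right_inv p := by ext <;> simp

/-- If `p` is nonzero and lies in the cones of radius `1` around both centres `a` and `b`, then
the centres are at distance at most `2`. -/
lemma centre_close {a b : ℚ} {p : ℚ × ℚ} (hp : p ≠ 0)
    (h1 : |p.1 - a * p.2| ≤ |p.2|) (h2 : |p.1 - b * p.2| ≤ |p.2|) : |a - b| ≤ 2 := by
  by_contra! hab
  have h3 : |(a - b) * p.2| ≤ 2 * |p.2| := by
    have h4 : (a - b) * p.2 = (p.1 - b * p.2) - (p.1 - a * p.2) := by ring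
    rw [h4]
    have h5 := abs_sub (p.1 - b * p.2) (p.1 - a * p.2)
    linarith
  rw [abs_mul] at h3
  have h6 : p.2 = 0 := by
    by_contra h7
    have h8 : 0 < |p.2| := abs_pos.mpr h7
    nlinarith
  have h9 : p.1 = 0 := by simpa [h6] using h1
  exact hp (Prod.ext h9 h6)

/-- Distinct integers multiplied by `3` are more than `2` apart. -/
lemma three_apart {a b : ℤ} (hab : a ≠ b) : ¬ |(3 * a : ℚ) - 3 * b| ≤ 2 := by
  intro h
  have h1 : |3 * a - 3 * b| ≤ 2 := by exact_mod_cast h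
  rw [abs_le] at h1
  omega

/-- Ping-pong on nonzero vectors of `ℚ²`: the maps `schottky` for `n` disjoint pairs of unit
intervals generate a free group of rank `n`. -/
lemma exists_faithful (n : ℕ) (hn : 2 ≤ n) :
    ∃ ρ : FreeGroup (Fin n) →* ((ℚ × ℚ) ≃ₗ[ℚ] (ℚ × ℚ)), Function.Injective ρ := by
  have : Nontrivial (Fin n) := Fin.nontrivial_iff_two_le.mpr hn
  -- The `2 n` disjoint unit intervals are centred at the integers `3 c i` and `3 c' i`.
  let c' : Fin n → ℤ := fun i => 2 * i
  let c : Fin n → ℤ := fun i => 2 * i + 1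
  let X : Fin n → Set (RayVector ℚ (ℚ × ℚ)) := fun i =>
    {p | |(p : ℚ × ℚ).1 - (3 * c' i : ℚ) * (p : ℚ × ℚ).2| ≤ |(p : ℚ × ℚ).2|}
  let Y : Fin n → Set (RayVector ℚ (ℚ × ℚ)) := fun i =>
    {p | |(p : ℚ × ℚ).1 - (3 * c i : ℚ) * (p : ℚ × ℚ).2| < |(p : ℚ × ℚ).2|}
  refine ⟨FreeGroup.lift fun i => schottky (3 * c i) (3 * c' i),
    FreeGroup.injective_lift_of_ping_pong _ X Y ?_ ?_ ?_ ?_ ?_ ?_⟩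
  · intro i
    refine ⟨⟨(3 * c' i, 1), by simp⟩, ?_⟩
    change |(3 * c' i : ℚ) - (3 * c' i : ℚ) * 1| ≤ |1|
    simp
  · intro i j hij
    rw [Function.onFun, Set.disjoint_left]
    intro p h1 h2
    refine three_apart ?_ (centre_close p.2 h1 h2)
    simp only [c']
    have : (i : ℕ) ≠ j := fun h => hij (Fin.ext h)
    omega
  · intro i j hij
    rw [Function.onFun, Set.disjoint_left]
    intro p h1 h2
    refine three_apart ?_ (centre_close p.2 (le_of_lt h1) (le_of_lt h2))
    simp only [c]
    have : (i : ℕ) ≠ j := fun h => hij (Fin.ext h)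
    omega
  · intro i j
    rw [Set.disjoint_left]
    intro p h1 h2
    refine three_apart ?_ (centre_close p.2 h1 (le_of_lt h2))
    simp only [c, c']
    omega
  · rintro i _ ⟨p, hp, rfl⟩
    have h1 : ¬ |(p : ℚ × ℚ).1 - (3 * c i : ℚ) * (p : ℚ × ℚ).2| < |(p : ℚ × ℚ).2| := hp
    change |(schottky (3 * c i) (3 * c' i) p.1).1 - (3 * c' i : ℚ) *
      (schottky (3 * c i) (3 * c' i) p.1).2| ≤ |(schottky (3 * c i) (3 * c' i) p.1).2|
    simp only [schottky, LinearEquiv.coe_mk, LinearMap.coe_mk, AddHom.coe_mk]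
    rw [sub_right_comm, sub_self, zero_sub, abs_neg]
    exact not_lt.mp h1
  · rintro i _ ⟨p, hp, rfl⟩
    have h1 : ¬ |(p : ℚ × ℚ).1 - (3 * c' i : ℚ) * (p : ℚ × ℚ).2| ≤ |(p : ℚ × ℚ).2| := hp
    change |((schottky (3 * c i) (3 * c' i)).symm p.1).1 - (3 * c i : ℚ) *
      ((schottky (3 * c i) (3 * c' i)).symm p.1).2| <
        |((schottky (3 * c i) (3 * c' i)).symm p.1).2|
    have h2 : (schottky (3 * c i) (3 * c' i)).symm p.1 =
      (p.1.2 + 3 * c i * (3 * c' i * p.1.2 - p.1.1), 3 * c' i * p.1.2 - p.1.1) := rfl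
    rw [h2]
    simp only [add_sub_cancel_right]
    rw [abs_sub_comm (3 * (c' i : ℚ) * p.1.2)]
    exact not_le.mp h1

/-- The fixed space of a linear automorphism of `ℚ²` other than the identity has dimension at
most one. -/
lemma finrank_fixed_le {g : (ℚ × ℚ) ≃ₗ[ℚ] (ℚ × ℚ)} (hg : g ≠ 1)
    (P : Submodule ℚ (ℚ × ℚ)) (hP : ∀ x ∈ P, g x = x) : Module.finrank ℚ P ≤ 1 := by
  by_contra! h
  have h2 : Module.finrank ℚ (ℚ × ℚ) = 2 := by simp
  have h3 : P = ⊤ := by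
    apply Submodule.eq_top_of_finrank_eq
    have := Submodule.finrank_le P
    omega
  apply hg
  ext1 x
  exact hP x (h3 ▸ Submodule.mem_top)

/-! ### Potentials on trees -/

/-- The sum of a function of ordered pairs of vertices along a walk. -/
def walkSum {V L : Type*} [AddCommGroup L] {G : SimpleGraph V} (c : V → V → L) :
    ∀ {x y : V}, G.Walk x y → L
  | _, _, .nil => 0
  | x, _, .cons (v := z) _ p => c x z + walkSum c p

lemma walkSum_concat {V L : Type*} [AddCommGroup L] {G : SimpleGraph V} (c : V → V → L)
    {x y z : V} (p : G.Walk x y) (h : G.Adj y z) :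
    walkSum c (p.concat h) = walkSum c p + c y z := by
  induction p with
  | nil => simp [SimpleGraph.Walk.concat_nil, walkSum]
  | cons h' p ih => simp [SimpleGraph.Walk.concat_cons, walkSum, ih, add_assoc]

/-- An antisymmetric function on the edges of a tree is the gradient of a function vanishing at
a given vertex. -/
lemma exists_potential {V L : Type*} [AddCommGroup L] {G : SimpleGraph V} (hG : G.IsTree)
    (c : V → V → L) (hc : ∀ x y, c y x = - c x y) (v : V) :
    ∃ f : V → L, f v = 0 ∧ ∀ x y, G.Adj x y → f y - f x = c x y := by
  choose p hp _ using fun x => hG.existsUnique_path v x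
  refine ⟨fun x => walkSum c (p x), ?_, ?_⟩
  · have h : p v = .nil := (SimpleGraph.Walk.isPath_iff_nil.mp (hp v)).eq_nil
    simp [h, walkSum]
  · intro x y hxy
    by_cases hx : x ∈ (p y).support
    · have h := hG.isAcyclic.path_concat (hp x) (hp y) hxy hx
      change walkSum c (p y) - walkSum c (p x) = c x y
      rw [h, walkSum_concat]
      abel
    · have hy := hG.isAcyclic.mem_support_of_ne_mem_support_of_adj_of_isPath (hp x) (hp y) hxy hx
      have h := hG.isAcyclic.path_concat (hp y) (hp x) hxy.symm hy
      change walkSum c (p y) - walkSum c (p x) = c x y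
      rw [h, walkSum_concat, hc x y]
      abel

/-- On a connected graph a function is determined by its gradient and one value. -/
lemma eq_of_gradient_eq {V L : Type*} [AddCommGroup L] {G : SimpleGraph V} (hG : G.Connected)
    (f g : V → L) (h : ∀ x y, G.Adj x y → f y - f x = g y - g x) (v x : V) :
    f x - g x = f v - g v := by
  obtain ⟨p⟩ := hG.preconnected v x
  induction p with
  | nil => rfl
  | cons hadj p ih =>
    rw [ih]
    have h1 := h _ _ hadj
    rw [sub_eq_sub_iff_add_eq_add] at h1 ⊢
    rw [h1, add_comm]

/-! ### Minimality -/

/-- A walk that starts outside a set `O` and ends in `O` at a vertex other than `v`, without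
passing through `v`, enters `O` along some edge `{x, y}` with `y ≠ v`, and up to that moment a
function constant on the edges outside `O` does not change. -/
lemma exists_entrance {V : Type*} {G : SimpleGraph V} (O : Set V) (v : V) {w z : V}
    (p : G.Walk w z) (hw : w ∉ O) (hz : z ∈ O) (hp : v ∉ p.support) :
    ∃ x y, G.Adj x y ∧ x ∉ O ∧ y ∈ O ∧ y ≠ v ∧ ∀ (L : Type) (f : V → L),
      (∀ a b, G.Adj a b → a ∉ O → b ∉ O → f a = f b) → f w = f x := by
  induction p with
  | nil => exact absurd hz hw
  | @cons a b d h p ih =>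
    rw [SimpleGraph.Walk.support_cons, List.mem_cons, not_or] at hp
    by_cases hb : b ∈ O
    · refine ⟨a, b, h, hw, hb, ?_, fun _ _ _ => rfl⟩
      rintro rfl
      exact hp.2 p.start_mem_support
    · obtain ⟨x, y, h1, h2, h3, h4, h5⟩ := ih hb hz hp.2
      exact ⟨x, y, h1, h2, h3, h4, fun L f hf => (hf a b h hw hb).trans (h5 L f hf)⟩

open FreeSplitting

variable {F : Type} [Group F]

lemma smul_inv_smul (S : FreeSplitting F) (γ : F) (x : S.V) : S.smul γ (S.smul γ⁻¹ x) = x := by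
  rw [← S.mul_smul, mul_inv_cancel, S.one_smul]

lemma inv_smul_smul (S : FreeSplitting F) (γ : F) (x : S.V) : S.smul γ⁻¹ (S.smul γ x) = x := by
  rw [← S.mul_smul, inv_mul_cancel, S.one_smul]

lemma smul_injective (S : FreeSplitting F) (γ : F) : Function.Injective (S.smul γ) :=
  Function.LeftInverse.injective (inv_smul_smul S γ)

/-- The orbit of a vertex. -/
def orbit (S : FreeSplitting F) (v : S.V) : Set S.V := {x | ∃ γ, S.smul γ v = x}

lemma self_mem_orbit (S : FreeSplitting F) (v : S.V) : v ∈ orbit S v := ⟨1, S.one_smul v⟩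

lemma smul_mem_orbit (S : FreeSplitting F) {v x : S.V} (γ : F) (hx : x ∈ orbit S v) :
    S.smul γ x ∈ orbit S v := by
  obtain ⟨δ, rfl⟩ := hx
  exact ⟨γ * δ, S.mul_smul γ δ v⟩

/-- The convex hull of an orbit is an invariant subtree, so by minimality it is everything. -/
lemma mem_path_between_orbit (S : FreeSplitting F) (v w : S.V) :
    ∃ a ∈ orbit S v, ∃ b ∈ orbit S v, ∃ p : S.graph.Walk a b, p.IsPath ∧ w ∈ p.support := by
  classical
  set A : Set S.V := {x | ∃ a ∈ orbit S v, ∃ b ∈ orbit S v, ∃ p : S.graph.Walk a b,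
    p.IsPath ∧ x ∈ p.support} with hA
  have hvA : v ∈ A := ⟨v, self_mem_orbit S v, v, self_mem_orbit S v, .nil, by simp, by simp⟩
  have hsub : ∀ γ x, x ∈ A → S.smul γ x ∈ A := by
    rintro γ x ⟨a, ha, b, hb, p, hp, hx⟩
    let φ : S.graph →g S.graph := ⟨S.smul γ, fun h => S.adj_smul γ h⟩
    refine ⟨_, smul_mem_orbit S γ ha, _, smul_mem_orbit S γ hb, p.map φ,
      SimpleGraph.Walk.IsPath.map (smul_injective S γ) hp, ?_⟩
    rw [SimpleGraph.Walk.support_map]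
    exact List.mem_map_of_mem (f := φ) hx
  have huniv : A = Set.univ := by
    refine S.minimal A ⟨v, hvA⟩ (fun γ => Set.Subset.antisymm ?_ ?_) ?_
    · rintro _ ⟨x, hx, rfl⟩
      exact hsub γ x hx
    · intro x hx
      exact ⟨_, hsub γ⁻¹ x hx, smul_inv_smul S γ x⟩
    · refine SimpleGraph.induce_connected_of_patches v hvA ?_
      rintro x ⟨a, ha, b, hb, p, hp, hx⟩
      obtain ⟨q, hq, -⟩ := S.tree.existsUnique_path v a
      let r := q.append (p.takeUntil x hx)
      refine ⟨{z | z ∈ r.support}, ?_, r.start_mem_support, r.end_mem_support,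
        SimpleGraph.Walk.connected_induce_support r _ _⟩
      intro z hz
      rcases (SimpleGraph.Walk.mem_support_append_iff _ _).mp hz with h | h
      · exact ⟨v, self_mem_orbit S v, a, ha, q, hq, h⟩
      · exact ⟨a, ha, b, hb, p, hp, p.support_takeUntil_subset_support hx h⟩
  have : w ∈ A := huniv ▸ Set.mem_univ w
  exact this

/-- From a vertex outside the orbit of `v` one can reach that orbit without passing through
`v`. -/
lemma exists_walk_avoiding (S : FreeSplitting F) (v w : S.V) (hw : w ∉ orbit S v) :
    ∃ z ∈ orbit S v, ∃ p : S.graph.Walk w z, v ∉ p.support := by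
  classical
  obtain ⟨a, ha, b, hb, p, hp, hx⟩ := mem_path_between_orbit S v w
  by_cases h1 : v ∈ (p.takeUntil w hx).support
  · refine ⟨b, hb, p.dropUntil w hx, fun h2 => ?_⟩
    have h3 : ((p.takeUntil w hx).append (p.dropUntil w hx)).IsPath := by
      rw [SimpleGraph.Walk.take_spec]; exact hp
    have h4 : v ≠ w := fun h => hw (h ▸ self_mem_orbit S v)
    rw [SimpleGraph.Walk.isPath_def, SimpleGraph.Walk.support_append, List.nodup_append] at h3
    have h5 : v ∈ (p.dropUntil w hx).support.tail := by
      rw [SimpleGraph.Walk.mem_support_iff] at h2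
      exact h2.resolve_left h4
    exact h3.2.2 v h1 v h5 rfl
  · refine ⟨a, ha, (p.takeUntil w hx).reverse, ?_⟩
    rwa [SimpleGraph.Walk.support_reverse, List.mem_reverse]

/-! ### Counting dimensions -/

/-- Let `N` be a space of functions `W → ℚ²` such that each value `τ w` either vanishes on `N`, or
is the image under some `ρ γ` of a value `τ w'`, where `γ ≠ 1` in case `w' = w`. Then `N` has at
most half of the dimension of the space of all functions: call two elements of `W` equivalent if
the values there determine each other through some `ρ γ`. Then a class with at least two elements
contributes at most `2`, and a class with one element at most the dimension of a fixed space. -/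
lemma finrank_le_card {F : Type} [Group F] (ρ : F →* ((ℚ × ℚ) ≃ₗ[ℚ] (ℚ × ℚ)))
    (hρ : Function.Injective ρ) {W : Type} [Fintype W] (N : Submodule ℚ (W → ℚ × ℚ))
    (H : ∀ w, (∀ τ ∈ N, τ w = 0) ∨
      ∃ γ w', (w' = w → γ ≠ 1) ∧ ∀ τ ∈ N, τ w = ρ γ (τ w')) :
    Module.finrank ℚ N ≤ Fintype.card W := by
  classical
  have hinv : ∀ γ x, ρ γ⁻¹ (ρ γ x) = x := fun γ x => by
    rw [← LinearEquiv.mul_apply, ← map_mul, inv_mul_cancel, map_one]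
    rfl
  let r : Setoid W :=
    { r := fun w w' => ∃ γ, ∀ τ ∈ N, τ w = ρ γ (τ w')
      iseqv :=
        { refl := fun w => ⟨1, fun τ _ => by rw [map_one]; rfl⟩
          symm := by
            rintro w w' ⟨γ, h⟩
            exact ⟨γ⁻¹, fun τ hτ => by rw [h τ hτ, hinv]⟩
          trans := by
            rintro w w' w'' ⟨γ, h⟩ ⟨δ, h'⟩
            exact ⟨γ * δ, fun τ hτ => by
              rw [h τ hτ, h' τ hτ, map_mul, LinearEquiv.mul_apply]⟩ } }
  let P : Quotient r → Submodule ℚ (ℚ × ℚ) := fun q => N.map (LinearMap.proj q.out)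
  let Φ : N →ₗ[ℚ] (∀ q, P q) := LinearMap.pi fun q =>
    ((LinearMap.proj q.out).comp N.subtype).codRestrict (P q)
      fun τ => Submodule.mem_map_of_mem τ.2
  have hΦ : Function.Injective Φ := by
    rw [← LinearMap.ker_eq_bot, LinearMap.ker_eq_bot']
    intro τ hτ
    ext1
    funext w
    obtain ⟨γ, hγ⟩ : ∃ γ, ∀ τ ∈ N, τ w = ρ γ (τ (⟦w⟧ : Quotient r).out) :=
      r.symm (Quotient.mk_out w)
    have h1 : τ.1 (⟦w⟧ : Quotient r).out = 0 := congrArg Subtype.val (congrFun hτ ⟦w⟧)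
    rw [hγ τ τ.2, h1, map_zero]
    rfl
  have hP : ∀ q, Module.finrank ℚ (P q) ≤ Fintype.card {w // (⟦w⟧ : Quotient r) = q} := by
    intro q
    have hq : (⟦q.out⟧ : Quotient r) = q := Quotient.out_eq q
    by_cases h2 : 2 ≤ Fintype.card {w // (⟦w⟧ : Quotient r) = q}
    · refine le_trans (Submodule.finrank_le _) ?_
      simpa using h2
    · have hsub : ∀ w, (⟦w⟧ : Quotient r) = q → w = q.out := by
        intro w hw
        by_contra hne
        apply h2
        have : Nontrivial {w // (⟦w⟧ : Quotient r) = q} :=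
          ⟨⟨w, hw⟩, ⟨q.out, hq⟩, fun h => hne (congrArg Subtype.val h)⟩
        exact Fintype.one_lt_card
      have h1 : 1 ≤ Fintype.card {w // (⟦w⟧ : Quotient r) = q} :=
        Fintype.card_pos_iff.mpr ⟨⟨q.out, hq⟩⟩
      refine le_trans ?_ h1
      rcases H q.out with h0 | ⟨γ, w', hγ, h⟩
      · have : P q = ⊥ := by
          rw [eq_bot_iff]
          rintro _ ⟨τ, hτ, rfl⟩
          exact h0 τ hτ
        rw [this]
        simp
      · have hw' : w' = q.out :=
          hsub w' ((Quotient.sound (r.symm ⟨γ, h⟩)).trans hq)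
        have hg : ρ γ ≠ 1 := fun h => hγ hw' (hρ (h.trans (map_one ρ).symm))
        refine finrank_fixed_le hg _ ?_
        rintro _ ⟨τ, hτ, rfl⟩
        have := h τ hτ
        rw [hw'] at this
        exact this.symm
  calc Module.finrank ℚ N ≤ Module.finrank ℚ (∀ q, P q) :=
        LinearMap.finrank_le_finrank_of_injective hΦ
    _ = ∑ q, Module.finrank ℚ (P q) := Module.finrank_pi_fintype ℚ
    _ ≤ ∑ q, Fintype.card {w // (⟦w⟧ : Quotient r) = q} := Finset.sum_le_sum fun q _ => hP q
    _ = Fintype.card (Σ q, {w // (⟦w⟧ : Quotient r) = q}) := Fintype.card_sigma.symm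
    _ = Fintype.card W := Fintype.card_congr (Equiv.sigmaFiberEquiv _)

/-! ### Equivariant cochains and derivations -/

section Cochain

variable (S : FreeSplitting F) (ρ : F →* ((ℚ × ℚ) ≃ₗ[ℚ] (ℚ × ℚ))) (v : S.V) (W : Finset S.V)

open Classical in
/-- The equivariant extension of functions on `W`: it associates with `τ : W → ℚ²` the function
on ordered pairs of vertices that takes `(γ v, γ w)` to `ρ γ (τ w)` and all pairs that are not of
this form to `0`. As it is linear in `τ`, its values are taken to be linear maps in `τ`. The
choice of `(γ, w)` is immaterial under the freeness hypothesis of `equivExt_smul`. -/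
noncomputable def equivExt (x y : S.V) : (W → ℚ × ℚ) →ₗ[ℚ] (ℚ × ℚ) :=
  if h : ∃ p : F × W, x = S.smul p.1 v ∧ y = S.smul p.1 p.2 then
    (ρ h.choose.1).toLinearMap ∘ₗ LinearMap.proj h.choose.2
  else 0

variable {S v W}

lemma equivExt_smul (hfree : ∀ γ, ∀ w ∈ W, ∀ w' ∈ W, S.smul γ v = v → S.smul γ w = w' → γ = 1)
    (γ : F) (w : W) :
    equivExt S ρ v W (S.smul γ v) (S.smul γ w) = (ρ γ).toLinearMap ∘ₗ LinearMap.proj w := by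
  have h : ∃ p : F × W, S.smul γ v = S.smul p.1 v ∧ S.smul γ w = S.smul p.1 p.2 :=
    ⟨(γ, w), rfl, rfl⟩
  rw [equivExt, dif_pos h]
  obtain ⟨h1, h2⟩ := h.choose_spec
  generalize h.choose = p at h1 h2 ⊢
  obtain ⟨δ, w'⟩ := p
  simp only at h1 h2 ⊢
  have h3 : δ⁻¹ * γ = 1 := by
    refine hfree _ w w.2 w' w'.2 ?_ ?_
    · rw [S.mul_smul, h1, inv_smul_smul]
    · rw [S.mul_smul, h2, inv_smul_smul]
  have h4 : γ = δ := (inv_mul_eq_one.mp h3).symm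
  have h5 : w = w' := by
    apply Subtype.ext
    apply smul_injective S γ
    rw [h2, h4]
  rw [h4, h5]

lemma equivExt_eq_zero {x y : S.V}
    (h : ¬ ∃ p : F × W, x = S.smul p.1 v ∧ y = S.smul p.1 p.2) : equivExt S ρ v W x y = 0 := by
  rw [equivExt, dif_neg h]

lemma equivExt_eq_zero_of_notMem {x y : S.V} (h : x ∉ orbit S v) : equivExt S ρ v W x y = 0 :=
  equivExt_eq_zero ρ fun ⟨p, hp, _⟩ => h ⟨p.1, hp.symm⟩

lemma equivExt_equivariant
    (hfree : ∀ γ, ∀ w ∈ W, ∀ w' ∈ W, S.smul γ v = v → S.smul γ w = w' → γ = 1)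
    (γ : F) (x y : S.V) :
    equivExt S ρ v W (S.smul γ x) (S.smul γ y) = (ρ γ).toLinearMap ∘ₗ equivExt S ρ v W x y := by
  by_cases h : ∃ p : F × W, x = S.smul p.1 v ∧ y = S.smul p.1 p.2
  · obtain ⟨⟨δ, w⟩, rfl, rfl⟩ := h
    rw [← S.mul_smul, ← S.mul_smul, equivExt_smul ρ hfree, equivExt_smul ρ hfree, map_mul]
    rfl
  · rw [equivExt_eq_zero ρ h, equivExt_eq_zero, LinearMap.comp_zero]
    rintro ⟨⟨δ, w⟩, h1, h2⟩
    refine h ⟨⟨γ⁻¹ * δ, w⟩, ?_, ?_⟩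
    · rw [S.mul_smul, ← h1, inv_smul_smul]
    · rw [S.mul_smul, ← h2, inv_smul_smul]

end Cochain

/-- A finite set `W` of neighbours of `v` that are inequivalent under the stabilizer of `v` has at
most `2 n` elements. -/
lemma card_le (n : ℕ) (hn : 2 ≤ n) (S : FreeSplitting (FreeGroup (Fin n))) (v : S.V)
    (W : Finset S.V) (hadj : ∀ w ∈ W, S.graph.Adj v w)
    (hfree : ∀ γ, ∀ w ∈ W, ∀ w' ∈ W, S.smul γ v = v → S.smul γ w = w' → γ = 1) :
    W.card ≤ 2 * n := by
  obtain ⟨ρ, hρ⟩ := exists_faithful n hn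
  let c : S.V → S.V → ((W → ℚ × ℚ) →ₗ[ℚ] (ℚ × ℚ)) := fun x y =>
    equivExt S ρ v W x y - equivExt S ρ v W y x
  obtain ⟨f, hfv, hf⟩ := exists_potential S.tree c (fun x y => by simp [c]) v
  -- `γ ↦ f (γ v)` is a derivation, and it is the defect of equivariance of `f`.
  have hder : ∀ γ x τ, f (S.smul γ x) τ = ρ γ (f x τ) + f (S.smul γ v) τ := by
    intro γ x τ
    have h := eq_of_gradient_eq S.tree.connected (fun x => f (S.smul γ x))
      (fun x => (ρ γ).toLinearMap ∘ₗ f x) (fun x y hxy => by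
        change f _ - f _ = _ ∘ₗ f y - _ ∘ₗ f x
        rw [hf _ _ (S.adj_smul γ hxy), ← LinearMap.comp_sub, hf _ _ hxy]
        simp only [c]
        rw [equivExt_equivariant ρ hfree, equivExt_equivariant ρ hfree, LinearMap.comp_sub]) v x
    simp only [hfv, LinearMap.comp_zero, sub_zero] at h
    have h' := LinearMap.congr_fun h τ
    simp only [LinearMap.sub_apply, LinearMap.comp_apply, LinearEquiv.coe_coe] at h'
    rw [← h']
    abel
  let D : (W → ℚ × ℚ) →ₗ[ℚ] (Fin n → ℚ × ℚ) :=
    LinearMap.pi fun i => f (S.smul (FreeGroup.of i) v)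
  -- A derivation that vanishes on the generators vanishes.
  have hD : ∀ τ ∈ LinearMap.ker D, ∀ γ, f (S.smul γ v) τ = 0 := by
    intro τ hτ γ
    induction γ using FreeGroup.induction_on with
    | C1 => rw [S.one_smul, hfv, LinearMap.zero_apply]
    | of i => exact congrFun hτ i
    | inv_of i h =>
      have h1 := hder (FreeGroup.of i) (S.smul (FreeGroup.of i)⁻¹ v) τ
      rw [smul_inv_smul, hfv, h, add_zero, LinearMap.zero_apply] at h1
      exact (LinearEquiv.map_eq_zero_iff _).mp h1.symm
    | mul γ δ h1 h2 => rw [S.mul_smul, hder, h1, h2, map_zero, add_zero]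
  have hequiv : ∀ τ ∈ LinearMap.ker D, ∀ γ x, f (S.smul γ x) τ = ρ γ (f x τ) := by
    intro τ hτ γ x
    rw [hder, hD τ hτ, add_zero]
  have horb : ∀ τ ∈ LinearMap.ker D, ∀ x ∈ orbit S v, f x τ = 0 := by
    rintro τ hτ x ⟨γ, rfl⟩
    exact hD τ hτ γ
  have hone : ∀ w : W, equivExt S ρ v W v w = LinearMap.proj w := by
    intro w
    have h := equivExt_smul ρ hfree 1 w
    rw [S.one_smul, S.one_smul, map_one] at h
    exact h
  have hker : Module.finrank ℚ (LinearMap.ker D) ≤ Fintype.card W := by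
    refine finrank_le_card ρ hρ _ fun w => ?_
    -- The value `τ w` in terms of the potential at `w`.
    have hval : ∀ τ, τ w = f w τ + equivExt S ρ v W w v τ := by
      intro τ
      have h1 := LinearMap.congr_fun (hf v w (hadj w w.2)) τ
      simp only [c, hone, hfv, sub_zero, LinearMap.sub_apply, LinearMap.proj_apply] at h1
      rw [h1]
      abel
    by_cases hw : (w : S.V) ∈ orbit S v
    · by_cases h : ∃ p : FreeGroup (Fin n) × W, (w : S.V) = S.smul p.1 v ∧ v = S.smul p.1 p.2
      · obtain ⟨⟨γ, w'⟩, h1, h2⟩ := h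
        refine Or.inr ⟨γ, w', ?_, fun τ hτ => ?_⟩
        · rintro _ rfl
          rw [S.one_smul] at h1
          exact (hadj w w.2).ne h1.symm
        · rw [hval τ, horb τ hτ w hw, zero_add]
          have h3 := equivExt_smul ρ hfree γ w'
          rw [← h1, ← h2] at h3
          rw [h3]
          rfl
      · refine Or.inl fun τ hτ => ?_
        rw [hval τ, horb τ hτ w hw, equivExt_eq_zero ρ h, LinearMap.zero_apply, add_zero]
    · have hval' : ∀ τ, τ w = f w τ := by
        intro τ
        rw [hval τ, equivExt_eq_zero_of_notMem ρ hw, LinearMap.zero_apply, add_zero]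
      obtain ⟨z, hz, p, hp⟩ := exists_walk_avoiding S v w hw
      obtain ⟨x, y, hxy, hx, hy, hyv, hconst⟩ := exists_entrance (orbit S v) v p hw hz hp
      have hwx : f w = f x := by
        refine hconst _ f fun a b hab ha hb => ?_
        have h1 := hf a b hab
        simp only [c] at h1
        rw [equivExt_eq_zero_of_notMem ρ ha, equivExt_eq_zero_of_notMem ρ hb, sub_zero] at h1
        exact (sub_eq_zero.mp h1).symm
      by_cases h : ∃ p : FreeGroup (Fin n) × W, y = S.smul p.1 v ∧ x = S.smul p.1 p.2
      · obtain ⟨⟨γ, w'⟩, h1, h2⟩ := h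
        refine Or.inr ⟨γ, w', ?_, fun τ hτ => ?_⟩
        · rintro _ rfl
          rw [S.one_smul] at h1
          exact hyv h1
        · have hw' : (w' : S.V) ∉ orbit S v := fun h3 => hx (by
            rw [h2]; exact smul_mem_orbit S γ h3)
          have hval'' : τ w' = f w' τ := by
            have h3 := LinearMap.congr_fun (hf v w' (hadj w' w'.2)) τ
            simp only [c, hone, hfv, sub_zero, LinearMap.sub_apply, LinearMap.proj_apply] at h3
            rw [h3, equivExt_eq_zero_of_notMem ρ hw', LinearMap.zero_apply, sub_zero]
          rw [hval' τ, hwx, h2, hequiv τ hτ, hval'']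
      · refine Or.inl fun τ hτ => ?_
        have h1 := LinearMap.congr_fun (hf x y hxy) τ
        simp only [c] at h1
        rw [equivExt_eq_zero_of_notMem ρ hx, equivExt_eq_zero ρ h, sub_zero, LinearMap.sub_apply,
          horb τ hτ y hy, LinearMap.zero_apply, zero_sub, neg_eq_zero] at h1
        rw [hval' τ, hwx, h1]
  have hrank := LinearMap.finrank_range_add_finrank_ker D
  have h1 : Module.finrank ℚ (W → ℚ × ℚ) = W.card * 2 := by
    rw [Module.finrank_pi_fintype]
    simp
  have h2 : Module.finrank ℚ (LinearMap.range D) ≤ n * 2 := by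
    refine (Submodule.finrank_le _).trans (le_of_eq ?_)
    rw [Module.finrank_pi_fintype]
    simp
  rw [Fintype.card_coe] at hker
  omega

end GateBound

open FreeSplitting in
/-- Lemma 2.1: for a map of free splittings of a free group of rank `n ≥ 2`
which is nonconstant on each edge, every gate is finite of cardinality at
most `2n`. -/
theorem gate_bound (n : ℕ) (hn : 2 ≤ n)
    (S T : FreeSplitting (FreeGroup (Fin n)))
    (φ : S.V → T.V) (hφ : IsFSMap S T φ)
    (hnc : ∀ ⦃x y : S.V⦄, S.graph.Adj x y → φ x ≠ φ y)
    (v : S.V) (u : T.V) :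
    {w : S.V | S.graph.Adj v w ∧ φ w = u}.Finite ∧
      {w : S.V | S.graph.Adj v w ∧ φ w = u}.ncard ≤ 2 * n := by
  have hfree : ∀ γ w w', (S.graph.Adj v w ∧ φ w = u) → (S.graph.Adj v w' ∧ φ w' = u) →
      S.smul γ v = v → S.smul γ w = w' → γ = 1 := by
    rintro γ w w' ⟨hw, hwu⟩ ⟨-, hwt⟩ h1 h2
    -- `γ` fixes the edge `{φ v, u}` of `T`.
    refine T.edge_stab γ (φ v) u ?_ (Or.inl ⟨?_, ?_⟩)
    · rw [← hwu]
      exact (hφ.2 hw).resolve_left (hnc hw)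
    · rw [← hφ.1, h1]
    · rw [← hwu, ← hφ.1, h2, hwt, hwu]
  have hcard : ∀ W : Finset S.V, (W : Set S.V) ⊆ {w | S.graph.Adj v w ∧ φ w = u} →
      W.card ≤ 2 * n := fun W hW =>
    GateBound.card_le n hn S v W (fun w hw => (hW hw).1)
      fun γ w hw w' hw' => hfree γ w w' (hW hw) (hW hw')
  have hfin : {w : S.V | S.graph.Adj v w ∧ φ w = u}.Finite := by
    by_contra hinf
    obtain ⟨W, hW, hc⟩ := Set.Infinite.exists_subset_card_eq hinf (2 * n + 1)
    have := hcard W hW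
    omega
  refine ⟨hfin, ?_⟩
  rw [Set.ncard_eq_toFinset_card _ hfin]
  exact hcard _ (by simp)
end

section
/- (Lemma 2.2, First Derivative Test) Let S and T be free splittings of F and let f : S → T be a foldable map. Let W be a nonempty set of vertices of S whose induced subgraph is connected, and let f(W) denote the subgraph of T with vertex set {f(w) : w ∈ W} and edge set {{f(a), f(b)} : a, b ∈ W adjacent in S}. If v ∈ W and the vertex f(v) has exactly one neighbor in the subgraph f(W), then v is a frontier vertex of W: v has a neighbor in S not belonging to W. -/
open FreeSplitting in
/-- Lemma 2.2 (First Derivative Test): if `f` is foldable, `W` is a nonempty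
connected set of vertices and `f v` has exactly one neighbor in the image
subgraph `f(W)`, then `v` is a frontier vertex of `W`. -/
theorem first_derivative_test {F : Type} [Group F]
    (S T : FreeSplitting F) (φ : S.V → T.V) (hφ : IsFoldable S T φ)
    (W : Set S.V) (hWne : W.Nonempty)
    (hWconn : (S.graph.induce W).Connected)
    (v : S.V) (hv : v ∈ W)
    (huniq : ∃ u₀ : T.V,
      {u : T.V | ∃ a ∈ W, ∃ b ∈ W, S.graph.Adj a b ∧
        ((φ a = φ v ∧ φ b = u) ∨ (φ b = φ v ∧ φ a = u))} = {u₀}) :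
    ∃ z : S.V, S.graph.Adj v z ∧ z ∉ W := by
  obtain ⟨u₀, hu⟩ := huniq
  by_contra! hW
  have hsub : φ '' S.graph.neighborSet v ⊆ {u₀} := by
    rintro _ ⟨z, hz, rfl⟩
    rw [← hu]
    exact ⟨v, hv, z, hW z hz, hz, Or.inl ⟨rfl, rfl⟩⟩
  -- `φ` has at least two gates at `v`, but all of them lie in the singleton `{u₀}`.
  have hle : (2 : ℕ∞) ≤ 1 := calc
    (2 : ℕ∞) ≤ (φ '' S.graph.neighborSet v).encard := hφ.2.2.1 v
    _ ≤ ({u₀} : Set T.V).encard := Set.encard_le_encard hsub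
    _ = 1 := Set.encard_singleton u₀
  exact absurd hle (by decide)
end

section
/- (Lemma 3.3, Desymmetrization) For all constants a, b, c > 0, set A = 4a and B = min{1/4, 3b/4}. Then for any metric space X, any natural number K, any function γ from {0,…,K} to X and any function π from X to {0,…,K}: if (γ,π) satisfies the Desymmetrized strong contraction axiom with constants (a,b,c), then (γ,π) satisfies the Strong contraction axiom with constants (A,B,c). -/
/-!
If `π w ≤ π v`, the desymmetrized axiom applies to `(v, w)` directly, the new constants being more
restrictive. Otherwise it applies to `(w, v)`: since `w` lies within a quarter of the distance
`D` from `v` to the path, `w` is itself at distance at least `3D/4 ≥ 3a` from the path, and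
`d(v, w) ≤ (3b/4) D` is then at most `b` times that distance. The conclusion is symmetric in `v`
and `w`.
-/

/-- The Strong contraction axiom for a path `γ : {0,…,K} → X` with projection
`π : X → {0,…,K}` and constants `a, b, c`. -/
def StrongContraction {X : Type} [MetricSpace X] (K : ℕ) (γ : ℕ → X)
    (π : X → ℕ) (a b c : ℝ) : Prop :=
  ∀ v w : X,
    a ≤ Metric.infDist v (γ '' {t : ℕ | t ≤ K}) →
    dist w v ≤ b * Metric.infDist v (γ '' {t : ℕ | t ≤ K}) →
    Metric.diam (γ '' {t : ℕ | min (π v) (π w) ≤ t ∧ t ≤ max (π v) (π w)}) ≤ c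

/-- The Desymmetrized strong contraction axiom: the same conclusion, but only
required when `π w ≤ π v`. -/
def DesymStrongContraction {X : Type} [MetricSpace X] (K : ℕ) (γ : ℕ → X)
    (π : X → ℕ) (a b c : ℝ) : Prop :=
  ∀ v w : X, π w ≤ π v →
    a ≤ Metric.infDist v (γ '' {t : ℕ | t ≤ K}) →
    dist w v ≤ b * Metric.infDist v (γ '' {t : ℕ | t ≤ K}) →
    Metric.diam (γ '' {t : ℕ | min (π v) (π w) ≤ t ∧ t ≤ max (π v) (π w)}) ≤ c

/-- Lemma 3.3 (Desymmetrization): desymmetrized strong contraction with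
constants `(a,b,c)` implies strong contraction with constants
`(4a, min(1/4, 3b/4), c)`. -/
theorem desymmetrization {X : Type} [MetricSpace X] (K : ℕ) (γ : ℕ → X)
    (π : X → ℕ) (hπ : ∀ x, π x ≤ K)
    (a b c : ℝ) (ha : 0 < a) (hb : 0 < b) (hc : 0 < c)
    (h : DesymStrongContraction K γ π a b c) :
    StrongContraction K γ π (4 * a) (min (1 / 4 : ℝ) (3 * b / 4)) c := by
  intro v w hv hw
  set S : Set X := γ '' {t : ℕ | t ≤ K}
  have hD : 0 ≤ Metric.infDist v S := Metric.infDist_nonneg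
  have h1 : dist w v ≤ 1 / 4 * Metric.infDist v S :=
    hw.trans (mul_le_mul_of_nonneg_right (min_le_left _ _) hD)
  have h2 : dist w v ≤ 3 * b / 4 * Metric.infDist v S :=
    hw.trans (mul_le_mul_of_nonneg_right (min_le_right _ _) hD)
  have hbD : 0 ≤ b * Metric.infDist v S := mul_nonneg hb.le hD
  rcases le_total (π w) (π v) with hle | hle
  · exact h v w hle (by linarith) (by linarith)
  · have h3 : Metric.infDist v S ≤ Metric.infDist w S + dist v w :=
      Metric.infDist_le_infDist_add_dist
    rw [dist_comm v w] at h3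
    have h4 : 3 / 4 * Metric.infDist v S ≤ Metric.infDist w S := by linarith
    have h5 := mul_le_mul_of_nonneg_left h4 hb.le
    have h6 := h w v hle (by linarith) (by rw [dist_comm]; linarith)
    rwa [min_comm, max_comm] at h6
end

section
/- (Proposition 4.2, Combing by collapse) Let S_0 → ⋯ → S_K be a foldable sequence of free splittings of F with maps f_k : S_{k-1} → S_k, and let π' : S_K → T' be a collapse map to a free splitting T'. Then there exists a combing rectangle with top row the given foldable sequence, with T_K = T' and π_K = π': there exist free splittings T_0, …, T_{K-1} (and T_K = T'), maps g_k : T_{k-1} → T_k, and collapse maps π_k : S_k → T_k with collapsed subgraphs σ_k (and π_K = π'), such that g_k ∘ π_{k-1} = π_k ∘ f_k for k = 1,…,K and σ_{k-1} equals the set of edges of S_{k-1} whose image under f_k is an edge of σ_k. -/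
namespace FreeSplitting

/-! ### Contracting a subforest of a tree -/

/-- The graph obtained from `G` by contracting each component of `H` to a vertex. -/
def contract {V : Type} (G H : SimpleGraph V) : SimpleGraph H.ConnectedComponent where
  Adj C D := C ≠ D ∧ ∃ x y, G.Adj x y ∧ H.connectedComponentMk x = C ∧ H.connectedComponentMk y = D
  symm := ⟨fun _ _ ⟨hne, x, y, h, hx, hy⟩ => ⟨hne.symm, y, x, h.symm, hy, hx⟩⟩
  loopless := ⟨fun _ h => h.1 rfl⟩

section Contract

variable {V : Type} {G H : SimpleGraph V}

lemma reachable_of_reachable_quotient {Γ : SimpleGraph H.ConnectedComponent} {L : SimpleGraph V}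
    (hHL : H ≤ L)
    (hlift : ∀ C D, Γ.Adj C D → ∃ x y, L.Adj x y ∧ H.connectedComponentMk x = C ∧
      H.connectedComponentMk y = D)
    {C D : H.ConnectedComponent} (h : Γ.Reachable C D) :
    ∀ x y, H.connectedComponentMk x = C → H.connectedComponentMk y = D → L.Reachable x y := by
  obtain ⟨p⟩ := h
  induction p with
  | nil =>
    intro x y hx hy
    exact (SimpleGraph.ConnectedComponent.exact (hx.trans hy.symm)).mono hHL
  | cons hadj p ih =>
    intro x y hx hy
    obtain ⟨a, b, hab, ha, hb⟩ := hlift _ _ hadj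
    have h1 : L.Reachable x a :=
      (SimpleGraph.ConnectedComponent.exact (hx.trans ha.symm)).mono hHL
    exact (h1.trans hab.reachable).trans (ih b y hb hy)

/-- An edge of a forest joining two components of a subforest is determined by these components. -/
lemma edge_eq_of_reachable (hG : G.IsAcyclic) (hHG : H ≤ G) {x y x' y' : V}
    (hxy : G.Adj x y) (hxy' : G.Adj x' y') (hn : ¬ H.Reachable x y)
    (hx : H.Reachable x x') (hy : H.Reachable y y') : s(x, y) = s(x', y') := by
  by_contra hne
  have hbr := SimpleGraph.isAcyclic_iff_forall_adj_isBridge.1 hG hxy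
  rw [SimpleGraph.isBridge_iff] at hbr
  have hle : H ≤ G.deleteEdges {s(x, y)} := by
    intro a b hab
    rw [SimpleGraph.deleteEdges_adj]
    refine ⟨hHG hab, fun he => hn ?_⟩
    have : s(x, y) ∈ H.edgeSet := by
      rw [← Set.mem_singleton_iff.1 he]; exact hab
    exact (H.mem_edgeSet.1 this).reachable
  have hadj : (G.deleteEdges {s(x, y)}).Adj x' y' := by
    rw [SimpleGraph.deleteEdges_adj]
    exact ⟨hxy', fun he => hne (Set.mem_singleton_iff.1 he).symm⟩
  exact hbr (((hx.mono hle).trans hadj.reachable).trans (hy.mono hle).symm)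

lemma contract_isTree (hG : G.IsTree) (hHG : H ≤ G) : (contract G H).IsTree := by
  constructor
  · have := hG.connected.nonempty
    refine ⟨fun C D => ?_⟩
    induction C using SimpleGraph.ConnectedComponent.ind with | _ x
    induction D using SimpleGraph.ConnectedComponent.ind with | _ y
    obtain ⟨p⟩ := hG.connected.preconnected x y
    induction p with
    | nil => exact .rfl
    | @cons a b c hadj p ih =>
      by_cases heq : H.connectedComponentMk a = H.connectedComponentMk b
      · rw [heq]; exact ih
      · exact SimpleGraph.Reachable.trans
          (SimpleGraph.Adj.reachable ⟨heq, a, b, hadj, rfl, rfl⟩) ih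
  · rw [SimpleGraph.isAcyclic_iff_forall_adj_isBridge]
    rintro _ _ ⟨hne, x, y, hxy, rfl, rfl⟩
    rw [SimpleGraph.isBridge_iff]
    intro hr
    have hbr := SimpleGraph.isAcyclic_iff_forall_adj_isBridge.1 hG.isAcyclic hxy
    rw [SimpleGraph.isBridge_iff] at hbr
    refine hbr (reachable_of_reachable_quotient (L := G.deleteEdges {s(x, y)}) ?_ ?_ hr x y rfl rfl)
    · intro a b hab
      rw [SimpleGraph.deleteEdges_adj]
      refine ⟨hHG hab, fun he => hne ?_⟩
      have : s(x, y) ∈ H.edgeSet := by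
        rw [← Set.mem_singleton_iff.1 he]; exact hab
      exact SimpleGraph.ConnectedComponent.sound (H.mem_edgeSet.1 this).reachable
    · intro C D hCD
      rw [SimpleGraph.deleteEdges_adj] at hCD
      obtain ⟨⟨-, a, b, hab, rfl, rfl⟩, hnot⟩ := hCD
      refine ⟨a, b, ?_, rfl, rfl⟩
      rw [SimpleGraph.deleteEdges_adj]
      refine ⟨hab, fun he => hnot ?_⟩
      have := congrArg (Sym2.map H.connectedComponentMk) (Set.mem_singleton_iff.1 he)
      simpa using this

lemma preimage_connected (hHG : H ≤ G) {A : Set H.ConnectedComponent}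
    (hA : ((contract G H).induce A).Connected) :
    (G.induce (H.connectedComponentMk ⁻¹' A)).Connected := by
  -- A path inside a single component stays in the preimage of `A`.
  have base : ∀ x y : V, H.Reachable x y → ∀ (hx : H.connectedComponentMk x ∈ A)
      (hy : H.connectedComponentMk y ∈ A),
      (G.induce (H.connectedComponentMk ⁻¹' A)).Reachable ⟨x, hx⟩ ⟨y, hy⟩ := by
    rintro x y ⟨p⟩
    induction p with
    | nil => intro hx hy; exact .rfl
    | @cons a b c hadj p ih =>
      intro hx hy
      have hb : H.connectedComponentMk b ∈ A := by
        rwa [← SimpleGraph.ConnectedComponent.sound hadj.reachable]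
      have h1 : (G.induce (H.connectedComponentMk ⁻¹' A)).Adj ⟨a, hx⟩ ⟨b, hb⟩ := hHG hadj
      exact h1.reachable.trans (ih hb hy)
  have key : ∀ C D : A, ((contract G H).induce A).Reachable C D → ∀ (x y : V)
      (hx : H.connectedComponentMk x = C) (hy : H.connectedComponentMk y = D),
      (G.induce (H.connectedComponentMk ⁻¹' A)).Reachable
        ⟨x, by simp [hx]⟩ ⟨y, by simp [hy]⟩ := by
    rintro C D ⟨p⟩
    induction p with
    | nil =>
      intro x y hx hy
      exact base x y (SimpleGraph.ConnectedComponent.exact (hx.trans hy.symm)) _ _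
    | @cons C E D hadj p ih =>
      intro x y hx hy
      obtain ⟨-, a, b, hab, ha, hb⟩ := hadj
      have ha' : H.connectedComponentMk a ∈ A := by simp [ha]
      have hb' : H.connectedComponentMk b ∈ A := by simp [hb]
      have h1 := base x a (SimpleGraph.ConnectedComponent.exact (hx.trans ha.symm))
        (by simp [hx]) ha'
      have h2 : (G.induce (H.connectedComponentMk ⁻¹' A)).Adj ⟨a, ha'⟩ ⟨b, hb'⟩ := hab
      exact (h1.trans h2.reachable).trans (ih b y hb hy)
  obtain ⟨⟨C, hC⟩⟩ := hA.nonempty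
  induction C using SimpleGraph.ConnectedComponent.ind with | _ v
  have : Nonempty ↑(H.connectedComponentMk ⁻¹' A) := ⟨⟨v, hC⟩⟩
  exact ⟨fun ⟨x, hx⟩ ⟨y, hy⟩ => key ⟨_, hx⟩ ⟨_, hy⟩ (hA.preconnected _ _) x y rfl rfl⟩

end Contract

variable {F : Type} [Group F]

/-! ### The collapse of a free splitting along an equivariant map -/

/-- The forest of those edges of `S` whose endpoints are identified by `d`. -/
def fiberGraph (S : FreeSplitting F) {X : Type} (d : S.V → X) : SimpleGraph S.V where
  Adj x y := S.graph.Adj x y ∧ d x = d y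
  symm := ⟨fun _ _ h => ⟨h.1.symm, h.2.symm⟩⟩
  loopless := ⟨fun x h => S.graph.loopless.irrefl x h.1⟩

lemma fiberGraph_le (S : FreeSplitting F) {X : Type} (d : S.V → X) : fiberGraph S d ≤ S.graph :=
  fun _ _ h => h.1

lemma eq_of_fiberGraph_reachable {S : FreeSplitting F} {X : Type} {d : S.V → X} {x y : S.V}
    (h : (fiberGraph S d).Reachable x y) : d x = d y := by
  obtain ⟨p⟩ := h
  induction p with
  | nil => rfl
  | cons hadj p ih => exact hadj.2.trans ih

/-- Equivariance of `d` makes the group act on the fibre graph. -/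
def fiberHom {S T : FreeSplitting F} {d : S.V → T.V}
    (hd : ∀ (γ : F) (x : S.V), d (S.smul γ x) = T.smul γ (d x)) (γ : F) :
    fiberGraph S d →g fiberGraph S d where
  toFun := S.smul γ
  map_rel' := fun {x y} h => ⟨S.adj_smul γ h.1, by rw [hd, hd, h.2]⟩

/-- An equivariant map between free splittings is not constant, as its value would be a global
fixed point. -/
lemma not_constant {S T : FreeSplitting F} {d : S.V → T.V}
    (hd : ∀ (γ : F) (x : S.V), d (S.smul γ x) = T.smul γ (d x)) :
    ¬ ∀ x y, d x = d y := by
  intro hc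
  obtain ⟨x⟩ : Nonempty S.V := S.tree.connected.nonempty
  have huniv := T.minimal {d x} (Set.singleton_nonempty _)
    (fun γ => by rw [Set.image_singleton, ← hd, hc (S.smul γ x) x])
    (by
      have : Nonempty ↑({d x} : Set T.V) := ⟨⟨d x, rfl⟩⟩
      refine ⟨fun a b => ?_⟩
      rw [Subsingleton.elim a b])
  obtain ⟨a, b, hab⟩ := T.nontriv
  have ha : a ∈ ({d x} : Set T.V) := huniv ▸ Set.mem_univ a
  have hb : b ∈ ({d x} : Set T.V) := huniv ▸ Set.mem_univ b
  exact hab (ha.trans hb.symm)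

/-- The quotient of `S` obtained by contracting every edge which an equivariant map `d` sends to a
point. -/
def collapse (S T : FreeSplitting F) (d : S.V → T.V)
    (hd : ∀ (γ : F) (x : S.V), d (S.smul γ x) = T.smul γ (d x)) : FreeSplitting F where
  V := (fiberGraph S d).ConnectedComponent
  graph := contract S.graph (fiberGraph S d)
  nontriv := by
    by_contra hn
    rw [not_nontrivial_iff_subsingleton] at hn
    exact not_constant hd fun x y =>
      eq_of_fiberGraph_reachable (SimpleGraph.ConnectedComponent.exact (hn.elim _ _))
  tree := contract_isTree S.tree (fiberGraph_le S d)
  smul γ := SimpleGraph.ConnectedComponent.map (fiberHom hd γ)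
  one_smul C := by
    induction C using SimpleGraph.ConnectedComponent.ind with | _ x
    exact congrArg _ (S.one_smul x)
  mul_smul γ δ C := by
    induction C using SimpleGraph.ConnectedComponent.ind with | _ x
    exact congrArg _ (S.mul_smul γ δ x)
  adj_smul := by
    rintro γ _ _ ⟨hne, x, y, hxy, rfl, rfl⟩
    refine ⟨fun h => hne ?_, S.smul γ x, S.smul γ y, S.adj_smul γ hxy, rfl, rfl⟩
    have h1 := congrArg (SimpleGraph.ConnectedComponent.map (fiberHom hd γ⁻¹)) h
    have h2 : ∀ z, SimpleGraph.ConnectedComponent.map (fiberHom hd γ⁻¹)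
        (SimpleGraph.ConnectedComponent.map (fiberHom hd γ)
          ((fiberGraph S d).connectedComponentMk z)) =
        (fiberGraph S d).connectedComponentMk z := by
      intro z
      refine congrArg _ ((S.mul_smul γ⁻¹ γ z).symm.trans ?_)
      rw [inv_mul_cancel, S.one_smul]
    rwa [h2, h2] at h1
  minimal := by
    intro A hne hinv hconn
    have hmem : ∀ γ x, (fiberGraph S d).connectedComponentMk x ∈ A →
        (fiberGraph S d).connectedComponentMk (S.smul γ x) ∈ A := by
      intro γ x hx
      rw [← hinv γ]
      exact ⟨_, hx, rfl⟩
    have hB := S.minimal ((fiberGraph S d).connectedComponentMk ⁻¹' A)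
      (by
        obtain ⟨C, hC⟩ := hne
        induction C using SimpleGraph.ConnectedComponent.ind with | _ v
        exact ⟨v, hC⟩)
      (by
        intro γ
        ext x
        constructor
        · rintro ⟨z, hz, rfl⟩
          exact hmem γ z hz
        · intro hx
          refine ⟨S.smul γ⁻¹ x, hmem _ _ hx, ?_⟩
          rw [← S.mul_smul, mul_inv_cancel, S.one_smul])
      (preimage_connected (fiberGraph_le S d) hconn)
    refine Set.eq_univ_of_forall fun C => ?_
    induction C using SimpleGraph.ConnectedComponent.ind with | _ v
    have : v ∈ (fiberGraph S d).connectedComponentMk ⁻¹' A := hB ▸ Set.mem_univ v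
    exact this
  edge_stab := by
    rintro γ _ _ ⟨hne, x, y, hxy, rfl, rfl⟩ h
    have hn : ¬ (fiberGraph S d).Reachable x y :=
      fun hr => hne (SimpleGraph.ConnectedComponent.sound hr)
    have hxy' := S.adj_smul γ hxy
    -- By uniqueness of lifts, `γ` stabilizes the edge `s(x, y)` of `S`.
    have hs : s(x, y) = s(S.smul γ x, S.smul γ y) := by
      rcases h with ⟨h1, h2⟩ | ⟨h1, h2⟩
      · exact edge_eq_of_reachable S.tree.isAcyclic (fiberGraph_le S d) hxy hxy' hn
          (SimpleGraph.ConnectedComponent.exact h1.symm)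
          (SimpleGraph.ConnectedComponent.exact h2.symm)
      · exact (edge_eq_of_reachable S.tree.isAcyclic (fiberGraph_le S d) hxy hxy'.symm hn
          (SimpleGraph.ConnectedComponent.exact h2.symm)
          (SimpleGraph.ConnectedComponent.exact h1.symm)).trans Sym2.eq_swap
    apply S.edge_stab γ x y hxy
    rcases Sym2.eq_iff.1 hs with ⟨h1, h2⟩ | ⟨h1, h2⟩
    · exact Or.inl ⟨h1.symm, h2.symm⟩
    · exact Or.inr ⟨h2.symm, h1.symm⟩

/-- Any equivariant map `d` factors through a collapse map `π` contracting exactly the edges which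
`d` sends to a point. -/
lemma exists_collapse (S T' : FreeSplitting F) (d : S.V → T'.V)
    (hd : ∀ (γ : F) (x : S.V), d (S.smul γ x) = T'.smul γ (d x)) :
    ∃ (T : FreeSplitting F) (π : S.V → T.V), IsCollapseMap S T π ∧ Function.Surjective π ∧
      (∀ x y, π x = π y → d x = d y) ∧
      (∀ x y, π x = π y ↔ (fiberGraph S d).Reachable x y) ∧
      (∀ C D, T.graph.Adj C D → ∃ x y, S.graph.Adj x y ∧ π x = C ∧ π y = D) := by
  refine ⟨collapse S T' d hd, (fiberGraph S d).connectedComponentMk, ⟨⟨fun _ _ => rfl, ?_⟩, ?_⟩,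
    ?_, ?_, ?_, ?_⟩
  · intro x y hxy
    by_cases h : (fiberGraph S d).connectedComponentMk x = (fiberGraph S d).connectedComponentMk y
    · exact Or.inl h
    · exact Or.inr ⟨h, x, y, hxy, rfl, rfl⟩
  · intro x y x' y' hxy hxy' hadj hs
    have hn : ¬ (fiberGraph S d).Reachable x y :=
      fun hr => hadj.1 (SimpleGraph.ConnectedComponent.sound hr)
    rcases Sym2.eq_iff.1 hs with ⟨h1, h2⟩ | ⟨h1, h2⟩
    · exact edge_eq_of_reachable S.tree.isAcyclic (fiberGraph_le S d) hxy hxy' hn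
        (SimpleGraph.ConnectedComponent.exact h1) (SimpleGraph.ConnectedComponent.exact h2)
    · exact (edge_eq_of_reachable S.tree.isAcyclic (fiberGraph_le S d) hxy hxy'.symm hn
        (SimpleGraph.ConnectedComponent.exact h1)
        (SimpleGraph.ConnectedComponent.exact h2)).trans Sym2.eq_swap
  · intro C
    induction C using SimpleGraph.ConnectedComponent.ind with | _ v
    exact ⟨v, rfl⟩
  · exact fun x y h => eq_of_fiberGraph_reachable (SimpleGraph.ConnectedComponent.exact h)
  · exact fun x y => SimpleGraph.ConnectedComponent.eq
  · exact fun C D h => h.2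

/-! ### Compositions along the top row and the combing rectangle -/

/-- The compositions `S i → S K` of a sequence of maps, extended by junk values to `i > K`. -/
lemma exists_compositions (K : ℕ) (S : ℕ → FreeSplitting F)
    (f : ∀ k : ℕ, (S k).V → (S (k+1)).V) :
    ∃ c : ∀ i : ℕ, (S i).V → (S K).V, (∀ x, c K x = x) ∧
      ∀ i, i < K → ∀ x, c i x = c (i+1) (f i x) := by
  -- The sequence is built downwards from `K`: `j` is the number of maps composed.
  have key : ∀ j, ∃ c : ∀ i : ℕ, (S i).V → (S K).V, (∀ x, c K x = x) ∧
      ∀ i, i < K → K ≤ i + j → ∀ x, c i x = c (i+1) (f i x) := by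
    intro j
    induction j with
    | zero =>
      obtain ⟨x₀⟩ : Nonempty (S K).V := (S K).tree.connected.nonempty
      refine ⟨fun i => if h : i = K then fun x => h ▸ x else fun _ => x₀, by simp, ?_⟩
      intro i h1 h2
      omega
    | succ j ih =>
      obtain ⟨c, hc, hc'⟩ := ih
      refine ⟨fun i => if i < K ∧ K = i + (j + 1) then fun x => c (i+1) (f i x) else c i, ?_, ?_⟩
      · simpa using hc
      · intro i h1 h2 x
        have hnot : ¬ (i + 1 < K ∧ K = i + 1 + (j + 1)) := by omega
        simp only [if_neg hnot]
        split_ifs with h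
        · rfl
        · exact hc' i h1 (by omega) x
  obtain ⟨c, hc, hc'⟩ := key K
  exact ⟨c, hc, fun i hi x => hc' i hi (by omega) x⟩

end FreeSplitting

open FreeSplitting in
/-- Proposition 4.2 (Combing by collapse): a foldable sequence followed by a
collapse map extends to a combing rectangle. -/
theorem combing_by_collapse {F : Type} [Group F] (K : ℕ)
    (S : ℕ → FreeSplitting F) (f : ∀ k : ℕ, (S k).V → (S (k+1)).V)
    (hS : IsFoldableSeq K S f)
    (T' : FreeSplitting F) (π' : (S K).V → T'.V)
    (hπ' : IsCollapseMap (S K) T' π') :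
    ∃ (T : ℕ → FreeSplitting F) (g : ∀ k : ℕ, (T k).V → (T (k+1)).V)
      (π : ∀ k : ℕ, (S k).V → (T k).V),
      IsCombingRectangle K S f T g π ∧ T K = T' ∧ HEq (π K) π' := by
  obtain ⟨c, hcK, hc⟩ := exists_compositions K S f
  have hceq : ∀ j i, i + j = K → ∀ (γ : F) (x : (S i).V),
      c i ((S i).smul γ x) = (S K).smul γ (c i x) := by
    intro j
    induction j with
    | zero =>
      intro i hi γ x
      obtain rfl : i = K := hi
      rw [hcK, hcK]
    | succ j ih =>
      intro i hi γ x
      rw [hc i (by omega), hc i (by omega), (hS.1 i (by omega)).1, ih (i+1) (by omega)]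
  have hd : ∀ i, i ≤ K → ∀ (γ : F) (x : (S i).V),
      π' (c i ((S i).smul γ x)) = T'.smul γ (π' (c i x)) := by
    intro i hi γ x
    rw [hceq (K - i) i (by omega), hπ'.1.1]
  have hT : ∀ k, ∃ (T : FreeSplitting F) (π : (S k).V → T.V),
      (k ≤ K → IsCollapseMap (S k) T π ∧
        ∀ x y, (S k).graph.Adj x y → (π x = π y ↔ π' (c k x) = π' (c k y))) ∧
      (k < K → Function.Surjective π ∧
        (∀ x y, π x = π y → (fiberGraph (S k) fun z => π' (c k z)).Reachable x y) ∧
        (∀ C D, T.graph.Adj C D → ∃ x y, (S k).graph.Adj x y ∧ π x = C ∧ π y = D)) ∧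
      (k = K → T = T' ∧ HEq π π') := by
    intro k
    rcases lt_trichotomy k K with h | h | h
    · obtain ⟨T, π, h1, h2, h3, h4, h5⟩ := exists_collapse (S k) T' (fun z => π' (c k z))
        (hd k h.le)
      refine ⟨T, π, fun _ => ⟨h1, fun x y hxy => ⟨h3 x y, fun he => ?_⟩⟩,
        fun _ => ⟨h2, fun x y => (h4 x y).1, h5⟩, fun he => absurd he h.ne⟩
      exact (h4 x y).2 (SimpleGraph.Adj.reachable ⟨hxy, he⟩)
    · subst h
      refine ⟨T', π', fun _ => ⟨hπ', fun x y _ => ?_⟩, fun hlt => absurd hlt (lt_irrefl _),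
        fun _ => ⟨rfl, HEq.rfl⟩⟩
      rw [hcK, hcK]
    · obtain ⟨t⟩ : Nonempty T'.V := T'.tree.connected.nonempty
      exact ⟨T', fun _ => t, fun _ => by omega, fun _ => by omega, fun _ => by omega⟩
  choose T π hle hlt heq using hT
  have hsucc : ∀ k, k < K → ∀ x y, (S k).graph.Adj x y →
      (π (k+1) (f k x) = π (k+1) (f k y) ↔ π' (c k x) = π' (c k y)) := by
    intro k hk x y hxy
    rw [hc k hk, hc k hk]
    rcases (hS.1 k hk).2 hxy with h | h
    · rw [h]; simp
    · exact (hle (k+1) hk).2 _ _ h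
  have hg : ∀ k, ∃ g : (T k).V → (T (k+1)).V,
      k < K → ∀ x, g (π k x) = π (k+1) (f k x) := by
    intro k
    by_cases hk : k < K
    · obtain ⟨hsurj, hreach, -⟩ := hlt k hk
      have hwd : ∀ x y, π k x = π k y → π (k+1) (f k x) = π (k+1) (f k y) := by
        intro x y hxy
        obtain ⟨p⟩ := hreach x y hxy
        clear hxy
        induction p with
        | nil => rfl
        | cons hadj p ih => exact ((hsucc k hk _ _ hadj.1).2 hadj.2).trans ih
      exact ⟨fun t => π (k+1) (f k (hsurj t).choose), fun _ x => hwd _ _ (hsurj (π k x)).choose_spec⟩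
    · obtain ⟨t⟩ : Nonempty (T (k+1)).V := (T (k+1)).tree.connected.nonempty
      exact ⟨fun _ => t, fun h => absurd h hk⟩
  choose g hg using hg
  refine ⟨T, g, π, ⟨hS, ?_, fun k hk => (hle k hk).1, hg, ?_⟩, heq K rfl⟩
  · intro k hk
    obtain ⟨hsurj, -, hedge⟩ := hlt k hk
    have hk1 := (hle (k+1) hk).1.1
    constructor
    · intro γ t
      obtain ⟨x, rfl⟩ := hsurj t
      rw [← (hle k hk.le).1.1.1, hg k hk, hg k hk, (hS.1 k hk).1, hk1.1]
    · intro C D hCD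
      obtain ⟨x, y, hxy, rfl, rfl⟩ := hedge C D hCD
      rw [hg k hk, hg k hk]
      rcases (hS.1 k hk).2 hxy with h | h
      · exact Or.inl (by rw [h])
      · exact hk1.2 h
  · intro k hk
    ext e
    induction e using Sym2.ind with | _ x y
    simp only [collapsedEdges, Set.mem_ofPred_eq, Sym2.map_mk, Sym2.mk_isDiag_iff,
      SimpleGraph.mem_edgeSet]
    constructor
    · rintro ⟨hxy, he⟩
      refine ⟨hxy, ?_, (hsucc k hk x y hxy).2 (((hle k hk.le).2 x y hxy).1 he)⟩
      refine ((hS.1 k hk).2 hxy).resolve_left fun h => ?_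
      refine (hS.2 c hcK hc k hk).2.1 hxy ?_
      rw [hc k hk, hc k hk, h]
    · rintro ⟨hxy, -, he⟩
      exact ⟨hxy, ((hle k hk.le).2 x y hxy).2 ((hsucc k hk x y hxy).1 he)⟩
end

section
/- (Proposition 4.3, Combing by expansion) Let S_0 → ⋯ → S_K be a foldable sequence of free splittings of F with maps f_k : S_{k-1} → S_k, let T' be a free splitting of F, and let π' : T' → S_K be a collapse map. Then there exist free splittings T_0, …, T_K with T_K = T', maps g_k : T_{k-1} → T_k forming a foldable sequence (each composition g_K ∘ ⋯ ∘ g_{i+1} : T_i → T_K is foldable), and collapse maps π_k : T_k → S_k with collapsed subgraphs σ_k ⊆ T_k and with π_K = π', such that f_k ∘ π_{k-1} = π_k ∘ g_k for k = 1,…,K and σ_{k-1} equals the set of edges of T_{k-1} whose image under g_k is an edge of σ_k. -/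
namespace Combing

/-! ### Separation in trees -/

section Graph

variable {V W : Type} {G : SimpleGraph V} {R : SimpleGraph W}

/-- `Av G z u v`: some walk from `u` to `v` avoids `z`. In a tree, `¬ Av G z u v` says that
`z` lies on the segment `[u, v]`. -/
def Av (G : SimpleGraph V) (z u v : V) : Prop := ∃ w : G.Walk u v, z ∉ w.support

lemma Av.symm {z u v : V} (h : Av G z u v) : Av G z v u := by
  obtain ⟨w, hw⟩ := h
  exact ⟨w.reverse, by simpa using hw⟩

lemma Av.trans {z u v w : V} (h : Av G z u v) (h' : Av G z v w) : Av G z u w := by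
  obtain ⟨p, hp⟩ := h
  obtain ⟨q, hq⟩ := h'
  exact ⟨p.append q, by simp [SimpleGraph.Walk.mem_support_append_iff, hp, hq]⟩

lemma Av.ne_left {z u v : V} (h : Av G z u v) : u ≠ z := by
  obtain ⟨p, hp⟩ := h
  rintro rfl
  exact hp p.start_mem_support

lemma Av.ne_right {z u v : V} (h : Av G z u v) : v ≠ z := h.symm.ne_left

lemma av_refl {z u : V} (h : u ≠ z) : Av G z u u := ⟨.nil, by simpa using h.symm⟩

lemma av_adj {z u v : V} (h : G.Adj u v) (hu : u ≠ z) (hv : v ≠ z) : Av G z u v :=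
  ⟨.cons h .nil, by simp [hu.symm, hv.symm]⟩

lemma Av.induct {z u v : V} (h : Av G z u v) (P : V → Prop) (hu : P u)
    (hs : ∀ a b, G.Adj a b → a ≠ z → b ≠ z → P a → P b) : P v := by
  obtain ⟨p, hp⟩ := h
  induction p with
  | nil => exact hu
  | cons hadj q ih =>
    simp only [SimpleGraph.Walk.support_cons, List.mem_cons, not_or] at hp
    refine ih (hs _ _ hadj (Ne.symm hp.1) ?_ hu) hp.2
    rintro rfl
    exact hp.2 q.start_mem_support

lemma preconn_induct (hG : G.Preconnected) {u v : V} (P : V → Prop) (hu : P u)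
    (hs : ∀ a b, G.Adj a b → P a → P b) : P v := by
  obtain ⟨p⟩ := hG u v
  induction p with
  | nil => exact hu
  | cons hadj q ih => exact ih (hs _ _ hadj hu)

lemma av_or (hG : G.Preconnected) {p m : V} (h : p ≠ m) (b : V) : Av G m p b ∨ Av G p m b := by
  refine preconn_induct hG (u := m) (fun b => Av G m p b ∨ Av G p m b)
    (Or.inr (av_refl h.symm)) ?_
  rintro a b hab (h1 | h1)
  · by_cases hb : b = m
    · subst hb; exact Or.inr (av_refl h.symm)
    · exact Or.inl (h1.trans (av_adj hab h1.ne_right hb))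
  · by_cases hb : b = p
    · subst hb; exact Or.inl (av_refl h)
    · exact Or.inr (h1.trans (av_adj hab h1.ne_right hb))

lemma av_towards (hG : G.Preconnected) {z u : V} (h : u ≠ z) : ∃ p, G.Adj z p ∧ Av G z p u := by
  have := preconn_induct hG (u := z) (v := u) (fun u => u = z ∨ ∃ p, G.Adj z p ∧ Av G z p u)
    (Or.inl rfl) (by
      rintro a b hab h1
      by_cases hb : b = z
      · exact Or.inl hb
      · rcases h1 with rfl | ⟨p, hp, hpa⟩
        · exact Or.inr ⟨b, hab, av_refl hb⟩
        · exact Or.inr ⟨p, hp, hpa.trans (av_adj hab hpa.ne_right hb)⟩)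
  exact this.resolve_left h

lemma not_reach (hG : G.IsAcyclic) {u v : V} (h : G.Adj u v) :
    ¬ (G \ SimpleGraph.fromEdgeSet {s(u, v)}).Reachable u v :=
  SimpleGraph.isBridge_iff.1 (SimpleGraph.isAcyclic_iff_forall_adj_isBridge.1 hG h)

lemma adj_sdiff {u v a b : V} (h : G.Adj a b) (hne : s(a, b) ≠ s(u, v)) :
    (G \ SimpleGraph.fromEdgeSet {s(u, v)}).Adj a b := by
  simp only [SimpleGraph.sdiff_adj, SimpleGraph.fromEdgeSet_adj, Set.mem_singleton_iff]
  exact ⟨h, fun h' => hne h'.1⟩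

lemma Av.reach {z a b : V} (h : Av G z a b) (p : V) :
    (G \ SimpleGraph.fromEdgeSet {s(z, p)}).Reachable a b := by
  refine h.induct (fun b => (G \ SimpleGraph.fromEdgeSet {s(z, p)}).Reachable a b) (.refl a) ?_
  intro c d hcd hc hd hr
  refine hr.trans (SimpleGraph.Adj.reachable (adj_sdiff hcd ?_))
  intro h
  have : z ∈ s(c, d) := by rw [h]; simp
  rcases Sym2.mem_iff.1 this with rfl | rfl
  · exact hc rfl
  · exact hd rfl

/-- The two sides of an edge of a tree are disjoint. -/
lemma Av.not_swap (hG : G.IsAcyclic) {z p u : V} (h : G.Adj z p) (h1 : Av G z p u) :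
    ¬ Av G p z u := by
  intro h2
  have e2 := h2.reach z
  rw [Sym2.eq_swap] at e2
  exact not_reach hG h (e2.trans (h1.reach p).symm)

/-- Distinct neighbours of a vertex of a tree lie in distinct directions. -/
lemma Av.eq_of_adj (hG : G.IsAcyclic) {z p q : V} (hp : G.Adj z p) (hq : G.Adj z q)
    (h : Av G z p q) : p = q := by
  by_contra hne
  refine not_reach hG hp (SimpleGraph.Reachable.trans
    (SimpleGraph.Adj.reachable (adj_sdiff hq ?_)) (h.reach p).symm)
  intro h
  rcases Sym2.eq_iff.1 h with h | h
  · exact hne h.2.symm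
  · exact hq.ne h.2.symm

lemma av_of_dist_le (hG : G.Preconnected) {m z p : V} (h : G.Adj z p)
    (hd : G.dist m p ≤ G.dist m z) : Av G z p m := by
  classical
  obtain ⟨w, hw⟩ := (hG p m).exists_walk_length_eq_dist
  refine ⟨w, fun hz => ?_⟩
  have h1 : w.length = (w.takeUntil z hz).length + (w.dropUntil z hz).length := by
    rw [← SimpleGraph.Walk.length_append, w.take_spec hz]
  have h2 : G.dist z m ≤ (w.dropUntil z hz).length := SimpleGraph.dist_le _
  have h3 : (w.takeUntil z hz).length ≠ 0 := fun h0 =>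
    h.ne (SimpleGraph.Walk.eq_of_length_eq_zero h0).symm
  rw [SimpleGraph.dist_comm (u := m), SimpleGraph.dist_comm (u := m)] at hd
  omega

lemma Av.dist_lt (hG : G.IsTree) {m z p : V} (h : G.Adj z p) (h1 : Av G z p m) :
    G.dist m p < G.dist m z := by
  by_contra hd
  exact h1.not_swap hG.isAcyclic h
    (av_of_dist_le hG.connected.preconnected h.symm (not_lt.1 hd))

/-- Graph form of a collapse map: adjacent vertices have equal or adjacent images, and each edge
of the target is hit by at most one edge. -/
def Coll (G : SimpleGraph V) (R : SimpleGraph W) (π : V → W) : Prop :=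
  (∀ ⦃x y⦄, G.Adj x y → π x = π y ∨ R.Adj (π x) (π y)) ∧
  ∀ ⦃x y u v⦄, G.Adj x y → G.Adj u v → R.Adj (π x) (π y) →
    s(π x, π y) = s(π u, π v) → s(x, y) = s(u, v)

/-- A simplicial map from a connected graph to a tree crosses each edge between two of its
values. -/
lemma cross (hG : G.Preconnected) (hR : R.IsAcyclic) {π : V → W}
    (hπ : ∀ ⦃x y⦄, G.Adj x y → π x = π y ∨ R.Adj (π x) (π y)) {u v : V} (h : R.Adj (π u) (π v)) :
    ∃ a b, G.Adj a b ∧ π a = π u ∧ π b = π v := by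
  by_contra! hne
  refine not_reach hR h (preconn_induct hG (u := u) (v := v) (fun w =>
    (R \ SimpleGraph.fromEdgeSet {s(π u, π v)}).Reachable (π u) (π w)) (.refl _) ?_)
  intro a b hab hr
  rcases hπ hab with h1 | h1
  · rwa [← h1]
  · refine hr.trans (SimpleGraph.Adj.reachable (adj_sdiff h1 ?_))
    intro h2
    rcases Sym2.eq_iff.1 h2 with h2 | h2
    · exact hne _ _ hab h2.1 h2.2
    · exact hne _ _ hab.symm h2.2 h2.1

/-- The fibres of a collapse map are connected, in the form of an induction principle. -/
lemma fiber_induct (hG : G.Preconnected) (hR : R.IsAcyclic) {π : V → W} (hπ : Coll G R π)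
    {z y : V} (h : π z = π y) (P : V → Prop) (hz : P z)
    (hs : ∀ a b, G.Adj a b → π a = π y → π b = π y → P a → P b) : P y := by
  obtain ⟨w, hw⟩ := (hG z y).exists_isPath
  induction w with
  | nil => exact hz
  | @cons u u' y hadj q ih =>
    rw [SimpleGraph.Walk.cons_isPath_iff] at hw
    by_cases he : π u' = π y
    · exact ih he (hs _ _ hadj h he hz) hs hw.1
    · exfalso
      have hne : π u ≠ π u' := by rw [h]; exact Ne.symm he
      have hRadj := (hπ.1 hadj).resolve_left hne
      refine not_reach hR hRadj (SimpleGraph.Reachable.symm ?_)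
      have hav : Av G u u' y := ⟨q, hw.2⟩
      rw [show (π u) = π y from h]
      refine hav.induct (fun w => (R \ SimpleGraph.fromEdgeSet {s(π y, π u')}).Reachable
        (π u') (π w)) (.refl _) ?_
      intro a b hab ha hb hr
      rcases hπ.1 hab with h1 | h1
      · rwa [← h1]
      · refine hr.trans (SimpleGraph.Adj.reachable (adj_sdiff h1 ?_))
        intro h2
        rw [← h] at h2
        have h3 := hπ.2 hab hadj h1 h2
        have : u ∈ s(a, b) := by rw [h3]; simp
        rcases Sym2.mem_iff.1 this with rfl | rfl
        · exact ha rfl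
        · exact hb rfl

lemma fiber_towards (hG : G.Preconnected) (hR : R.IsAcyclic) {π : V → W} (hπ : Coll G R π)
    {z y : V} (h : π z = π y) (hne : y ≠ z) : ∃ p, G.Adj z p ∧ π p = π z ∧ Av G z p y := by
  have := fiber_induct hG hR hπ h
    (fun u => u = z ∨ ∃ p, G.Adj z p ∧ π p = π z ∧ Av G z p u) (Or.inl rfl) (by
      rintro a b hab ha hb h1
      by_cases hbz : b = z
      · exact Or.inl hbz
      · rcases h1 with rfl | ⟨p, hp, hpp, hpa⟩
        · exact Or.inr ⟨b, hab, hb.trans ha.symm, av_refl hbz⟩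
        · exact Or.inr ⟨p, hp, hpp, hpa.trans (av_adj hab hpa.ne_right hbz)⟩)
  exact this.resolve_left hne

/-! ### Hulls and hairs -/

/-- `z` lies in the convex hull of `A`. -/
def Hull (G : SimpleGraph V) (A : Set V) (z : V) : Prop := ∃ b ∈ A, ∃ c ∈ A, ¬ Av G z b c

/-- `A` has at least two points besides `a`, and `z` does not lie in the convex hull of
`A \ {a}`. For `z` in the hull of `A`, this says that `z` lies on the part of the hull between
`a` and the first branch point seen from `a`. -/
def Thin (G : SimpleGraph V) (A : Set V) (a z : V) : Prop :=
  (∃ b ∈ A, ∃ c ∈ A, b ≠ a ∧ c ≠ a ∧ b ≠ c) ∧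
    ∀ b ∈ A, ∀ c ∈ A, b ≠ a → c ≠ a → Av G z b c

lemma Hull.mono {A B : Set V} (hAB : A ⊆ B) {z : V} (h : Hull G A z) : Hull G B z := by
  obtain ⟨b, hb, c, hc, h⟩ := h
  exact ⟨b, hAB hb, c, hAB hc, h⟩

lemma Hull.exists_sep {A : Set V} {z : V} (h : Hull G A z) (a : V) : ∃ b ∈ A, ¬ Av G z a b := by
  obtain ⟨b, hb, c, hc, h⟩ := h
  by_contra! hall
  exact h ((hall b hb).symm.trans (hall c hc))

lemma Thin.mem {A B : Set V} (hAB : A ⊆ B) {a z : V} (hh : Hull G A z) (h : Thin G B a z) :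
    a ∈ A := by
  obtain ⟨b, hb, c, hc, hbc⟩ := hh
  by_contra ha
  exact hbc (h.2 b (hAB hb) c (hAB hc) (fun h => ha (h ▸ hb)) (fun h => ha (h ▸ hc)))

/-- At a point of the hull which is thin for `a`, the point `a` is separated from all others. -/
lemma Thin.sep {A : Set V} {a z b : V} (hh : Hull G A z) (h : Thin G A a z) (hb : b ∈ A)
    (hba : b ≠ a) : ¬ Av G z a b := by
  intro hab
  obtain ⟨c, hc, hac⟩ := hh.exists_sep a
  by_cases hca : c = a
  · subst hca
    exact hac (hab.trans hab.symm)
  · exact hac (hab.trans (h.2 b hb c hc hba hca))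

lemma Thin.third {A : Set V} {a z : V} (h : Thin G A a z) (a' : V) :
    ∃ c ∈ A, c ≠ a ∧ c ≠ a' := by
  obtain ⟨⟨b, hb, c, hc, h1, h2, h3⟩, -⟩ := h
  by_cases hb' : b = a'
  · exact ⟨c, hc, h2, fun h => h3 (hb'.trans h.symm)⟩
  · exact ⟨b, hb, h1, hb'⟩

lemma Thin.unique {A B : Set V} (hAB : A ⊆ B) {a a' z : V} (hh : Hull G A z)
    (h : Thin G A a z) (h' : Thin G B a' z) : a = a' := by
  by_contra hne
  obtain ⟨c, hc, hca, hca'⟩ := h.third a'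
  have key : ∀ p ∈ A, Av G z p c := by
    intro p hp
    by_cases hpa : p = a
    · exact h'.2 p (hAB hp) c (hAB hc) (hpa ▸ hne) hca'
    · exact h.2 p hp c hc hpa hca
  obtain ⟨p, hp, q, hq, hpq⟩ := hh
  exact hpq ((key p hp).trans (key q hq).symm)

lemma Hull.step (hG : G.IsTree) {A : Set V} {a z p : V} (hh : Hull G A z) (ha : a ∈ A)
    (hzp : G.Adj z p) (hp : Av G z p a) : Hull G A p := by
  obtain ⟨b, hb, hab⟩ := hh.exists_sep a
  refine ⟨a, ha, b, hb, fun h => ?_⟩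
  have h1 : Av G p z b := (av_or hG.connected.preconnected hzp.ne b).resolve_right
    fun h2 => hab (hp.symm.trans h2)
  exact hp.not_swap hG.isAcyclic hzp (h1.trans h.symm)

/-- Moving towards `a` from a point which is thin for `a` or for nothing, the only hair one can
enter is the one of `a`. -/
lemma Thin.step (hG : G.IsTree) {A : Set V} {a a' z p : V} (hh : Hull G A z) (ha : a ∈ A)
    (hzp : G.Adj z p) (hp : Av G z p a) (hz : Thin G A a z ∨ ∀ b, ¬ Thin G A b z)
    (h : Thin G A a' p) : a' = a := by
  by_contra hne
  obtain ⟨c, hc, hca', hcz⟩ : ∃ c ∈ A, c ≠ a' ∧ ¬ Av G z p c := by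
    rcases hz with hz | hz
    · obtain ⟨c, hc, hca, hca'⟩ := hz.third a'
      exact ⟨c, hc, hca', fun h => hz.sep hh hc hca (hp.symm.trans h)⟩
    · have h1 := hz a'
      simp only [Thin, not_and, not_forall] at h1
      obtain ⟨b, hb, c, hc, hba, hca, hbc⟩ := h1 h.1
      by_cases hpb : Av G z p b
      · exact ⟨c, hc, hca, fun h => hbc (hpb.symm.trans h)⟩
      · exact ⟨b, hb, hba, hpb⟩
  have h1 : Av G p z c := (av_or hG.connected.preconnected hzp.ne c).resolve_right hcz
  exact hp.not_swap hG.isAcyclic hzp (h1.trans (h.2 c hc a ha hca' (Ne.symm hne)))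

/-- Beyond a thin point, in the direction of `a`, every point is thin for `a`. -/
lemma Thin.beyond (hG : G.Preconnected) {A : Set V} {a z p : V} (hh : Hull G A z)
    (h : Thin G A a z) (hp : Av G z p a) : Thin G A a p := by
  refine ⟨h.1, fun b hb c hc hba hca => ?_⟩
  have key : ∀ b ∈ A, b ≠ a → Av G p z b := fun b hb hba =>
    (av_or hG hp.ne_left.symm b).resolve_right
      fun h2 => h.sep hh hb hba (hp.symm.trans h2)
  exact (key b hb hba).symm.trans (key c hc hca)

/-- A point between two points which are not thin is not thin. -/
lemma Thin.not_between (hG : G.IsTree) {A : Set V} {a z m p : V} (hz : ¬ Thin G A a z)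
    (hm : ¬ Thin G A a m) (hzp : G.Adj z p) (hp : Av G z p m) (h : Thin G A a p) : False := by
  have key : ∀ q, q ≠ p → ¬ Thin G A a q → ∃ b ∈ A, b ≠ a ∧ Av G p q b := by
    intro q hqp hq
    simp only [Thin, not_and, not_forall] at hq
    obtain ⟨b, hb, c, hc, hba, hca, hbc⟩ := hq h.1
    by_cases hpb : Av G q p b
    · exact ⟨c, hc, hca, (av_or hG.connected.preconnected hqp c).resolve_right
        fun h => hbc (hpb.symm.trans h)⟩
    · exact ⟨b, hb, hba, (av_or hG.connected.preconnected hqp b).resolve_right hpb⟩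
  have hmp : m ≠ p := by rintro rfl; exact hm h
  obtain ⟨b, hb, hba, h1⟩ := key z hzp.ne hz
  obtain ⟨c, hc, hca, h2⟩ := key m hmp hm
  exact hp.not_swap hG.isAcyclic hzp ((h1.trans (h.2 b hb c hc hba hca)).trans h2.symm)

/-- Adjacent thin points of the hull lie on the same hair. -/
lemma Thin.adj (hG : G.IsTree) {A : Set V} {a a' z p : V} (hh : Hull G A z) (hh' : Hull G A p)
    (hzp : G.Adj z p) (h : Thin G A a z) (h' : Thin G A a' p) : a = a' := by
  by_contra hne
  have ha : a ∈ A := h.mem subset_rfl hh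
  have ha' : a' ∈ A := h'.mem subset_rfl hh'
  have hpre := hG.connected.preconnected
  obtain ⟨c, hc, hca, hca'⟩ := h.third a'
  have h1 : Av G p z a := by
    refine (av_or hpre hzp.ne a).resolve_right fun h1 => ?_
    have : ∀ b ∈ A, b ≠ a → Av G p z b := fun b hb hba =>
      (av_or hpre hzp.ne b).resolve_right fun h2 => h.sep hh hb hba (h1.symm.trans h2)
    exact h'.sep hh' hc hca' ((this a' ha' (Ne.symm hne)).symm.trans (this c hc hca))
  have h2 : Av G z p a' := by
    refine (av_or hpre hzp.ne a').resolve_left fun h2 => ?_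
    have : ∀ b ∈ A, b ≠ a' → Av G z p b := fun b hb hba =>
      (av_or hpre hzp.ne b).resolve_left fun h3 => h'.sep hh' hb hba (h2.symm.trans h3)
    exact h.sep hh hc hca ((this a ha hne).symm.trans (this c hc hca'))
  rcases (av_or hpre hzp.ne c).symm with h3 | h3
  · exact h3.not_swap hG.isAcyclic hzp (h1.trans (h'.2 a ha c hc hne hca'))
  · exact (h2.trans (h.2 a' ha' c hc (Ne.symm hne) hca)).not_swap hG.isAcyclic hzp h3

/-- Existence of medians in trees: the point of `[a, b]` closest to `c`. -/
lemma exists_median (hG : G.IsTree) {a b c : V} :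
    ∃ m, ¬ Av G m a b ∧ ¬ Av G m b c ∧ ¬ Av G m a c := by
  classical
  have hpre := hG.connected.preconnected
  have hex : ∃ n, ∃ m, ¬ Av G m a b ∧ G.dist c m = n := ⟨_, a, fun h => h.ne_left rfl, rfl⟩
  obtain ⟨m, hm, hd⟩ := Nat.find_spec hex
  have hmin : ∀ p, G.dist c p < G.dist c m → Av G p a b := by
    intro p hp
    by_contra h
    exact Nat.find_min hex (hd ▸ hp) ⟨p, h, rfl⟩
  have key : ∀ a b, ¬ Av G m a b → (∀ p, G.dist c p < G.dist c m → Av G p a b) →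
      ¬ Av G m a c := by
    intro a b hm hmin hac
    obtain ⟨p, hp, hpc⟩ := av_towards hpre hac.ne_right
    have h1 := hmin p (hpc.dist_lt hG hp)
    have h2 : Av G p m b := (av_or hpre hp.ne b).resolve_right
      fun h => hm (hac.trans (hpc.symm.trans h))
    exact (hpc.trans hac.symm).not_swap hG.isAcyclic hp (h2.trans h1.symm)
  exact ⟨m, hm, key b a (fun h => hm h.symm) (fun p hp => (hmin p hp).symm), key a b hm hmin⟩

end Graph

/-! ### Equivariance and edge lifts -/

section Splitting

open FreeSplitting

variable {F : Type} [Group F] {S R T' : FreeSplitting F}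

lemma smul_inv_smul (T : FreeSplitting F) (γ : F) (v : T.V) : T.smul γ (T.smul γ⁻¹ v) = v := by
  rw [← T.mul_smul, mul_inv_cancel, T.one_smul]

lemma inv_smul_smul (T : FreeSplitting F) (γ : F) (v : T.V) : T.smul γ⁻¹ (T.smul γ v) = v := by
  rw [← T.mul_smul, inv_mul_cancel, T.one_smul]

lemma smul_inj (T : FreeSplitting F) (γ : F) {v w : T.V} (h : T.smul γ v = T.smul γ w) :
    v = w := by
  rw [← inv_smul_smul T γ v, h, inv_smul_smul]

lemma adj_smul_iff (T : FreeSplitting F) (γ : F) {v w : T.V} :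
    T.graph.Adj (T.smul γ v) (T.smul γ w) ↔ T.graph.Adj v w := by
  refine ⟨fun h => ?_, fun h => T.adj_smul γ h⟩
  simpa [inv_smul_smul] using T.adj_smul γ⁻¹ h

lemma Av.smul (T : FreeSplitting F) (γ : F) {z u v : T.V} (h : Av T.graph z u v) :
    Av T.graph (T.smul γ z) (T.smul γ u) (T.smul γ v) := by
  refine h.induct (fun v => Av T.graph (T.smul γ z) (T.smul γ u) (T.smul γ v))
    (av_refl fun heq => h.ne_left (smul_inj T γ heq)) ?_
  intro a b hab ha hb h1
  exact h1.trans (av_adj (T.adj_smul γ hab) h1.ne_right fun heq => hb (smul_inj T γ heq))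

/-- Invariant connected vertex sets map onto the target. -/
lemma image_eq_univ {V : Type} {G : SimpleGraph V} {sm : F → V → V} {T : FreeSplitting F}
    {φ : V → T.V} (hφ₁ : ∀ γ x, φ (sm γ x) = T.smul γ (φ x))
    (hφ₂ : ∀ ⦃x y⦄, G.Adj x y → φ x = φ y ∨ T.graph.Adj (φ x) (φ y)) (A : Set V)
    (hne : A.Nonempty) (hinv : ∀ γ, sm γ '' A = A)
    (hconn : (G.induce A).Preconnected) : φ '' A = Set.univ := by
  refine T.minimal _ (hne.image φ) (fun γ => ?_) ?_
  · ext y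
    constructor
    · rintro ⟨_, ⟨x, hx, rfl⟩, rfl⟩
      exact ⟨sm γ x, hinv γ ▸ ⟨x, hx, rfl⟩, hφ₁ γ x⟩
    · rintro ⟨x, hx, rfl⟩
      rw [← hinv γ] at hx
      obtain ⟨x, hx, rfl⟩ := hx
      exact ⟨φ x, ⟨x, hx, rfl⟩, (hφ₁ γ x).symm⟩
  · obtain ⟨x₀, hx₀⟩ := hne
    have : Nonempty (φ '' A : Set T.V) := ⟨⟨φ x₀, x₀, hx₀, rfl⟩⟩
    refine ⟨?_⟩
    rintro ⟨_, u, hu, rfl⟩ ⟨_, v, hv, rfl⟩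
    refine preconn_induct hconn (u := ⟨u, hu⟩) (v := ⟨v, hv⟩) (fun w =>
      (T.graph.induce (φ '' A)).Reachable ⟨φ u, u, hu, rfl⟩ ⟨φ w, w, w.2, rfl⟩) (.refl _) ?_
    rintro ⟨a, ha⟩ ⟨b, hb⟩ hab hr
    refine hr.trans ?_
    rcases hφ₂ (show G.Adj a b from hab) with h | h
    · have : (⟨φ a, a, ha, rfl⟩ : (φ '' A : Set T.V)) = ⟨φ b, b, hb, rfl⟩ := Subtype.ext h
      exact this ▸ .refl _
    · exact SimpleGraph.Adj.reachable (by simpa using h)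

lemma preconnected_induce_univ {V : Type} {G : SimpleGraph V} (h : G.Preconnected) :
    (G.induce Set.univ).Preconnected := by
  rintro ⟨u, hu⟩ ⟨v, hv⟩
  refine preconn_induct h (u := u) (v := v)
    (fun w => (G.induce Set.univ).Reachable ⟨u, hu⟩ ⟨w, trivial⟩) (.refl _) ?_
  intro a b hab hr
  exact hr.trans (SimpleGraph.Adj.reachable (by simpa using hab))

lemma surj_of_fsMap {S T : FreeSplitting F} {φ : S.V → T.V} (hφ : IsFSMap S T φ) :
    Function.Surjective φ := by
  have := S.nontriv
  have h := image_eq_univ hφ.1 hφ.2 Set.univ Set.univ_nonempty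
    (fun γ => Set.image_univ_of_surjective fun v => ⟨_, smul_inv_smul S γ v⟩)
    (preconnected_induce_univ S.tree.connected.preconnected)
  rwa [Set.image_univ, Set.range_eq_univ] at h

lemma coll_of_isCollapseMap {S T : FreeSplitting F} {φ : S.V → T.V} (h : IsCollapseMap S T φ) :
    Coll S.graph T.graph φ := ⟨h.1.2, h.2⟩

open Classical in
/-- For adjacent `v, w`, the endpoint over `w` of the unique edge of `T'` mapped by the collapse
map `π` onto the edge `{v, w}`; an arbitrary vertex if there is no such edge. -/
noncomputable def lam (π : T'.V → R.V) (v w : R.V) : T'.V :=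
  if h : ∃ p : T'.V × T'.V, T'.graph.Adj p.1 p.2 ∧ π p.1 = v ∧ π p.2 = w then h.choose.2
  else T'.nontriv.to_nonempty.some

section lam

variable {π : T'.V → R.V} (hπ : IsCollapseMap T' R π)
include hπ

lemma lam_unique {v w : R.V} (h : R.graph.Adj v w) {z z' : T'.V} (hz : T'.graph.Adj z z')
    (h1 : π z = v) (h2 : π z' = w) : z' = lam π v w := by
  have hex : ∃ p : T'.V × T'.V, T'.graph.Adj p.1 p.2 ∧ π p.1 = v ∧ π p.2 = w :=
    ⟨(z, z'), hz, h1, h2⟩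
  rw [lam, dif_pos hex]
  obtain ⟨h3, h4, h5⟩ := hex.choose_spec
  have := hπ.2 hz h3 (by rwa [h1, h2]) (by rw [h1, h2, h4, h5])
  rcases Sym2.eq_iff.1 this with h6 | h6
  · exact h6.2
  · exfalso
    apply h.ne
    rw [← h2, h6.2, h4]

lemma exists_lift {v w : R.V} (h : R.graph.Adj v w) :
    ∃ z z', T'.graph.Adj z z' ∧ π z = v ∧ π z' = w := by
  obtain ⟨a, rfl⟩ := surj_of_fsMap hπ.1 v
  obtain ⟨b, rfl⟩ := surj_of_fsMap hπ.1 w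
  exact cross T'.tree.connected.preconnected R.tree.isAcyclic hπ.1.2 h

lemma pi_lam {v w : R.V} (h : R.graph.Adj v w) : π (lam π v w) = w := by
  obtain ⟨z, z', hz, h1, h2⟩ := exists_lift hπ h
  rw [← lam_unique hπ h hz h1 h2, h2]

lemma lam_adj {v w : R.V} (h : R.graph.Adj v w) : T'.graph.Adj (lam π w v) (lam π v w) := by
  obtain ⟨z, z', hz, h1, h2⟩ := exists_lift hπ h
  rwa [← lam_unique hπ h hz h1 h2, ← lam_unique hπ h.symm hz.symm h2 h1]

lemma lam_smul {v w : R.V} (h : R.graph.Adj v w) (γ : F) :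
    lam π (R.smul γ v) (R.smul γ w) = T'.smul γ (lam π v w) := by
  refine (lam_unique hπ (R.adj_smul γ h) (T'.adj_smul γ (lam_adj hπ h)) ?_ ?_).symm
  · rw [hπ.1.1, pi_lam hπ h.symm]
  · rw [hπ.1.1, pi_lam hπ h]

/-- The first step from a point of a fibre towards an adjacent edge stays in the fibre, unless it
crosses that edge. -/
lemma lam_towards {v w : R.V} (h : R.graph.Adj v w) {z : T'.V} (hz : π z = v) :
    ∃ p, T'.graph.Adj z p ∧ Av T'.graph z p (lam π v w) ∧
      (π p = v ∨ p = lam π v w ∧ z = lam π w v) := by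
  have hadj := lam_adj hπ h
  have hne : lam π v w ≠ z := fun h' => h.ne (by rw [← hz, ← h', pi_lam hπ h])
  by_cases hzy : lam π w v = z
  · rw [hzy] at hadj
    exact ⟨_, hadj, av_refl hne, Or.inr ⟨rfl, hzy.symm⟩⟩
  · obtain ⟨p, hp, hp1, hp2⟩ := fiber_towards T'.tree.connected.preconnected R.tree.isAcyclic
      (coll_of_isCollapseMap hπ) (show π z = π (lam π w v) by rw [hz, pi_lam hπ h.symm]) hzy
    exact ⟨p, hp, hp2.trans (av_adj hadj hzy hne), Or.inl (hp1.trans hz)⟩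

lemma lam_sep {v w w' : R.V} (h : R.graph.Adj v w) (h' : R.graph.Adj v w') (hne : w ≠ w') :
    ¬ Av T'.graph (lam π w v) (lam π v w) (lam π v w') := by
  intro hav
  obtain ⟨p, hp, hp1, hp2⟩ := lam_towards hπ h' (pi_lam hπ h.symm)
  have : p = lam π v w := (hp1.trans hav.symm).eq_of_adj T'.tree.isAcyclic hp (lam_adj hπ h)
  have h3 : π p = w := by rw [this, pi_lam hπ h]
  rcases hp2.symm with ⟨hp2, -⟩ | hp2
  · exact hne (by rw [← h3, hp2, pi_lam hπ h'])
  · exact h.ne (hp2.symm.trans h3)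

/-- Two edges leaving a fibre are joined outside any given point off the fibre. -/
lemma lam_off_fiber {v w w' : R.V} (h : R.graph.Adj v w) (h' : R.graph.Adj v w') {m : T'.V}
    (hm : π m ≠ v) (h1 : m ≠ lam π v w) (h2 : m ≠ lam π v w') :
    Av T'.graph m (lam π v w) (lam π v w') := by
  have e1 := pi_lam hπ h.symm
  have e2 := pi_lam hπ h'.symm
  have n1 : lam π w v ≠ m := fun h => hm (h ▸ e1)
  have n2 : lam π w' v ≠ m := fun h => hm (h ▸ e2)
  have h3 : Av T'.graph m (lam π w v) (lam π w' v) := by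
    refine fiber_induct T'.tree.connected.preconnected R.tree.isAcyclic
      (coll_of_isCollapseMap hπ) (e1.trans e2.symm) (fun u => Av T'.graph m (lam π w v) u)
      (av_refl n1) ?_
    intro a b hab ha hb hr
    refine hr.trans (av_adj hab hr.ne_right ?_)
    rintro rfl
    exact hm (hb.trans e2)
  exact ((av_adj (lam_adj hπ h).symm h1.symm n1).trans h3).trans
    (av_adj (lam_adj hπ h') n2 h2.symm)

end lam

/-! ### The unfolded fibre product -/

/-- The gates at `x`: endpoints outside the fibre over `φ x` of the lifts to `T'` of the edges
`φ e`, for `e` an edge of `S` at `x`. -/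
def Gt (φ : S.V → R.V) (π : T'.V → R.V) (x : S.V) : Set T'.V :=
  (fun e => lam π (φ x) (φ e)) '' S.graph.neighborSet x

lemma mem_Gt {φ : S.V → R.V} {π : T'.V → R.V} {x e : S.V} (h : S.graph.Adj x e) :
    lam π (φ x) (φ e) ∈ Gt φ π x := ⟨e, h, rfl⟩

/-- Vertices of the unfolded fibre product of `φ : S → R` and `π : T' → R`: a vertex `(x, z)` of
the minimal subtree of the fibre product, together with a tag `t`. If `z` is thin for a gate
`a` at `x`, the tag is a neighbour of `x` giving that gate, so that there is one copy of `(x, z)`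
for each edge in the gate. Otherwise the tag carries no information, which is encoded by `t = x`. -/
@[ext] structure Vert (φ : S.V → R.V) (π : T'.V → R.V) where
  x : S.V
  z : T'.V
  t : S.V
  hz : π z = φ x
  hull : Hull T'.graph (Gt φ π x) z
  ht : (t = x ∧ ∀ a, ¬ Thin T'.graph (Gt φ π x) a z) ∨
    (S.graph.Adj x t ∧ Thin T'.graph (Gt φ π x) (lam π (φ x) (φ t)) z)

/-- The graph of the unfolded fibre product: an edge is either over an edge of `T'` in a fibre,
with compatible tags, or over an edge of `S`, in which case the tags must be trivial or equal to
that edge. -/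
def gr (φ : S.V → R.V) (π : T'.V → R.V) : SimpleGraph (Vert φ π) where
  Adj w w' := T'.graph.Adj w.z w'.z ∧
    ((w.x = w'.x ∧ (w.t = w'.t ∨ w.t = w.x ∨ w'.t = w'.x)) ∨
      (S.graph.Adj w.x w'.x ∧ (w.t = w.x ∨ w.t = w'.x) ∧ (w'.t = w'.x ∨ w'.t = w.x)))
  symm := ⟨by
    rintro w w' ⟨h, h' | h'⟩
    · exact ⟨h.symm, Or.inl ⟨h'.1.symm, by tauto⟩⟩
    · exact ⟨h.symm, Or.inr ⟨h'.1.symm, h'.2.2, h'.2.1⟩⟩⟩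
  loopless := ⟨fun w h => h.1.ne rfl⟩

section Vert

variable {φ : S.V → R.V} {π : T'.V → R.V}

lemma Vert.ext_of {w w' : Vert φ π} (hx : w.x = w'.x) (hz : w.z = w'.z) {e : S.V}
    (h : w.t = w.x ∨ w.t = e) (h' : w'.t = w.x ∨ w'.t = e) : w = w' := by
  refine Vert.ext hx hz ?_
  have a := w.ht
  have b := w'.ht
  rw [← hx, ← hz] at b
  rcases h with h | h <;> rcases h' with h' | h'
  · rw [h, h']
  · rcases a with a | a
    · rcases b with b | b
      · rw [a.1, b.1]
      · exact absurd b.2 (a.2 _)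
    · exact absurd h a.1.ne'
  · rcases b with b | b
    · rcases a with a | a
      · rw [a.1, b.1]
      · exact absurd a.2 (b.2 _)
    · exact absurd h' b.1.ne'
  · rw [h, h']

lemma Vert.thin {w : Vert φ π} {e : S.V} (h : w.t = e) (hne : e ≠ w.x) :
    S.graph.Adj w.x e ∧ Thin T'.graph (Gt φ π w.x) (lam π (φ w.x) (φ e)) w.z := by
  subst h
  rcases w.ht with h | h
  · exact absurd h.1 hne
  · exact h

lemma Vert.core {w : Vert φ π} (h : w.t = w.x) :
    ∀ a, ¬ Thin T'.graph (Gt φ π w.x) a w.z := by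
  rcases w.ht with h' | h'
  · exact h'.2
  · exact absurd h h'.1.ne'

variable (hφ : IsFoldable S R φ) (hπ : IsCollapseMap T' R π)

lemma fold_adj (hφ : IsFoldable S R φ) {x e : S.V} (h : S.graph.Adj x e) :
    R.graph.Adj (φ x) (φ e) := (hφ.1.2 h).resolve_left (hφ.2.1 h)

include hφ in
lemma exists_other (x : S.V) (v : R.V) : ∃ e, S.graph.Adj x e ∧ φ e ≠ v := by
  have h1 := lt_of_lt_of_le (by norm_num : (1 : ℕ∞) < 2) (hφ.2.2.1 x)
  obtain ⟨_, ⟨e, he, rfl⟩, h⟩ := Set.exists_ne_of_one_lt_encard h1 v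
  exact ⟨e, he, h⟩

include hφ hπ

lemma lam_ne {x e e' : S.V} (h : S.graph.Adj x e) (h' : S.graph.Adj x e') (hne : φ e ≠ φ e') :
    lam π (φ x) (φ e) ≠ lam π (φ x) (φ e') := by
  intro h2
  have h3 := pi_lam hπ (fold_adj hφ h')
  exact hne (by rw [← pi_lam hπ (fold_adj hφ h), h2, h3])

/-- If two edges at `x` are in the same gate, then there are at least two further gates. -/
lemma three_gates {x e e' : S.V} (h : S.graph.Adj x e) (h' : S.graph.Adj x e') (hne : e ≠ e')
    (he : φ e = φ e') : ∃ b ∈ Gt φ π x, ∃ c ∈ Gt φ π x,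
      b ≠ lam π (φ x) (φ e) ∧ c ≠ lam π (φ x) (φ e) ∧ b ≠ c := by
  obtain ⟨e₃, h₃, hne₃⟩ := exists_other hφ x (φ e)
  have h3 : 3 ≤ (S.graph.neighborSet x).encard := by
    have hsub : ({e, e', e₃} : Set S.V) ⊆ S.graph.neighborSet x := by
      rintro y (rfl | rfl | rfl)
      exacts [h, h', h₃]
    refine le_trans (le_of_eq ?_) (Set.encard_le_encard hsub)
    rw [Set.encard_eq_three.2 ⟨e, e', e₃, hne, fun h => hne₃ (by rw [← h]),
      fun h => hne₃ (by rw [← h, ← he]), rfl⟩]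
  have h4 := hφ.2.2.2 x h3
  have h5 := Set.encard_sdiff_singleton_add_one
    (show φ e ∈ φ '' S.graph.neighborSet x from Set.mem_image_of_mem φ h)
  rw [← h5] at h4
  have h6 : 1 < ((φ '' S.graph.neighborSet x) \ {φ e}).encard := by
    by_contra! hle
    have : (3 : ℕ∞) ≤ 1 + 1 := h4.trans (add_le_add_left hle 1)
    norm_num at this
  obtain ⟨_, _, ⟨⟨b, hb, rfl⟩, hb'⟩, ⟨⟨c, hc, rfl⟩, hc'⟩, hbc⟩ := Set.one_lt_encard_iff.1 h6
  exact ⟨_, mem_Gt hb, _, mem_Gt hc, lam_ne hφ hπ hb h hb', lam_ne hφ hπ hc h hc',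
    lam_ne hφ hπ hb hc hbc⟩

lemma leaf_thin {x e : S.V} (h : S.graph.Adj x e) {a : T'.V}
    (ha : Thin T'.graph (Gt φ π x) a (lam π (φ e) (φ x))) : a = lam π (φ x) (φ e) := by
  by_contra hne
  obtain ⟨c, hc, hca, hc'⟩ := ha.third (lam π (φ x) (φ e))
  have hav := ha.2 _ (mem_Gt h) c hc (Ne.symm hne) hca
  obtain ⟨e', he', rfl⟩ := hc
  exact lam_sep hπ (fold_adj hφ h) (fold_adj hφ he') (fun h => hc' (by simp only [h])) hav

lemma leaf_hull {x e : S.V} (h : S.graph.Adj x e) :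
    Hull T'.graph (Gt φ π x) (lam π (φ e) (φ x)) := by
  obtain ⟨e', he', hne⟩ := exists_other hφ x (φ e)
  exact ⟨_, mem_Gt h, _, mem_Gt he', lam_sep hπ (fold_adj hφ h) (fold_adj hφ he') hne.symm⟩

omit hφ hπ in
/-- Any point of the hull at which only the gate of `e` can be thin carries a vertex with tag
trivial or `e`. -/
lemma exists_vert {x e : S.V} (h : S.graph.Adj x e) {z : T'.V} (hz : π z = φ x)
    (hh : Hull T'.graph (Gt φ π x) z)
    (ht : ∀ a, Thin T'.graph (Gt φ π x) a z → a = lam π (φ x) (φ e)) :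
    ∃ w : Vert φ π, w.x = x ∧ w.z = z ∧ (w.t = x ∨ w.t = e) := by
  by_cases hthin : ∃ a, Thin T'.graph (Gt φ π x) a z
  · obtain ⟨a, ha⟩ := hthin
    exact ⟨⟨x, z, e, hz, hh, Or.inr ⟨h, ht a ha ▸ ha⟩⟩, rfl, rfl, Or.inr rfl⟩
  · push Not at hthin
    exact ⟨⟨x, z, x, hz, hh, Or.inl ⟨rfl, hthin⟩⟩, rfl, rfl, Or.inl rfl⟩

/-- The endpoint over `x` of the lift of the edge `{x, e}`. -/
lemma exists_att {x e : S.V} (h : S.graph.Adj x e) :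
    ∃ w : Vert φ π, w.x = x ∧ w.z = lam π (φ e) (φ x) ∧ (w.t = x ∨ w.t = e) :=
  exists_vert h (pi_lam hπ (fold_adj hφ h).symm) (leaf_hull hφ hπ h)
    fun _ ha => leaf_thin hφ hπ h ha

omit hφ hπ in
lemma Vert.same_x {w w' : Vert φ π} (h : (gr φ π).Adj w w') (hx : w.x = w'.x) :
    T'.graph.Adj w.z w'.z ∧ (w.t = w'.t ∨ w.t = w.x ∨ w'.t = w'.x) := by
  refine ⟨h.1, ?_⟩
  rcases h.2 with h | h
  · exact h.2
  · exact absurd hx h.1.ne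

lemma Vert.diff_x {w w' : Vert φ π} (h : (gr φ π).Adj w w') (hx : w.x ≠ w'.x) :
    S.graph.Adj w.x w'.x ∧ (w.t = w.x ∨ w.t = w'.x) ∧ (w'.t = w'.x ∨ w'.t = w.x) ∧
      w.z = lam π (φ w'.x) (φ w.x) ∧ w'.z = lam π (φ w.x) (φ w'.x) := by
  rcases h.2 with h' | h'
  · exact absurd h'.1 hx
  · have hR := fold_adj hφ h'.1
    have hz := lam_unique hπ hR h.1 w.hz w'.hz
    exact ⟨h'.1, h'.2.1, h'.2.2, lam_unique hπ hR.symm h.1.symm w'.hz w.hz, hz⟩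

/-- One can step from a vertex towards `e` if its tag allows it. -/
lemma Vert.step (w : Vert φ π) {e : S.V} (he : S.graph.Adj w.x e) (hw : w.t = w.x ∨ w.t = e) :
    ∃ w' : Vert φ π, (gr φ π).Adj w w' ∧ Av T'.graph w.z w'.z (lam π (φ w.x) (φ e)) ∧
      ((w'.x = w.x ∧ (w'.t = w.x ∨ w'.t = e)) ∨
        (w'.x = e ∧ w'.z = lam π (φ w.x) (φ e))) := by
  have hR := fold_adj hφ he
  obtain ⟨p, hp, hpa, hp' | ⟨hp', hz⟩⟩ := lam_towards hπ hR w.hz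
  · have hz : Thin T'.graph (Gt φ π w.x) (lam π (φ w.x) (φ e)) w.z ∨
        ∀ b, ¬ Thin T'.graph (Gt φ π w.x) b w.z := by
      rcases hw with hw | hw
      · exact Or.inr (Vert.core hw)
      · exact Or.inl (Vert.thin hw he.ne').2
    obtain ⟨w', h1, h2, h3⟩ := exists_vert he hp' (w.hull.step T'.tree (mem_Gt he) hp hpa)
      fun a ha => ha.step T'.tree w.hull (mem_Gt he) hp hpa hz
    subst h2
    refine ⟨w', ⟨hp, Or.inl ⟨h1.symm, ?_⟩⟩, hpa, Or.inl ⟨h1, h3⟩⟩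
    rw [h1]
    rcases hw with hw | hw
    · exact Or.inr (Or.inl hw)
    · rcases h3 with h3 | h3
      · exact Or.inr (Or.inr h3)
      · exact Or.inl (hw.trans h3.symm)
  · obtain ⟨w', rfl, h2, h3⟩ := exists_att hφ hπ he.symm
    refine ⟨w', ⟨?_, Or.inr ⟨he, hw, h3⟩⟩, ?_, Or.inr ⟨rfl, h2⟩⟩
    · rw [h2, hz]
      exact lam_adj hπ hR
    · rw [h2]
      rwa [hp'] at hpa

/-- From a thin vertex one can step away from its tag. -/
lemma Vert.step_back (w : Vert φ π) (hw : w.t ≠ w.x) {b : T'.V} (hb : b ∈ Gt φ π w.x)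
    (hne : b ≠ lam π (φ w.x) (φ w.t)) :
    ∃ w' : Vert φ π, (gr φ π).Adj w w' ∧ Av T'.graph w.z w'.z b := by
  obtain ⟨ht, hthin⟩ := Vert.thin rfl hw
  obtain ⟨e, he, rfl⟩ := hb
  obtain ⟨p, hp, hpa, hp' | ⟨-, hz⟩⟩ := lam_towards hπ (fold_adj hφ he) w.hz
  · have hh := w.hull.step T'.tree (mem_Gt he) hp hpa
    obtain ⟨w', h1, h2, h3⟩ := exists_vert ht hp' hh
      fun a ha => (Thin.adj T'.tree w.hull hh hp hthin ha).symm
    subst h2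
    refine ⟨w', ⟨hp, Or.inl ⟨h1.symm, ?_⟩⟩, hpa⟩
    rw [h1]
    rcases h3 with h3 | h3
    · exact Or.inr (Or.inr h3)
    · exact Or.inl h3.symm
  · rw [hz] at hthin
    exact absurd (leaf_thin hφ hπ he hthin).symm hne

omit hφ hπ in
/-- Two neighbours in the same fibre over the same point of `T'` occur only at the attaching
point of a family of hairs. -/
lemma Vert.branch {w w₁ w₂ : Vert φ π} (h₁ : (gr φ π).Adj w w₁) (h₂ : (gr φ π).Adj w w₂)
    (hz : w₁.z = w₂.z) (hne : w₁ ≠ w₂) (hx₁ : w.x = w₁.x) (hx₂ : w.x = w₂.x) :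
    w.t = w.x ∧ ∃ a, Thin T'.graph (Gt φ π w.x) a w₁.z := by
  have a₁ := (Vert.same_x h₁ hx₁).2
  have a₂ := (Vert.same_x h₂ hx₂).2
  have ht : w₁.t ≠ w₂.t := fun h => hne (Vert.ext (hx₁.symm.trans hx₂) hz h)
  have t₁ : w₁.t ≠ w₁.x := by
    intro h
    exact hne (Vert.ext_of (e := w₂.t) (hx₁.symm.trans hx₂) hz (Or.inl h) (Or.inr rfl))
  have t₂ : w₂.t ≠ w₂.x := by
    intro h
    refine hne (Vert.ext_of (e := w₁.t) (hx₂.symm.trans hx₁) hz.symm (Or.inl h) (Or.inr rfl)).symm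
  refine ⟨?_, _, hx₁ ▸ (Vert.thin rfl t₁).2⟩
  by_contra hw
  exact ht ((a₁.resolve_right (by tauto)).symm.trans (a₂.resolve_right (by tauto)))

/-- If two neighbours of `w` lie over the same point of `T'`, then `w` carries no tag, there are
at least three gates, and at most one gate lies in that direction. -/
lemma Vert.fold {w w₁ w₂ : Vert φ π} (h₁ : (gr φ π).Adj w w₁) (h₂ : (gr φ π).Adj w w₂)
    (hz : w₁.z = w₂.z) (hne : w₁ ≠ w₂) :
    w.t = w.x ∧ ∃ a, (∃ b ∈ Gt φ π w.x, ∃ c ∈ Gt φ π w.x, b ≠ a ∧ c ≠ a ∧ b ≠ c) ∧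
      ∀ b ∈ Gt φ π w.x, Av T'.graph w.z w₁.z b → b = a := by
  by_cases hx₁ : w.x = w₁.x
  · by_cases hx₂ : w.x = w₂.x
    · obtain ⟨hw, a, ha⟩ := Vert.branch h₁ h₂ hz hne hx₁ hx₂
      exact ⟨hw, a, ha.1, fun b hb hav =>
        (ha.step T'.tree w.hull hb h₁.1 hav (Or.inr (Vert.core hw))).symm⟩
    · exfalso
      have := fold_adj hφ (Vert.diff_x hφ hπ h₂ hx₂).1
      rw [← w₂.hz, ← hz, w₁.hz, hx₁] at this
      exact this.ne rfl
  · by_cases hx₂ : w.x = w₂.x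
    · exfalso
      have := fold_adj hφ (Vert.diff_x hφ hπ h₁ hx₁).1
      rw [← w₁.hz, hz, w₂.hz, hx₂] at this
      exact this.ne rfl
    · obtain ⟨s₁, t₁, u₁, -, e₁⟩ := Vert.diff_x hφ hπ h₁ hx₁
      obtain ⟨s₂, t₂, u₂, f₂, e₂⟩ := Vert.diff_x hφ hπ h₂ hx₂
      have hx : w₁.x ≠ w₂.x := fun hx =>
        hne (Vert.ext_of (e := w.x) hx hz u₁ (by rw [hx]; exact u₂))
      have hw : w.t = w.x := by
        rcases t₁ with t₁ | t₁
        · exact t₁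
        · exact t₂.resolve_right fun h => hx (t₁.symm.trans h)
      have hφe : φ w₁.x = φ w₂.x := by rw [← w₁.hz, ← w₂.hz, hz]
      refine ⟨hw, _, three_gates hφ hπ s₁ s₂ hx hφe, ?_⟩
      rintro _ ⟨e, he, rfl⟩ hav
      by_contra hb
      rw [e₁, f₂, ← hφe] at hav
      exact lam_sep hπ (fold_adj hφ s₁) (fold_adj hφ he) (fun h => hb (by simp only [h])) hav

lemma fold_two (w : Vert φ π) :
    ∃ w₁ w₂, (gr φ π).Adj w w₁ ∧ (gr φ π).Adj w w₂ ∧ w₁.z ≠ w₂.z := by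
  by_cases hw : w.t = w.x
  · obtain ⟨_, ⟨b, hb, rfl⟩, _, ⟨c, hc, rfl⟩, hbc⟩ := w.hull
    obtain ⟨w₁, h₁, a₁, -⟩ := w.step hφ hπ hb (Or.inl hw)
    obtain ⟨w₂, h₂, a₂, -⟩ := w.step hφ hπ hc (Or.inl hw)
    exact ⟨w₁, w₂, h₁, h₂, fun h => hbc (a₁.symm.trans (h ▸ a₂))⟩
  · obtain ⟨ht, hthin⟩ := Vert.thin rfl hw
    obtain ⟨c, hc, hca, -⟩ := hthin.third (lam π (φ w.x) (φ w.t))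
    obtain ⟨w₁, h₁, a₁, -⟩ := w.step hφ hπ ht (Or.inr rfl)
    obtain ⟨w₂, h₂, a₂⟩ := w.step_back hφ hπ hw hc hca
    exact ⟨w₁, w₂, h₁, h₂, fun h => hthin.sep w.hull hc hca (a₁.symm.trans (h ▸ a₂))⟩

lemma fold_three (w : Vert φ π) (h3 : 3 ≤ ((gr φ π).neighborSet w).encard) :
    3 ≤ (Vert.z '' (gr φ π).neighborSet w).encard := by
  by_contra hlt
  obtain ⟨w₁, w₂, h₁, h₂, h12⟩ := fold_two hφ hπ w
  have hmem : ∀ w', (gr φ π).Adj w w' → w'.z = w₁.z ∨ w'.z = w₂.z := by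
    intro w' h'
    by_contra! hne
    apply hlt
    have hsub : ({w'.z, w₁.z, w₂.z} : Set T'.V) ⊆ Vert.z '' (gr φ π).neighborSet w := by
      rintro y (rfl | rfl | rfl)
      exacts [⟨_, h', rfl⟩, ⟨_, h₁, rfl⟩, ⟨_, h₂, rfl⟩]
    refine le_trans (le_of_eq ?_) (Set.encard_le_encard hsub)
    rw [Set.encard_eq_three.2 ⟨_, _, _, hne.1, hne.2, h12, rfl⟩]
  obtain ⟨w₃, h₃, n1, n2⟩ : ∃ w₃, (gr φ π).Adj w w₃ ∧ w₃ ≠ w₁ ∧ w₃ ≠ w₂ := by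
    by_contra! hall
    have hsub : (gr φ π).neighborSet w ⊆ {w₁, w₂} := by
      intro w' h'
      by_cases h : w' = w₁
      · exact Or.inl h
      · exact Or.inr (hall w' h' h)
    have h4 := h3.trans (Set.encard_le_encard hsub)
    rw [Set.encard_pair (fun h => h12 (by rw [h]))] at h4
    norm_num at h4
  -- After renaming, `w₃` and `w₁` lie over the same point.
  have key : ∀ w₁ w₂ : Vert φ π, (gr φ π).Adj w w₁ → (gr φ π).Adj w w₂ →
      (∀ w', (gr φ π).Adj w w' → w'.z = w₁.z ∨ w'.z = w₂.z) → w₃ ≠ w₁ → w₃.z = w₁.z → False := by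
    intro w₁ w₂ h₁ h₂ hmem n1 hz
    obtain ⟨hw, a, ha, hdir⟩ := Vert.fold hφ hπ h₁ h₃ hz.symm n1.symm
    have hother : ∀ b ∈ Gt φ π w.x, b ≠ a → Av T'.graph w.z w₂.z b := by
      rintro _ ⟨b, hb, rfl⟩ hba
      obtain ⟨w', h', hav, -⟩ := w.step hφ hπ hb (Or.inl hw)
      rcases hmem w' h' with h | h
      · exact absurd (hdir _ (mem_Gt hb) (h ▸ hav)) hba
      · exact h ▸ hav
    exact Vert.core hw a ⟨ha, fun b hb c hc hba hca =>
      (hother b hb hba).symm.trans (hother c hc hca)⟩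
  rcases hmem w₃ h₃ with h | h
  · exact key w₁ w₂ h₁ h₂ hmem n1 h
  · exact key w₂ w₁ h₂ h₁ (fun w' h' => (hmem w' h').symm) n2 h

end Vert
end Splitting

/-! ### The unfolded fibre product is a tree -/

section Tree

open FreeSplitting

variable {F : Type} [Group F] {S R T' : FreeSplitting F} {φ : S.V → R.V} {π : T'.V → R.V}

/-- `w` is the endpoint over `x` of the lift of the edge `{x, e}`. -/
def IsAtt (w : Vert φ π) (x e : S.V) : Prop :=
  w.x = x ∧ w.z = lam π (φ e) (φ x) ∧ (w.t = x ∨ w.t = e)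

lemma IsAtt.eq {w w' : Vert φ π} {x e : S.V} (h : IsAtt w x e) (h' : IsAtt w' x e) : w = w' := by
  obtain ⟨rfl, h2, h3⟩ := h
  obtain ⟨h1', h2', h3'⟩ := h'
  exact Vert.ext_of h1'.symm (h2.trans h2'.symm) h3 h3'

variable (hφ : IsFoldable S R φ) (hπ : IsCollapseMap T' R π)
include hφ hπ

lemma IsAtt.adj {w w' : Vert φ π} {x e : S.V} (he : S.graph.Adj x e) (h : IsAtt w x e)
    (h' : IsAtt w' e x) : (gr φ π).Adj w w' := by
  obtain ⟨rfl, h2, h3⟩ := h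
  obtain ⟨rfl, h2', h3'⟩ := h'
  refine ⟨?_, Or.inr ⟨he, h3, h3'⟩⟩
  rw [h2, h2']
  exact lam_adj hπ (fold_adj hφ he)

lemma isAtt_of_adj {w w' : Vert φ π} (h : (gr φ π).Adj w w') (hx : w.x ≠ w'.x) :
    IsAtt w w.x w'.x := by
  obtain ⟨-, h2, -, h4, -⟩ := Vert.diff_x hφ hπ h hx
  exact ⟨rfl, h4, h2⟩

/-- Each fibre contains a vertex without tag: the median of three gates, or any point of the hull
if there are only two gates. -/
lemma exists_core (x : S.V) : ∃ m : Vert φ π, m.x = x ∧ m.t = x := by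
  by_cases h3 : ∃ a ∈ Gt φ π x, ∃ b ∈ Gt φ π x, ∃ c ∈ Gt φ π x, a ≠ b ∧ b ≠ c ∧ a ≠ c
  · obtain ⟨a, ha, b, hb, c, hc, hab, hbc, hac⟩ := h3
    obtain ⟨m, m1, m2, m3⟩ := exists_median T'.tree (a := a) (b := b) (c := c)
    have hm : π m = φ x := by
      by_contra hm
      have key : ∀ u ∈ Gt φ π x, ∀ v ∈ Gt φ π x, ¬ Av T'.graph m u v → m = u ∨ m = v := by
        rintro _ ⟨u, hu, rfl⟩ _ ⟨v, hv, rfl⟩ h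
        by_contra! hne
        exact h (lam_off_fiber hπ (fold_adj hφ hu) (fold_adj hφ hv) hm hne.1 hne.2)
      rcases key a ha b hb m1 with rfl | rfl
      · rcases key b hb c hc m2 with h | h
        · exact hab h
        · exact hac h
      · rcases key a ha c hc m3 with h | h
        · exact hab h.symm
        · exact hbc h
    refine ⟨⟨x, m, x, hm, ⟨a, ha, b, hb, m1⟩, Or.inl ⟨rfl, fun d hd => ?_⟩⟩, rfl, rfl⟩
    by_cases h1 : a = d
    · exact m2 (hd.2 b hb c hc (h1 ▸ hab.symm) (h1 ▸ hac.symm))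
    · by_cases h2 : b = d
      · exact m3 (hd.2 a ha c hc h1 (h2 ▸ hbc.symm))
      · exact m1 (hd.2 a ha b hb h1 h2)
  · obtain ⟨e, he, -⟩ := exists_other hφ x (φ x)
    have hh := leaf_hull hφ hπ he
    refine ⟨⟨x, lam π (φ e) (φ x), x, pi_lam hπ (fold_adj hφ he).symm, hh,
      Or.inl ⟨rfl, fun a ha => ?_⟩⟩, rfl, rfl⟩
    obtain ⟨b, hb, c, hc, h1, h2, h4⟩ := ha.1
    exact h3 ⟨a, ha.mem subset_rfl hh, b, hb, c, hc, h1.symm, h4, h2.symm⟩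

lemma reach_att {x e : S.V} (he : S.graph.Adj x e) {a : Vert φ π} (ha : IsAtt a x e)
    (w : Vert φ π) (hx : w.x = x) (hw : w.t = w.x ∨ w.t = e) : (gr φ π).Reachable w a := by
  induction hn : T'.graph.dist (lam π (φ x) (φ e)) w.z using Nat.strong_induction_on
    generalizing w with
  | _ n ih =>
    subst hx
    obtain ⟨w', h1, h2, ⟨h3, h4⟩ | ⟨h3, h4⟩⟩ := w.step hφ hπ he hw
    · refine h1.reachable.trans (ih _ ?_ w' h3 (h3 ▸ h4) rfl)
      rw [← hn]
      exact h2.dist_lt T'.tree h1.1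
    · have := isAtt_of_adj hφ hπ h1 (h3 ▸ he.ne)
      rw [h3] at this
      rw [this.eq ha]

lemma reach_fiber (w w' : Vert φ π) (h : w.x = w'.x) : (gr φ π).Reachable w w' := by
  obtain ⟨m, hm1, hm2⟩ := exists_core hφ hπ w.x
  have key : ∀ w : Vert φ π, w.x = m.x → (gr φ π).Reachable w m := by
    intro w hw
    obtain ⟨e, he, hwe⟩ : ∃ e, S.graph.Adj w.x e ∧ (w.t = w.x ∨ w.t = e) := by
      rcases w.ht with h | h
      · obtain ⟨e, he, -⟩ := exists_other hφ w.x (φ w.x)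
        exact ⟨e, he, Or.inl h.1⟩
      · exact ⟨w.t, h.1, Or.inr rfl⟩
    obtain ⟨a, ha⟩ := exists_att hφ hπ he
    exact (reach_att hφ hπ he ha w rfl hwe).trans
      (reach_att hφ hπ he ha m hw.symm (Or.inl (hm2.trans hm1.symm))).symm
  exact (key w hm1.symm).trans (key w' (by rw [← h, hm1])).symm

lemma gr_connected : (gr φ π).Connected := by
  obtain ⟨x₀⟩ := S.nontriv.to_nonempty
  obtain ⟨m, hm, -⟩ := exists_core hφ hπ x₀
  have : Nonempty (Vert φ π) := ⟨m⟩
  refine ⟨fun w w' => ?_⟩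
  refine preconn_induct S.tree.connected.preconnected (u := w.x) (v := w'.x)
    (fun x => ∀ w', w'.x = x → (gr φ π).Reachable w w')
    (fun w' h => reach_fiber hφ hπ w w' h.symm) ?_ w' rfl
  intro x e he ih w' hw'
  obtain ⟨a, ha⟩ := exists_att (π := π) hφ hπ he
  obtain ⟨b, hb⟩ := exists_att (π := π) hφ hπ he.symm
  exact ((ih a ha.1).trans (IsAtt.adj hφ hπ he ha hb).reachable).trans
    (reach_fiber hφ hπ b w' (hb.1.trans hw'.symm))

lemma gr_coll : Coll (gr φ π) S.graph Vert.x := by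
  refine ⟨fun w w' h => ?_, fun w w' v v' h h' hs he => ?_⟩
  · by_cases hx : w.x = w'.x
    · exact Or.inl hx
    · exact Or.inr (Vert.diff_x hφ hπ h hx).1
  · have hx' : v.x ≠ v'.x := by
      intro hx
      rw [hx] at he
      rcases Sym2.eq_iff.1 he with he | he
      · exact hs.ne (he.1.trans he.2.symm)
      · exact hs.ne (he.1.trans he.2.symm)
    have a := isAtt_of_adj hφ hπ h hs.ne
    have a' := isAtt_of_adj hφ hπ h.symm hs.ne'
    have b := isAtt_of_adj hφ hπ h' hx'
    have b' := isAtt_of_adj hφ hπ h'.symm hx'.symm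
    rcases Sym2.eq_iff.1 he with ⟨h1, h2⟩ | ⟨h1, h2⟩
    · rw [h1, h2] at a a'
      rw [a.eq b, a'.eq b']
    · rw [h1, h2] at a a'
      rw [a.eq b', a'.eq b, Sym2.eq_swap]

omit hφ hπ in
/-- In a fibre, a vertex has at most one neighbour that is no farther from the core than itself. -/
lemma gr_parent {m w w₁ w₂ : Vert φ π} (hm : m.t = m.x) (hx : w.x = m.x) (hx₁ : w₁.x = m.x)
    (hx₂ : w₂.x = m.x) (h₁ : (gr φ π).Adj w w₁) (h₂ : (gr φ π).Adj w w₂)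
    (d₁ : T'.graph.dist m.z w₁.z ≤ T'.graph.dist m.z w.z)
    (d₂ : T'.graph.dist m.z w₂.z ≤ T'.graph.dist m.z w.z) : w₁ = w₂ := by
  by_contra hne
  have a₁ := av_of_dist_le T'.tree.connected.preconnected h₁.1 d₁
  have a₂ := av_of_dist_le T'.tree.connected.preconnected h₂.1 d₂
  have hz := (a₁.trans a₂.symm).eq_of_adj T'.tree.isAcyclic h₁.1 h₂.1
  obtain ⟨hw, a, ha⟩ := Vert.branch h₁ h₂ hz hne (hx.trans hx₁.symm) (hx.trans hx₂.symm)
  have hm' := Vert.core hm a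
  rw [← hx] at hm'
  exact Thin.not_between T'.tree (Vert.core hw a) hm' h₁.1 a₁ ha

lemma gr_bridge {w w' : Vert φ π} (h : (gr φ π).Adj w w') (hx : w.x ≠ w'.x) :
    (gr φ π).IsBridge s(w, w') := by
  have hc := gr_coll hφ hπ
  have hS := (hc.1 h).resolve_left hx
  rw [SimpleGraph.isBridge_iff]
  rintro ⟨p⟩
  refine not_reach S.tree.isAcyclic hS ?_
  have key : ∀ {u v : Vert φ π}, (gr φ π \ SimpleGraph.fromEdgeSet {s(w, w')}).Walk u v →
      (S.graph \ SimpleGraph.fromEdgeSet {s(w.x, w'.x)}).Reachable u.x v.x := by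
    intro u v p
    induction p with
    | nil => exact .refl _
    | @cons a b c hab q ih =>
      refine SimpleGraph.Reachable.trans ?_ ih
      simp only [SimpleGraph.sdiff_adj, SimpleGraph.fromEdgeSet_adj, Set.mem_singleton_iff,
        not_and] at hab
      rcases hc.1 hab.1 with h1 | h1
      · rw [h1]
      · exact SimpleGraph.Adj.reachable (adj_sdiff h1 fun h2 =>
          hab.2 (hc.2 hab.1 h h1 h2) hab.1.ne)
  exact key p

lemma gr_acyclic : (gr φ π).IsAcyclic := by
  classical
  intro v c hc
  have hx : ∀ u ∈ c.support, u.x = v.x := by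
    have hedge : ∀ a b, s(a, b) ∈ c.edges → a.x = b.x := by
      intro a b hab
      by_contra hne
      have hadj := c.adj_of_mem_edges hab
      have hbr := gr_bridge hφ hπ hadj hne
      exact (SimpleGraph.isBridge_iff_forall_cycle_notMem hadj).1 hbr c hc hab
    have key : ∀ {a b : Vert φ π} (q : (gr φ π).Walk a b),
        (∀ a b, s(a, b) ∈ q.edges → a.x = b.x) → ∀ u ∈ q.support, u.x = a.x := by
      intro a b q
      induction q with
      | nil => simp
      | @cons a b c hab q ih =>
        intro h u hu
        rw [SimpleGraph.Walk.support_cons, List.mem_cons] at hu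
        rcases hu with rfl | hu
        · rfl
        · rw [ih (fun a b hab => h a b (by simp [hab])) u hu, h a b (by simp)]
    exact key c hedge
  obtain ⟨m, hm1, hm2⟩ := exists_core hφ hπ v.x
  obtain ⟨w, hw, hmax⟩ := c.support.toFinset.exists_max_image
    (fun w => T'.graph.dist m.z w.z) ⟨v, by simp⟩
  rw [List.mem_toFinset] at hw
  have hmax' : ∀ u ∈ c.support, T'.graph.dist m.z u.z ≤ T'.graph.dist m.z w.z :=
    fun u hu => hmax u (by simpa using hu)
  have hc' := hc.rotate hw
  have hsub : ∀ u ∈ (c.rotate w hw).support, u ∈ c.support := by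
    intro u hu
    simpa using hu
  have s1 := hsub _ (SimpleGraph.Walk.getVert_mem_support (c.rotate w hw) 1)
  have s2 := hsub _ (SimpleGraph.Walk.getVert_mem_support (c.rotate w hw)
    ((c.rotate w hw).length - 1))
  refine hc'.snd_ne_penultimate (gr_parent (hm2.trans hm1.symm) ((hx w hw).trans hm1.symm)
    ((hx _ s1).trans hm1.symm) ((hx _ s2).trans hm1.symm)
    (SimpleGraph.Walk.adj_snd hc'.not_nil) (SimpleGraph.Walk.adj_penultimate hc'.not_nil).symm
    (hmax' _ s1) (hmax' _ s2))

end Tree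

/-! ### The unfolded fibre product is a free splitting -/

section Action

open FreeSplitting

variable {F : Type} [Group F] {S R T' : FreeSplitting F} {φ : S.V → R.V} {π : T'.V → R.V}

lemma av_smul_iff (T : FreeSplitting F) (γ : F) {z u v : T.V} :
    Av T.graph (T.smul γ z) (T.smul γ u) (T.smul γ v) ↔ Av T.graph z u v := by
  refine ⟨fun h => ?_, fun h => h.smul T γ⟩
  simpa [inv_smul_smul] using h.smul T γ⁻¹

lemma Hull.smul (T : FreeSplitting F) (γ : F) {A : Set T.V} {z : T.V} (h : Hull T.graph A z) :
    Hull T.graph (T.smul γ '' A) (T.smul γ z) := by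
  obtain ⟨b, hb, c, hc, h⟩ := h
  exact ⟨_, ⟨b, hb, rfl⟩, _, ⟨c, hc, rfl⟩, fun h' => h ((av_smul_iff T γ).1 h')⟩

lemma thin_smul_iff (T : FreeSplitting F) (γ : F) {A : Set T.V} {a z : T.V} :
    Thin T.graph (T.smul γ '' A) (T.smul γ a) (T.smul γ z) ↔ Thin T.graph A a z := by
  have hne : ∀ {b c : T.V}, T.smul γ b ≠ T.smul γ c ↔ b ≠ c := fun {b c} =>
    not_congr ⟨smul_inj T γ, fun h => h ▸ rfl⟩
  simp only [Thin, Set.exists_mem_image, Set.forall_mem_image, hne, av_smul_iff]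

section
variable (hφ : IsFoldable S R φ) (hπ : IsCollapseMap T' R π)
include hφ hπ

lemma Gt_smul (γ : F) (x : S.V) : Gt φ π (S.smul γ x) = T'.smul γ '' Gt φ π x := by
  ext a
  constructor
  · rintro ⟨e, he, rfl⟩
    have he' : S.graph.Adj x (S.smul γ⁻¹ e) := by
      simpa [inv_smul_smul] using S.adj_smul γ⁻¹ he
    refine ⟨_, mem_Gt he', ?_⟩
    dsimp only
    rw [← lam_smul hπ (fold_adj hφ he'), ← hφ.1.1, ← hφ.1.1, smul_inv_smul]
  · rintro ⟨_, ⟨e, he, rfl⟩, rfl⟩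
    dsimp only
    rw [← lam_smul hπ (fold_adj hφ he), ← hφ.1.1, ← hφ.1.1]
    exact mem_Gt (S.adj_smul γ he)
end

/-- The diagonal action on the unfolded fibre product. -/
def Vert.smul (hφ : IsFoldable S R φ) (hπ : IsCollapseMap T' R π) (γ : F) (w : Vert φ π) :
    Vert φ π where
  x := S.smul γ w.x
  z := T'.smul γ w.z
  t := S.smul γ w.t
  hz := by rw [hπ.1.1, w.hz, hφ.1.1]
  hull := by
    rw [Gt_smul hφ hπ]
    exact w.hull.smul T' γ
  ht := by
    rw [Gt_smul hφ hπ]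
    refine w.ht.imp (fun h => ⟨by rw [h.1], fun a ha => ?_⟩) fun h => ⟨S.adj_smul γ h.1, ?_⟩
    · rw [← smul_inv_smul T' γ a, thin_smul_iff] at ha
      exact h.2 _ ha
    · rw [hφ.1.1, hφ.1.1, lam_smul hπ (fold_adj hφ h.1), thin_smul_iff]
      exact h.2

variable (hφ : IsFoldable S R φ) (hπ : IsCollapseMap T' R π)
include hφ hπ

lemma gr_minimal (A : Set (Vert φ π)) (hne : A.Nonempty)
    (hinv : ∀ γ, Vert.smul hφ hπ γ '' A = A) (hconn : ((gr φ π).induce A).Preconnected) :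
    A = Set.univ := by
  have hc := gr_coll hφ hπ
  have hcA : Coll ((gr φ π).induce A) S.graph fun w => w.1.x :=
    ⟨fun w w' h => hc.1 h, fun w w' v v' h h' h1 h2 => by
      have h3 := hc.2 (show (gr φ π).Adj w.1 w'.1 from h) (show (gr φ π).Adj v.1 v'.1 from h') h1 h2
      exact (Sym2.map.injective Subtype.val_injective) h3⟩
  have hsurj := image_eq_univ (sm := Vert.smul hφ hπ) (φ := Vert.x) (fun _ _ => rfl) hc.1 A hne
    hinv hconn
  have hatt : ∀ {w : Vert φ π} {x e}, S.graph.Adj x e → IsAtt w x e → w ∈ A := by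
    intro w x e he hw
    obtain ⟨u, hu, rfl⟩ : x ∈ Vert.x '' A := hsurj ▸ trivial
    obtain ⟨v, hv, rfl⟩ : e ∈ Vert.x '' A := hsurj ▸ trivial
    obtain ⟨a, b, hab, h1, h2⟩ := cross hconn S.tree.isAcyclic (π := fun w : A => w.1.x) hcA.1
      (u := ⟨u, hu⟩) (v := ⟨v, hv⟩) he
    dsimp only at h1 h2
    have h3 := isAtt_of_adj hφ hπ (show (gr φ π).Adj a.1 b.1 from hab)
      (by rw [h1, h2]; exact he.ne)
    rw [h1, h2] at h3
    rw [hw.eq h3]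
    exact a.2
  -- Vertices of `A` in a common fibre are joined inside `A` and that fibre.
  have hfib : ∀ {u v : Vert φ π}, u ∈ A → v ∈ A → u.x = v.x → ∀ P : Vert φ π → Prop, P u →
      (∀ c d, (gr φ π).Adj c d → c.x = v.x → d.x = v.x → c ∈ A → d ∈ A → P c → P d) → P v := by
    intro u v hu hv huv P h0 hs
    exact fiber_induct hconn S.tree.isAcyclic hcA (z := ⟨u, hu⟩) (y := ⟨v, hv⟩) huv
      (fun w => P w.1) h0 fun a b hab ha hb h => hs a.1 b.1 hab ha hb a.2 b.2 h
  refine Set.eq_univ_of_forall fun w => ?_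
  by_contra hw
  have hout : ∀ {e}, S.graph.Adj w.x e → lam π (φ w.x) (φ e) ≠ w.z := fun {e} he h =>
    (fold_adj hφ he).ne (by rw [← w.hz, ← h, pi_lam hπ (fold_adj hφ he)])
  by_cases hwt : w.t = w.x
  · -- A walk in `A` between two sides of `w.z` passes through `w`.
    obtain ⟨_, ⟨b, hb, rfl⟩, _, ⟨c, hc', rfl⟩, hbc⟩ := w.hull
    have hnz : ∀ d ∈ A, d.x = w.x → d.z ≠ w.z := fun d hd hdx hdz =>
      hw (Vert.ext_of (e := d.t) hdx.symm hdz.symm (Or.inl hwt) (Or.inr rfl) ▸ hd)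
    obtain ⟨u, hu⟩ := exists_att (π := π) hφ hπ hb
    obtain ⟨v, hv⟩ := exists_att (π := π) hφ hπ hc'
    have huA := hatt hb hu
    have hvA := hatt hc' hv
    have key := hfib huA hvA (hu.1.trans hv.1.symm) (fun d => Av T'.graph w.z u.z d.z)
      (av_refl (hnz u huA hu.1)) fun c d hcd hcx hdx hcA hdA h =>
        h.trans (av_adj hcd.1 (hnz c hcA (hcx.trans hv.1)) (hnz d hdA (hdx.trans hv.1)))
    refine hbc (((av_adj ?_ (hout hb) key.ne_left).trans key).trans
      (av_adj ?_ key.ne_right (hout hc')))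
    · rw [hu.2.1]
      exact (lam_adj hπ (fold_adj hφ hb)).symm
    · rw [hv.2.1]
      have h1 := fold_adj hφ hc'
      exact lam_adj hπ h1
  · -- A walk in `A` starting at the end of the hair of `w` leaves that hair through `w`.
    obtain ⟨he, hthin⟩ := Vert.thin rfl hwt
    obtain ⟨_, ⟨c, hc', rfl⟩, hca, -⟩ := hthin.third w.z
    have hnz : ∀ d ∈ A, d.x = w.x → (d.t = w.x ∨ d.t = w.t) → d.z ≠ w.z := fun d hd hdx hdt hdz =>
      hw (Vert.ext_of hdx.symm hdz.symm (Or.inr rfl) hdt ▸ hd)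
    have htag : ∀ d : Vert φ π, d.x = w.x → (d.t = w.x ∨ d.t = w.t) →
        Av T'.graph w.z d.z (lam π (φ w.x) (φ w.t)) → d.t = w.t := by
      intro d hdx hdt hav
      refine hdt.resolve_left fun h => ?_
      have h1 := Vert.core (h.trans hdx.symm) (lam π (φ w.x) (φ w.t))
      rw [hdx] at h1
      exact h1 (hthin.beyond T'.tree.connected.preconnected w.hull hav)
    obtain ⟨u, hu⟩ := exists_att (π := π) hφ hπ he
    obtain ⟨v, hv⟩ := exists_att (π := π) hφ hπ hc'
    have huA := hatt he hu
    have hvA := hatt hc' hv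
    have hua : Av T'.graph w.z u.z (lam π (φ w.x) (φ w.t)) := by
      refine av_adj ?_ (hnz u huA hu.1 hu.2.2) (hout he)
      rw [hu.2.1]
      exact lam_adj hπ (fold_adj hφ he)
    have key := hfib huA hvA (hu.1.trans hv.1.symm)
      (fun d => d.t = w.t ∧ Av T'.graph w.z d.z (lam π (φ w.x) (φ w.t)))
      ⟨htag u hu.1 hu.2.2 hua, hua⟩ fun c d hcd hcx hdx hcA hdA h => by
        have hcx' := hcx.trans hv.1
        have hdx' := hdx.trans hv.1
        have hdt : d.t = w.x ∨ d.t = w.t := by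
          rcases (Vert.same_x hcd (hcx.trans hdx.symm)).2 with h1 | h1 | h1
          · exact Or.inr (h1.symm.trans h.1)
          · exact absurd (h.1.symm.trans (h1.trans hcx')) hwt
          · exact Or.inl (h1.trans hdx')
        have hav := (av_adj hcd.1.symm (hnz d hdA hdx' hdt) h.2.ne_left).trans h.2
        exact ⟨htag d hdx' hdt hav, hav⟩
    refine hthin.sep w.hull (mem_Gt hc') hca (key.2.symm.trans (av_adj ?_ key.2.ne_left (hout hc')))
    rw [hv.2.1]
    exact lam_adj hπ (fold_adj hφ hc')

omit hφ hπ in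
/-- The unfolded fibre product of a foldable map `φ : S → R` and a collapse map `π : T' → R`, as a
free splitting. -/
def unfolded (hφ : IsFoldable S R φ) (hπ : IsCollapseMap T' R π) : FreeSplitting F where
  V := Vert φ π
  graph := gr φ π
  nontriv := by
    have := S.nontriv
    obtain ⟨x, y, hxy⟩ := exists_pair_ne S.V
    obtain ⟨m, hm, -⟩ := exists_core hφ hπ x
    obtain ⟨m', hm', -⟩ := exists_core hφ hπ y
    exact ⟨m, m', fun h => hxy (by rw [← hm, h, hm'])⟩
  tree := ⟨gr_connected hφ hπ, gr_acyclic hφ hπ⟩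
  smul := Vert.smul hφ hπ
  one_smul v := Vert.ext (S.one_smul _) (T'.one_smul _) (S.one_smul _)
  mul_smul γ δ v := Vert.ext (S.mul_smul _ _ _) (T'.mul_smul _ _ _) (S.mul_smul _ _ _)
  adj_smul γ v w h := by
    refine ⟨T'.adj_smul γ h.1, h.2.imp (fun h => ⟨?_, ?_⟩) fun h => ⟨S.adj_smul γ h.1, ?_, ?_⟩⟩
    · exact congrArg (S.smul γ) h.1
    · exact h.2.imp (congrArg (S.smul γ)) (Or.imp (congrArg (S.smul γ)) (congrArg (S.smul γ)))
    · exact h.2.1.imp (congrArg (S.smul γ)) (congrArg (S.smul γ))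
    · exact h.2.2.imp (congrArg (S.smul γ)) (congrArg (S.smul γ))
  minimal A hne hinv hconn := gr_minimal hφ hπ A hne hinv hconn.preconnected
  edge_stab γ v w h hγ := T'.edge_stab γ v.z w.z h.1 (hγ.imp
    (fun h => ⟨congrArg Vert.z h.1, congrArg Vert.z h.2⟩)
    (fun h => ⟨congrArg Vert.z h.1, congrArg Vert.z h.2⟩))

lemma isCollapseMap_x : IsCollapseMap (unfolded hφ hπ) S Vert.x :=
  ⟨⟨fun _ _ => rfl, (gr_coll hφ hπ).1⟩, (gr_coll hφ hπ).2⟩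

lemma isFoldable_z : IsFoldable (unfolded hφ hπ) T' Vert.z := by
  refine ⟨⟨fun _ _ => rfl, fun _ _ h => Or.inr h.1⟩, fun _ _ h => h.1.ne, fun w => ?_,
    fold_three hφ hπ⟩
  obtain ⟨w₁, w₂, h₁, h₂, h⟩ := fold_two hφ hπ w
  refine (Set.encard_pair h).ge.trans (Set.encard_le_encard ?_)
  rintro y (rfl | rfl)
  exacts [⟨_, h₁, rfl⟩, ⟨_, h₂, rfl⟩]

end Action

/-! ### Functoriality -/

section Push

open FreeSplitting

variable {F : Type} [Group F] {S S₁ R T' : FreeSplitting F} {φ₁ : S₁.V → R.V} {f : S.V → S₁.V}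
  {π : T'.V → R.V}

/-- The possible tags `t'` of the image of `w` under the map of unfolded fibre products induced by
`f`: if `w.z` is not thin at `f w.x`, the trivial tag; if it is thin, the image of an edge
in the thin gate that is compatible with the tag of `w`. -/
def Tg (w : Vert (fun x => φ₁ (f x)) π) (t' : S₁.V) : Prop :=
  (t' = f w.x ∧ ∀ a, ¬ Thin T'.graph (Gt φ₁ π (f w.x)) a w.z) ∨
    ∃ e, S.graph.Adj w.x e ∧ t' = f e ∧ (w.t = w.x ∨ w.t = e) ∧
      Thin T'.graph (Gt φ₁ π (f w.x)) (lam π (φ₁ (f w.x)) (φ₁ (f e))) w.z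

variable (hφ : IsFoldable S R (fun x => φ₁ (f x))) (hφ₁ : IsFoldable S₁ R φ₁)
  (hf : IsFSMap S S₁ f) (hπ : IsCollapseMap T' R π)

include hφ hf in
lemma map_adj {x e : S.V} (h : S.graph.Adj x e) : S₁.graph.Adj (f x) (f e) :=
  (hf.2 h).resolve_left fun h' => hφ.2.1 h (congrArg φ₁ h')

include hφ hf in
lemma Gt_subset (x : S.V) : Gt (fun x => φ₁ (f x)) π x ⊆ Gt φ₁ π (f x) := by
  rintro _ ⟨e, he, rfl⟩
  exact mem_Gt (map_adj hφ hf he)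

include hφ hf hπ

omit hπ in
lemma Tg.exists (w : Vert (fun x => φ₁ (f x)) π) : ∃ t', Tg w t' := by
  by_cases h : ∃ a, Thin T'.graph (Gt φ₁ π (f w.x)) a w.z
  · obtain ⟨a, ha⟩ := h
    by_cases hw : w.t = w.x
    · obtain ⟨e, he, rfl⟩ := ha.mem (Gt_subset hφ hf w.x) w.hull
      exact ⟨f e, Or.inr ⟨e, he, rfl, Or.inl hw, ha⟩⟩
    · obtain ⟨h1, h2⟩ := Vert.thin rfl hw
      obtain rfl := Thin.unique (Gt_subset hφ hf w.x) w.hull h2 ha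
      exact ⟨f w.t, Or.inr ⟨w.t, h1, rfl, Or.inr rfl, ha⟩⟩
  · push Not at h
    exact ⟨_, Or.inl ⟨rfl, h⟩⟩

/-- If `w` carries no tag but is thin after applying `f`, the thin gate consists of a single edge
of `S`. -/
lemma hair_unique {w : Vert (fun x => φ₁ (f x)) π} {e e' : S.V} (he : S.graph.Adj w.x e)
    (he' : S.graph.Adj w.x e')
    (h : lam π (φ₁ (f w.x)) (φ₁ (f e)) = lam π (φ₁ (f w.x)) (φ₁ (f e')))
    (ht : Thin T'.graph (Gt φ₁ π (f w.x)) (lam π (φ₁ (f w.x)) (φ₁ (f e))) w.z)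
    (hw : w.t = w.x) : e = e' := by
  by_contra hne
  have h1 : φ₁ (f e) = φ₁ (f e') := by
    by_contra h2
    exact lam_ne hφ hπ he he' h2 h
  exact Vert.core hw _ ⟨three_gates hφ hπ he he' hne h1, fun b hb c hc =>
    ht.2 b (Gt_subset hφ hf w.x hb) c (Gt_subset hφ hf w.x hc)⟩

lemma Tg.unique {w : Vert (fun x => φ₁ (f x)) π} {t₁ t₂ : S₁.V} (h₁ : Tg w t₁) (h₂ : Tg w t₂) :
    t₁ = t₂ := by
  rcases h₁ with h₁ | ⟨e, he, rfl, hw, h₁⟩ <;> rcases h₂ with h₂ | ⟨e', he', rfl, hw', h₂⟩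
  · rw [h₁.1, h₂.1]
  · exact absurd h₂ (h₁.2 _)
  · exact absurd h₁ (h₂.2 _)
  · have hl := Thin.unique subset_rfl (w.hull.mono (Gt_subset hφ hf w.x)) h₁ h₂
    by_cases h : w.t = w.x
    · rw [hair_unique hφ hf hπ he he' hl h₁ h]
    · rw [← hw.resolve_left h, ← hw'.resolve_left h]

include hφ₁ in
lemma Tg.att {w w' : Vert (fun x => φ₁ (f x)) π} (h : (gr _ π).Adj w w') (hx : w.x ≠ w'.x)
    {t : S₁.V} (ht : Tg w t) : t = f w.x ∨ t = f w'.x := by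
  rcases ht with ht | ⟨e, he, rfl, hw, ht⟩
  · exact Or.inl ht.1
  · right
    obtain ⟨s, hw', -, hz, -⟩ := Vert.diff_x hφ hπ h hx
    have hl : lam π (φ₁ (f w.x)) (φ₁ (f e)) = lam π (φ₁ (f w.x)) (φ₁ (f w'.x)) :=
      leaf_thin hφ₁ hπ (map_adj hφ hf s) (hz ▸ ht)
    by_cases h : w.t = w.x
    · rw [hair_unique hφ hf hπ he s hl ht h]
    · rw [← hw.resolve_left h, ← hw'.resolve_left h]

lemma Tg.fiber {w w' : Vert (fun x => φ₁ (f x)) π} (h : (gr _ π).Adj w w') (hx : w.x = w'.x)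
    {t t' : S₁.V} (ht : Tg w t) (ht' : Tg w' t') : t = t' ∨ t = f w.x ∨ t' = f w'.x := by
  rcases ht with ht | ⟨e, he, rfl, hw, ht⟩
  · exact Or.inr (Or.inl ht.1)
  rcases ht' with ht' | ⟨e', he', rfl, hw', ht'⟩
  · exact Or.inr (Or.inr ht'.1)
  left
  have hh := w.hull.mono (Gt_subset hφ hf w.x)
  have hh' := w'.hull.mono (Gt_subset hφ hf w'.x)
  have hl : lam π (φ₁ (f w.x)) (φ₁ (f e)) = lam π (φ₁ (f w'.x)) (φ₁ (f e')) := by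
    refine Thin.adj T'.tree hh (hx ▸ hh') h.1 ht ?_
    rw [hx]
    exact ht'
  by_cases h1 : w.t = w.x
  · rw [hair_unique hφ hf hπ he (hx ▸ he') (by rw [hl, hx]) ht h1]
  by_cases h2 : w'.t = w'.x
  · rw [hair_unique hφ hf hπ he' (hx ▸ he) (by rw [← hl, hx]) ht' h2]
  · have h3 := ((Vert.same_x h hx).2.resolve_right (by tauto))
    rw [← hw.resolve_left h1, ← hw'.resolve_left h2, h3]

include hφ₁ in
lemma Tg.smul {w : Vert (fun x => φ₁ (f x)) π} {t : S₁.V} (h : Tg w t) (γ : F) :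
    Tg (Vert.smul hφ hπ γ w) (S₁.smul γ t) := by
  have hG : Gt φ₁ π (f (Vert.smul hφ hπ γ w).x) = T'.smul γ '' Gt φ₁ π (f w.x) := by
    rw [← Gt_smul hφ₁ hπ, ← hf.1]
    rfl
  unfold Tg
  rw [hG]
  refine h.imp (fun h => ⟨?_, fun a ha => ?_⟩) ?_
  · rw [h.1, ← hf.1]
    rfl
  · rw [← smul_inv_smul T' γ a] at ha
    exact h.2 _ ((thin_smul_iff T' γ).1 ha)
  · rintro ⟨e, he, rfl, hw, ht⟩
    refine ⟨S.smul γ e, S.adj_smul γ he, (hf.1 γ e).symm,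
      hw.imp (congrArg (S.smul γ)) (congrArg (S.smul γ)), ?_⟩
    have e1 : φ₁ (f (Vert.smul hφ hπ γ w).x) = R.smul γ (φ₁ (f w.x)) := hφ.1.1 γ w.x
    have e2 : φ₁ (f (S.smul γ e)) = R.smul γ (φ₁ (f e)) := hφ.1.1 γ e
    rw [e1, e2, lam_smul hπ (fold_adj hφ he)]
    exact (thin_smul_iff T' γ).2 ht

include hφ₁ in
lemma exists_push : ∃ g : (unfolded hφ hπ).V → (unfolded hφ₁ hπ).V,
    IsFSMap (unfolded hφ hπ) (unfolded hφ₁ hπ) g ∧ (∀ w, Vert.z (g w) = Vert.z w) ∧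
      ∀ w, Vert.x (g w) = f (Vert.x w) := by
  choose t ht using Tg.exists (π := π) hφ hf
  let g : Vert (fun x => φ₁ (f x)) π → Vert φ₁ π := fun w =>
    { x := f w.x
      z := w.z
      t := t w
      hz := w.hz
      hull := w.hull.mono (Gt_subset hφ hf w.x)
      ht := by
        refine (ht w).imp id ?_
        rintro ⟨e, he, h1, -, h2⟩
        rw [h1]
        exact ⟨map_adj hφ hf he, h2⟩ }
  refine ⟨g, ⟨fun γ w => ?_, fun w w' h => Or.inr ⟨h.1, ?_⟩⟩, fun _ => rfl, fun _ => rfl⟩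
  · exact Vert.ext (hf.1 γ _) rfl (Tg.unique hφ hf hπ (ht _) ((ht w).smul hφ hφ₁ hf hπ γ))
  · by_cases hx : Vert.x w = Vert.x w'
    · exact Or.inl ⟨congrArg f hx, Tg.fiber hφ hf hπ h hx (ht w) (ht w') |>.imp id
        (Or.imp id id)⟩
    · exact Or.inr ⟨map_adj hφ hf (Vert.diff_x hφ hπ h hx).1,
        Tg.att hφ hφ₁ hf hπ h hx (ht w),
        Tg.att hφ hφ₁ hf hπ (SimpleGraph.Adj.symm h) (Ne.symm hx) (ht w')⟩

end Push

/-! ### Assembling the sequence -/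

section Seq

open FreeSplitting

variable {F : Type} [Group F]

/-- A free splitting with candidate maps to `T'` and to `X`. -/
structure Pack (T' X : FreeSplitting F) where
  T : FreeSplitting F
  h : T.V → T'.V
  p : T.V → X.V

/-- The pack given by an unfolded fibre product. -/
def unfoldPack {S R T' : FreeSplitting F} {φ : S.V → R.V} {π : T'.V → R.V}
    (hφ : IsFoldable S R φ) (hπ : IsCollapseMap T' R π) : Pack T' S :=
  ⟨unfolded hφ hπ, Vert.z, Vert.x⟩

/-- `g` is a map of free splittings compatible with the maps to `T'` and, along `f`, with the
maps to `X` and `Y`. -/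
def PackMap {T' X Y : FreeSplitting F} (f : X.V → Y.V) (P : Pack T' X) (Q : Pack T' Y)
    (g : P.T.V → Q.T.V) : Prop :=
  IsFSMap P.T Q.T g ∧ (∀ w, Q.h (g w) = P.h w) ∧ ∀ w, Q.p (g w) = f (P.p w)

lemma exists_packMap {S S₁ R T' : FreeSplitting F} {φ : S.V → R.V} {φ₁ : S₁.V → R.V}
    {f : S.V → S₁.V} {π : T'.V → R.V} (hφ : IsFoldable S R φ) (hφ₁ : IsFoldable S₁ R φ₁)
    (hf : IsFSMap S S₁ f) (hπ : IsCollapseMap T' R π) (h : ∀ x, φ x = φ₁ (f x)) :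
    ∃ g, PackMap f (unfoldPack hφ hπ) (unfoldPack hφ₁ hπ) g := by
  obtain rfl : φ = fun x => φ₁ (f x) := funext h
  obtain ⟨g, h1, h2, h3⟩ := exists_push hφ hφ₁ hf hπ
  exact ⟨g, h1, h2, h3⟩

lemma exists_packMap_last {S R T' : FreeSplitting F} {φ f : S.V → R.V} {π : T'.V → R.V}
    (hφ : IsFoldable S R φ) (hπ : IsCollapseMap T' R π) (h : ∀ x, φ x = f x) :
    ∃ g, PackMap f (unfoldPack hφ hπ) ⟨T', id, π⟩ g :=
  ⟨Vert.z, (isFoldable_z hφ hπ).1, fun _ => rfl, fun w => (Vert.hz w).trans (h _)⟩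

lemma isFoldable_of_eq {X T' Y : FreeSplitting F} {p : T'.V → Y.V} {h : X.V → T'.V}
    (hh : IsFoldable X T' h) (Q : Pack T' Y) (hQ : Q = ⟨T', id, p⟩) (c : X.V → Q.T.V)
    (hc : ∀ x, Q.h (c x) = h x) : IsFoldable X Q.T c := by
  subst hQ
  obtain rfl : c = h := funext hc
  exact hh

lemma exists_composites (K : ℕ) (S : ℕ → FreeSplitting F)
    (f : ∀ k : ℕ, (S k).V → (S (k+1)).V) :
    ∃ c : ∀ i : ℕ, (S i).V → (S K).V, (∀ x, c K x = x) ∧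
      ∀ i, i < K → ∀ x, c i x = c (i+1) (f i x) := by
  classical
  refine ⟨fun i => if h : i ≤ K then
    Nat.decreasingInduction (motive := fun m _ => (S m).V → (S K).V)
      (fun k _ ih x => ih (f k x)) (fun x => x) h
    else fun _ => (S K).nontriv.to_nonempty.some, fun x => ?_, fun i hi x => ?_⟩
  · simp
  · dsimp only
    rw [dif_pos hi.le, dif_pos (show i + 1 ≤ K from hi),
      Nat.decreasingInduction_succ_left (smn := hi)]

end Seq

end Combing

open Combing in
open FreeSplitting in
/-- Proposition 4.3 (Combing by expansion): given a foldable sequence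
`S_0 → ⋯ → S_K` and a collapse map `π' : T' → S_K`, there is a foldable
sequence `T_0 → ⋯ → T_K = T'` with collapse maps `π_k : T_k → S_k`,
`π_K = π'`, commuting with the horizontal maps and compatible with the
collapsed subgraphs. -/
theorem combing_by_expansion {F : Type} [Group F] (K : ℕ)
    (S : ℕ → FreeSplitting F) (f : ∀ k : ℕ, (S k).V → (S (k+1)).V)
    (hS : IsFoldableSeq K S f)
    (T' : FreeSplitting F) (π' : T'.V → (S K).V)
    (hπ' : IsCollapseMap T' (S K) π') :
    ∃ (T : ℕ → FreeSplitting F) (g : ∀ k : ℕ, (T k).V → (T (k+1)).V)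
      (π : ∀ k : ℕ, (T k).V → (S k).V),
      IsFoldableSeq K T g ∧
      (∀ k, k ≤ K → IsCollapseMap (T k) (S k) (π k)) ∧
      (∀ k, k < K → ∀ x : (T k).V, f k (π k x) = π (k+1) (g k x)) ∧
      (∀ k, k < K → collapsedEdges (T k) (S k) (π k) =
        {e ∈ (T k).graph.edgeSet |
          Sym2.map (g k) e ∈ collapsedEdges (T (k+1)) (S (k+1)) (π (k+1))}) ∧
      T K = T' ∧ HEq (π K) π' := by
  obtain ⟨c, hcK, hc⟩ := exists_composites K S f
  have hfold := hS.2 c hcK hc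
  have hP : ∀ i, ∃ P : Pack T' (S i), (∀ h : i < K, P = unfoldPack (hfold i h) hπ') ∧
      ∀ h : K = i, P = h ▸ ⟨T', id, π'⟩ := by
    intro i
    rcases lt_trichotomy i K with h | h | h
    · exact ⟨unfoldPack (hfold i h) hπ', fun _ => rfl, fun h' => absurd h' h.ne'⟩
    · subst h
      exact ⟨⟨T', id, π'⟩, fun h => absurd h (lt_irrefl _), fun _ => rfl⟩
    · exact ⟨⟨S i, fun _ => T'.nontriv.to_nonempty.some, id⟩, fun h' => absurd h' h.not_gt,
        fun h' => absurd h' h.ne⟩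
  choose P hP₁ hP₂ using hP
  have hPK : P K = ⟨T', id, π'⟩ := hP₂ K rfl
  have hg : ∀ i, ∃ g : (P i).T.V → (P (i+1)).T.V, i < K → PackMap (f i) (P i) (P (i+1)) g := by
    intro i
    by_cases h : i < K
    · obtain ⟨g, hg⟩ : ∃ g, PackMap (f i) (P i) (P (i+1)) g := by
        rcases Nat.lt_or_ge (i+1) K with h' | h'
        · rw [hP₁ i h, hP₁ (i+1) h']
          exact exists_packMap _ _ (hS.1 i h) hπ' (hc i h)
        · obtain rfl : K = i + 1 := le_antisymm h' h
          rw [hP₁ i h, hPK]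
          exact exists_packMap_last _ hπ' fun x => (hc i h x).trans (hcK _)
      exact ⟨g, fun _ => hg⟩
    · exact ⟨fun _ => (P (i+1)).T.nontriv.to_nonempty.some, fun h' => absurd h' h⟩
  choose g hg using hg
  have hh : ∀ i, i < K → IsFoldable (P i).T T' (P i).h := by
    intro i hi
    rw [hP₁ i hi]
    exact isFoldable_z _ _
  have hp : ∀ i, i ≤ K → IsCollapseMap (P i).T (S i) (P i).p := by
    intro i hi
    rcases hi.lt_or_eq with hi | rfl
    · rw [hP₁ i hi]
      exact isCollapseMap_x _ _
    · rw [hPK]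
      exact hπ'
  refine ⟨fun i => (P i).T, g, fun i => (P i).p, ⟨fun k hk => (hg k hk).1, ?_⟩, hp,
    fun k hk x => ((hg k hk).2.2 x).symm, fun k hk => ?_, ?_, ?_⟩
  · intro d hdK hd i hi
    have hcomp : ∀ j, j ≤ K → ∀ x, (P K).h (d j x) = (P j).h x := by
      intro j hj
      induction hj using Nat.decreasingInduction with
      | self => exact fun x => by rw [hdK]
      | of_succ k hk ih => exact fun x => by rw [hd k hk, ih, (hg k hk).2.1]
    exact isFoldable_of_eq (hh i hi) (P K) hPK (d i) (hcomp i hi.le)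
  · -- `g k` and `f k` are injective on edges, so the collapsed edges correspond.
    ext e
    induction e using Sym2.ind with
    | _ a b =>
      simp only [collapsedEdges, Set.mem_ofPred_eq, SimpleGraph.mem_edgeSet, Sym2.map_mk,
        Sym2.mk_isDiag_iff]
      refine and_congr_right fun hab => ?_
      have h1 : (P (k+1)).T.graph.Adj (g k a) (g k b) := by
        refine ((hg k hk).1.2 hab).resolve_left fun h => (hh k hk).2.1 hab ?_
        rw [← (hg k hk).2.1, h, (hg k hk).2.1]
      rw [(hg k hk).2.2, (hg k hk).2.2]
      refine ⟨fun h => ⟨h1, congrArg _ h⟩, fun h => ?_⟩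
      by_contra hne
      refine (hfold k hk).2.1 (((hp k hk.le).1.2 hab).resolve_left hne) ?_
      rw [hc k hk, hc k hk, h.2]
  · show (P K).T = T'
    rw [hPK]
  · show (P K).p ≍ π'
    rw [hPK]
end
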